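/- Suppose F_1,…,F_m ∈ ℂ[z_1,…,z_n] of degrees d_j satisfy the estimate Σ_j |F_j(z)|^2/(1+|z|^2)^{d_j} ≥ c(1+|z|^2)^{−M} for all z ∈ ℂ^n and some c > 0, and assume m ≤ n or M·min(m,n) ≥ Σ_{j=1}^{n+1} d_j − n (with d_1 ≥ ⋯ ≥ d_m). Then there exist polynomials Q_j with Σ_j F_j Q_j = 1 and deg(F_j Q_j) ≤ min(m,n)·M. -/

import Mathlib

namespace Bz

section Koszul

variable {R : Type*} [CommRing R] {M : Type*} [AddCommGroup M] [Module R M]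

/-- number of true entries -/
def cnt {r : ℕ} (s : Fin r → Bool) : ℕ := ∑ i, if s i = true then 1 else 0

/-- Koszul differential -/
def kd : (r : ℕ) → (Fin r → R) → ((Fin r → Bool) → M) → (Fin r → Bool) → M
  | 0, _, _ => fun _ => 0
  | r + 1, x, φ => fun s =>
      if s 0 = true then - kd r (Fin.tail x) (fun u => φ (Fin.cons true u)) (Fin.tail s)
      else kd r (Fin.tail x) (fun u => φ (Fin.cons false u)) (Fin.tail s)
        + x 0 • φ (Fin.cons true (Fin.tail s))

def Supp {r : ℕ} (b : ℕ) (φ : (Fin r → Bool) → M) : Prop := ∀ s, cnt s ≠ b → φ s = 0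

lemma cnt_cons {r : ℕ} (b : Bool) (s : Fin r → Bool) :
    cnt (Fin.cons b s : Fin (r + 1) → Bool) = (if b = true then 1 else 0) + cnt s := by
  unfold cnt
  rw [Fin.sum_univ_succ]
  simp only [Fin.cons_zero, Fin.cons_succ]

lemma cnt_update {r : ℕ} (s : Fin r → Bool) (i : Fin r) (h : s i = false) :
    cnt (Function.update s i true) = cnt s + 1 := by
  unfold cnt
  rw [← Finset.add_sum_erase _ _ (Finset.mem_univ i),
    ← Finset.add_sum_erase (a := i) Finset.univ (fun i => if s i = true then 1 else 0) (Finset.mem_univ i)]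
  simp only [Function.update_self, h]
  have : ∑ j ∈ Finset.univ.erase i, (if Function.update s i true j = true then 1 else 0)
      = ∑ j ∈ Finset.univ.erase i, (if s j = true then 1 else 0) := by
    apply Finset.sum_congr rfl
    intro j hj
    rw [Function.update_of_ne (Finset.ne_of_mem_erase hj)]
  rw [this]; simp; omega

lemma cnt_le {r : ℕ} (s : Fin r → Bool) : cnt s ≤ r := by
  unfold cnt
  calc _ ≤ ∑ i : Fin r, 1 := Finset.sum_le_sum (fun i _ => by split_ifs <;> simp)
    _ = r := by simp

lemma cnt_eq_zero {r : ℕ} (s : Fin r → Bool) (h : cnt s = 0) : s = fun _ => false := by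
  funext i
  unfold cnt at h
  rw [Finset.sum_eq_zero_iff] at h
  have := h i (Finset.mem_univ i)
  by_contra h2
  simp at h2
  simp [h2] at this

lemma cnt_false {r : ℕ} : cnt (fun _ : Fin r => false) = 0 := by simp [cnt]

@[simp] lemma kd_true {r : ℕ} (x : Fin (r + 1) → R) (φ : (Fin (r + 1) → Bool) → M)
    (s : Fin r → Bool) : kd (r + 1) x φ (Fin.cons true s) =
      - kd r (Fin.tail x) (fun u => φ (Fin.cons true u)) s := by
  simp [kd]

@[simp] lemma kd_false {r : ℕ} (x : Fin (r + 1) → R) (φ : (Fin (r + 1) → Bool) → M)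
    (s : Fin r → Bool) : kd (r + 1) x φ (Fin.cons false s) =
      kd r (Fin.tail x) (fun u => φ (Fin.cons false u)) s + x 0 • φ (Fin.cons true s) := by
  simp [kd]

lemma bcases {r : ℕ} {P : (Fin (r + 1) → Bool) → Prop}
    (ht : ∀ s, P (Fin.cons true s)) (hf : ∀ s, P (Fin.cons false s)) (s) : P s := by
  rw [← Fin.cons_self_tail s]
  cases h : s 0
  · exact hf _
  · exact ht _

/-- general naturality -/
lemma kd_nat {R' : Type*} [CommRing R'] {M' : Type*} [AddCommGroup M'] [Module R' M'] :
    ∀ (r : ℕ) (x : Fin r → R) (x' : Fin r → R') (T T' : (Fin r → Bool) → M →+ M')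
    (_ : ∀ s i m, s i = false → T s (x i • m) = x' i • T' (Function.update s i true) m)
    (φ : (Fin r → Bool) → M) (s : Fin r → Bool),
    kd r x' (fun s => T' s (φ s)) s = T s (kd r x φ s)
  | 0, x, x', T, T', h, φ, s => by simp [kd]
  | r + 1, x, x', T, T', h, φ, s => by
    induction s using bcases with
    | ht s =>
      rw [kd_true, kd_true, map_neg]
      congr 1
      refine kd_nat r (Fin.tail x) (Fin.tail x') (fun s => T (Fin.cons true s))
        (fun s => T' (Fin.cons true s)) ?_ (fun u => φ (Fin.cons true u)) s
      intro s i m hi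
      rw [Fin.cons_update]
      exact h _ _ _ (by simpa using hi)
    | hf s =>
      rw [kd_false, kd_false, map_add]
      congr 1
      · refine kd_nat r (Fin.tail x) (Fin.tail x') (fun s => T (Fin.cons false s))
          (fun s => T' (Fin.cons false s)) ?_ (fun u => φ (Fin.cons false u)) s
        intro s i m hi
        rw [Fin.cons_update]
        exact h _ _ _ (by simpa using hi)
      · rw [h _ _ _ (by simp), Fin.update_cons_zero]

lemma kd_add (r : ℕ) (x : Fin r → R) (φ ψ : (Fin r → Bool) → M) :
    kd r x (φ + ψ) = kd r x φ + kd r x ψ := by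
  induction r with
  | zero => funext s; simp [kd]
  | succ r ih =>
    funext s
    have := fun b => ih (Fin.tail x) (fun u => φ (Fin.cons b u)) (fun u => ψ (Fin.cons b u))
    have h1 : ∀ b, (fun u => (φ + ψ) (Fin.cons b u)) =
      (fun u => φ (Fin.cons b u)) + (fun u => ψ (Fin.cons b u)) := fun b => rfl
    induction s using bcases with
    | ht s => rw [Pi.add_apply, kd_true, kd_true, kd_true, h1, this, Pi.add_apply]; abel
    | hf s => rw [Pi.add_apply, kd_false, kd_false, kd_false, h1, this, Pi.add_apply, Pi.add_apply, smul_add]; abel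

lemma kd_smul (r : ℕ) (x : Fin r → R) (a : R) (φ : (Fin r → Bool) → M) :
    kd r x (a • φ) = a • kd r x φ := by
  funext s
  exact kd_nat r x x (fun _ => DistribSMul.toAddMonoidHom M a)
    (fun _ => DistribSMul.toAddMonoidHom M a)
    (fun s i m _ => smul_comm _ _ _) φ s

def kdL (r : ℕ) (x : Fin r → R) : ((Fin r → Bool) → M) →ₗ[R] ((Fin r → Bool) → M) where
  toFun := kd r x
  map_add' := kd_add r x
  map_smul' := kd_smul r x

lemma kd_sub (r : ℕ) (x : Fin r → R) (φ ψ : (Fin r → Bool) → M) :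
    kd r x (φ - ψ) = kd r x φ - kd r x ψ := (kdL r x).map_sub φ ψ
lemma kd_neg (r : ℕ) (x : Fin r → R) (φ : (Fin r → Bool) → M) :
    kd r x (-φ) = - kd r x φ := (kdL r x).map_neg φ
lemma kd_zero (r : ℕ) (x : Fin r → R) :
    kd r x (0 : (Fin r → Bool) → M) = 0 := (kdL r x).map_zero

lemma kd_kd : ∀ (r : ℕ) (x : Fin r → R) (φ : (Fin r → Bool) → M), kd r x (kd r x φ) = 0
  | 0, x, φ => by funext s; simp [kd]
  | r + 1, x, φ => by
    funext s
    have ih := fun φ : (Fin r → Bool) → M => kd_kd r (Fin.tail x) φ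
    induction s using bcases with
    | ht s =>
      simp only [kd_true]
      have h := kd_neg r (Fin.tail x) (kd r (Fin.tail x) fun u => φ (Fin.cons true u))
      have h2 : (fun u => - kd r (Fin.tail x) (fun u => φ (Fin.cons true u)) u) =
        - kd r (Fin.tail x) (fun u => φ (Fin.cons true u)) := rfl
      rw [h2, h, ih]; simp
    | hf s =>
      simp only [kd_false, kd_true]
      have h2 : (fun u => kd r (Fin.tail x) (fun u => φ (Fin.cons false u)) u +
          x 0 • φ (Fin.cons true u)) =
        kd r (Fin.tail x) (fun u => φ (Fin.cons false u)) + x 0 • fun u => φ (Fin.cons true u) := rfl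
      rw [h2, kd_add, kd_smul, ih]
      simp

/-- pointwise membership -/
lemma kd_mem (r : ℕ) (x : Fin r → R) (A B : AddSubgroup M)
    (h : ∀ i, ∀ m ∈ A, x i • m ∈ B) (φ : (Fin r → Bool) → M) (hφ : ∀ s, φ s ∈ A) (s) :
    kd r x φ s ∈ B := by
  induction r with
  | zero => simp [kd]
  | succ r ih =>
    have := fun b s => ih (Fin.tail x) (fun i => h i.succ) (fun u => φ (Fin.cons b u))
      (fun s => hφ _) s
    induction s using bcases with
    | ht s => rw [kd_true]; exact B.neg_mem (this _ _)
    | hf s => rw [kd_false]; exact B.add_mem (this _ _) (h _ _ (hφ _))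

open Classical in
noncomputable def proj (r b : ℕ) (φ : (Fin r → Bool) → M) : (Fin r → Bool) → M :=
  fun s => if cnt s = b then φ s else 0

lemma proj_supp (r b : ℕ) (φ : (Fin r → Bool) → M) : Supp b (proj r b φ) := by
  intro s hs; simp [proj, hs]

lemma proj_eq {r b : ℕ} {φ : (Fin r → Bool) → M} (h : Supp b φ) : proj r b φ = φ := by
  funext s
  by_cases hs : cnt s = b
  · simp [proj, hs]
  · simp [proj, hs, h s hs]

lemma kd_proj (r b : ℕ) (x : Fin r → R) (φ : (Fin r → Bool) → M) :
    kd r x (proj r (b + 1) φ) = proj r b (kd r x φ) := by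
  classical
  funext s
  have := kd_nat r x x (fun s => if cnt s = b then AddMonoidHom.id M else 0)
    (fun s => if cnt s = b + 1 then AddMonoidHom.id M else 0)
    (fun s i m hi => by
      rw [cnt_update s i hi]
      by_cases h : cnt s = b <;> simp [h]) φ s
  have e : ∀ (c : ℕ) (s : Fin r → Bool) (m : M), (if cnt s = c then AddMonoidHom.id M else 0) m
    = if cnt s = c then m else 0 := by
      intro c s m; split_ifs <;> simp
  simp only [e] at this
  exact this

lemma Supp.kd {r b : ℕ} (x : Fin r → R) {φ : (Fin r → Bool) → M} (h : Supp (b + 1) φ) :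
    Supp b (kd r x φ) := by
  rw [← proj_eq h, kd_proj]; exact proj_supp _ _ _

lemma Supp.kd_zero {r : ℕ} (x : Fin r → R) {φ : (Fin r → Bool) → M} (h : Supp 0 φ) :
    Bz.kd r x φ = 0 := by
  classical
  funext s
  have := kd_nat r x x (fun s => 0)
    (fun s => if cnt s = 0 then AddMonoidHom.id M else 0)
    (fun s i m hi => by
      rw [cnt_update s i hi]
      simp) φ s
  simp only [AddMonoidHom.zero_apply] at this
  rw [Pi.zero_apply, ← this]
  congr 1
  funext s
  by_cases hs : cnt s = 0
  · simp [hs]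
  · simp [hs, h s hs]

/-- the element concentrated at the empty set -/
def at0 (r : ℕ) (m : M) : (Fin r → Bool) → M := fun s => if s = (fun _ => false) then m else 0

lemma at0_supp (r : ℕ) (m : M) : Supp 0 (at0 r m) := by
  intro s hs
  unfold at0
  rw [if_neg]
  rintro rfl
  exact hs cnt_false

lemma Supp.eq_at0 {r : ℕ} {φ : (Fin r → Bool) → M} (h : Supp 0 φ) :
    φ = at0 r (φ fun _ => false) := by
  funext s
  unfold at0
  split_ifs with hs
  · rw [hs]
  · exact h s fun h0 => hs (cnt_eq_zero s h0)

lemma supp_gt {r b : ℕ} (hb : r < b) {φ : (Fin r → Bool) → M} (h : Supp b φ) : φ = 0 := by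
  funext s
  exact h s (by have := cnt_le s; omega)

lemma at0_succ_false (r : ℕ) (m : M) (s : Fin r → Bool) :
    at0 (r + 1) m (Fin.cons false s) = at0 r m s := by
  unfold at0
  congr 1
  have : (fun _ : Fin (r + 1) => false) = Fin.cons false (fun _ : Fin r => false) := by
    funext i; refine Fin.cases ?_ ?_ i <;> simp
  rw [this, eq_iff_iff]
  constructor
  · intro h; exact (Fin.cons_right_injective _ h)
  · rintro rfl; rfl

lemma at0_succ_true (r : ℕ) (m : M) (s : Fin r → Bool) :
    at0 (r + 1) m (Fin.cons true s) = 0 := by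
  unfold at0
  rw [if_neg]
  intro h
  have := congrFun h 0
  simp at this

lemma kd_at0_lift : ∀ (r : ℕ) (x : Fin r → R) (A : AddSubgroup M) (m : Fin r → M)
    (_ : ∀ i, m i ∈ A), ∃ φ : (Fin r → Bool) → M, Supp 1 φ ∧ (∀ s, φ s ∈ A) ∧
      kd r x φ = at0 r (∑ i, x i • m i)
  | 0, x, A, m, hm => ⟨0, fun _ _ => rfl, fun _ => A.zero_mem, by
      funext s; simp [kd, at0]⟩
  | r + 1, x, A, m, hm => by
    obtain ⟨φ, h1, h2, h3⟩ := kd_at0_lift r (Fin.tail x) A (Fin.tail m) (fun i => hm _)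
    refine ⟨fun s => if s 0 = true then at0 r (m 0) (Fin.tail s) else φ (Fin.tail s), ?_, ?_, ?_⟩
    · intro s
      induction s using bcases with
      | ht s => 
        intro hs
        rw [cnt_cons] at hs
        simp only [Fin.cons_zero, if_true, Fin.tail_cons]
        exact at0_supp _ _ _ (by simp at hs; omega)
      | hf s =>
        intro hs
        rw [cnt_cons] at hs
        simp only [Fin.cons_zero, Fin.tail_cons]
        simpa using h1 _ (by simpa using hs)
    · intro s
      by_cases h : s 0 = true
      · simp only [h, if_true]
        unfold at0; split_ifs
        · exact hm _
        · exact A.zero_mem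
      · simp only [h]; exact h2 _
    · funext s
      induction s using bcases with
      | ht s =>
        rw [kd_true, at0_succ_true]
        simp only [Fin.cons_zero, if_true, Fin.tail_cons]
        have := (at0_supp r (m 0)).kd_zero (Fin.tail x)
        rw [this]; simp
      | hf s =>
        rw [kd_false, at0_succ_false]
        simp only [Fin.cons_zero, Fin.tail_cons]
        simp only [Bool.false_eq_true, if_false, if_true, h3]
        unfold at0
        split_ifs with hs
        · rw [Fin.sum_univ_succ, add_comm]; rfl
        · simp

lemma kd_zero_sum : ∀ (r : ℕ) (x : Fin r → R) (φ : (Fin r → Bool) → M),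
    ∃ m : Fin r → M, (∀ i, m i ∈ Set.range φ) ∧ kd r x φ (fun _ => false) = ∑ i, x i • m i
  | 0, x, φ => ⟨fun i => i.elim0, fun i => i.elim0, by simp [kd]⟩
  | r + 1, x, φ => by
    obtain ⟨m, hm, h⟩ := kd_zero_sum r (Fin.tail x) (fun u => φ (Fin.cons false u))
    refine ⟨Fin.cons (φ (Fin.cons true fun _ => false)) m, ?_, ?_⟩
    · intro i
      refine Fin.cases ?_ ?_ i
      · exact ⟨_, rfl⟩
      · intro i; obtain ⟨s, hs⟩ := hm i; exact ⟨_, by simpa using hs⟩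
    · have : (fun _ : Fin (r + 1) => false) = Fin.cons false (fun _ : Fin r => false) := by
        funext i; refine Fin.cases ?_ ?_ i <;> simp
      rw [this, kd_false, h, Fin.sum_univ_succ, add_comm]
      simp [Fin.tail]

/-- filtered regularity -/
def FR (q : ℕ) (Fil : ℕ → AddSubgroup M) : (r : ℕ) → (Fin r → R) → Prop
  | 0, _ => True
  | r + 1, x => (∀ (k : ℕ) (m : M), m ∈ Fil k → ∀ m'' : Fin r → M,
      x 0 • m = ∑ j, x j.succ • m'' j →
      ∃ m' : Fin r → M, (∀ j, m' j ∈ Fil (k - q)) ∧ m = ∑ j, x j.succ • m' j) ∧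
      FR q Fil r (Fin.tail x)

lemma free_exact (q : ℕ) (Fil : ℕ → AddSubgroup M) (hanti : ∀ a b, a ≤ b → Fil b ≤ Fil a) :
    ∀ (r : ℕ) (x : Fin r → R) (_ : ∀ i k, ∀ m ∈ Fil k, x i • m ∈ Fil (k + q))
    (_ : FR q Fil r x) (b k : ℕ) (y : (Fin r → Bool) → M) (_ : Supp (b + 1) y)
    (_ : ∀ s, y s ∈ Fil k) (_ : kd r x y = 0),
    ∃ w : (Fin r → Bool) → M, Supp (b + 2) w ∧ (∀ s, w s ∈ Fil (k - q)) ∧ kd r x w = y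
  | 0, x, _, _, b, k, y, hs, _, _ => ⟨0, fun _ _ => rfl, fun _ => (Fil _).zero_mem, by
      rw [supp_gt (by omega) hs, kd_zero]⟩
  | r + 1, x, hx, hFR, b, k, y, hs, hk, hd => by
    have ih := free_exact q Fil hanti r (Fin.tail x) (fun i => hx i.succ) hFR.2
    set yt : (Fin r → Bool) → M := fun u => y (Fin.cons true u) with hyt
    set yf : (Fin r → Bool) → M := fun u => y (Fin.cons false u) with hyf
    have hst : Supp b yt := fun s h => hs _ (by rw [cnt_cons]; simp; omega)
    have hsf : Supp (b + 1) yf := fun s h => hs _ (by rw [cnt_cons]; simp; omega)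
    have hdt : kd r (Fin.tail x) yt = 0 := by
      funext s; have := congrFun hd (Fin.cons true s); rw [kd_true] at this
      simpa using this
    have hdf : kd r (Fin.tail x) yf + x 0 • yt = 0 := by
      funext s; have := congrFun hd (Fin.cons false s); rw [kd_false] at this
      exact this
    have key : ∃ w : (Fin r → Bool) → M, Supp (b + 1) w ∧ (∀ s, w s ∈ Fil (k - q)) ∧
        kd r (Fin.tail x) w = yt := by
      cases b with
      | succ b => exact ih b k yt hst (fun s => hk _) hdt
      | zero =>
        obtain ⟨m'', -, h2⟩ := kd_zero_sum r (Fin.tail x) yf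
        have h3 := congrFun hdf (fun _ => false)
        rw [Pi.add_apply, h2] at h3
        obtain ⟨m', h4, h5⟩ := hFR.1 k (yt fun _ => false) (hk _) (fun j => - m'' j) (by
          have : (x 0 • yt) (fun _ => false) = x 0 • yt fun _ => false := rfl
          rw [this, add_comm] at h3
          rw [eq_neg_of_add_eq_zero_left h3]
          simp [Fin.tail])
        obtain ⟨φ, a1, a2, a3⟩ := kd_at0_lift r (Fin.tail x) (Fil (k - q)) m' h4
        refine ⟨φ, a1, a2, ?_⟩
        rw [a3, hst.eq_at0, h5]; rfl
    obtain ⟨wt, w1, w2, w3⟩ := key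
    obtain ⟨wf, v1, v2, v3⟩ := ih b k (yf + x 0 • wt)
      (fun s h => by simp [hsf s h, w1 s h])
      (fun s => (Fil k).add_mem (hk _) (hanti k _ (by omega) (hx 0 _ _ (w2 s))))
      (by rw [kd_add, kd_smul, w3, hdf])
    refine ⟨fun s => if s 0 = true then - wt (Fin.tail s) else wf (Fin.tail s), ?_, ?_, ?_⟩
    · intro s
      induction s using bcases with
      | ht s =>
        intro h
        rw [cnt_cons] at h
        simp only [Fin.cons_zero, if_true, Fin.tail_cons]
        rw [w1 s (by simp at h; omega), neg_zero]
      | hf s =>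
        intro h
        rw [cnt_cons] at h
        simp only [Fin.cons_zero, Fin.tail_cons]
        simpa using v1 s (by simp at h; omega)
    · intro s
      by_cases h : s 0 = true
      · simp only [h, if_true]; exact (Fil _).neg_mem (w2 _)
      · simp only [h]; exact v2 _
    · funext s
      induction s using bcases with
      | ht s =>
        rw [kd_true]
        simp only [Fin.cons_zero, if_true, Fin.tail_cons]
        have := kd_neg r (Fin.tail x) wt
        have h2 : (fun u => - wt u) = - wt := rfl
        rw [h2, this, w3]; simp [hyt]
      | hf s =>
        rw [kd_false]
        simp only [Fin.cons_zero, if_true, Fin.tail_cons]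
        simp only [Bool.false_eq_true, if_false]
        rw [v3]; simp [hyf]

end Koszul

end Bz


namespace Bz
open MvPolynomial

section SK
universe u
variable {S : Type u} [CommRing S]

lemma mem_pow_smul_pi {T : Type*} [CommRing T] (I : Ideal T) (g : ℕ) (v : Fin g → T) :
    v ∈ (I • ⊤ : Submodule T (Fin g → T)) ↔ ∀ c, v c ∈ I := by
  constructor
  · intro h
    refine Submodule.smul_induction_on h ?_ ?_
    · intro a ha n _ c
      exact I.mul_mem_right _ ha
    · intro a b ha hb c
      exact I.add_mem (ha c) (hb c)
  · intro h
    have : v = ∑ c, v c • (Pi.single c 1 : Fin g → T) := by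
      funext c
      simp [Finset.sum_apply, Pi.single_apply]
    rw [this]
    exact Submodule.sum_mem _ fun c _ => Submodule.smul_mem_smul (h c) trivial

/-- splitting a polynomial whose monomials are each divisible by some `X_{e j}^q`. -/
lemma split_poly {r k q r' : ℕ} (e : Fin r' → Fin r) (p : MvPolynomial (Fin r) S)
    (hp : p ∈ idealOfVars (Fin r) S ^ k)
    (h : ∀ α ∈ p.support, ∃ j, q ≤ α (e j)) :
    ∃ m : Fin r' → MvPolynomial (Fin r) S, (∀ j, m j ∈ idealOfVars (Fin r) S ^ (k - q)) ∧
      p = ∑ j, X (e j) ^ q * m j := by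
  classical
  by_cases hr : r' = 0
  · subst hr
    refine ⟨fun j => 0, fun j => Ideal.zero_mem _, ?_⟩
    have : p.support = ∅ := Finset.eq_empty_of_forall_notMem fun α hα => by
      obtain ⟨j, _⟩ := h α hα
      exact j.elim0
    rw [support_eq_empty] at this
    simp [this]
  have : Nonempty (Fin r') := ⟨⟨0, by omega⟩⟩
  choose! c hc using h
  rw [mem_pow_idealOfVars_iff] at hp
  refine ⟨fun j => ∑ α ∈ p.support with c α = j,
    monomial (α - Finsupp.single (e j) q) (coeff α p), ?_, ?_⟩
  · intro j
    refine Ideal.sum_mem _ fun α hα => ?_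
    rw [Finset.mem_filter] at hα
    rw [mem_pow_idealOfVars_iff]
    intro β hβ
    have : β = α - Finsupp.single (e j) q := by
      have := support_monomial_subset hβ
      simpa using this
    subst this
    have h1 := hp α hα.1
    have h2 : α - Finsupp.single (e j) q + Finsupp.single (e j) q = α := by
      apply tsub_add_cancel_of_le
      rw [Finsupp.single_le_iff]
      have := hc α hα.1
      rwa [hα.2] at this
    have h3 := congrArg Finsupp.degree h2
    rw [map_add, Finsupp.degree_single] at h3
    omega
  · conv_lhs => rw [p.as_sum]
    rw [← Finset.sum_fiberwise p.support c]
    refine Finset.sum_congr rfl fun j _ => ?_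
    rw [Finset.mul_sum]
    refine Finset.sum_congr rfl fun α hα => ?_
    rw [Finset.mem_filter] at hα
    rw [X_pow_eq_monomial, monomial_mul, one_mul, add_comm, tsub_add_cancel_of_le]
    rw [Finsupp.single_le_iff]
    have := hc α hα.1
    rwa [hα.2] at this

lemma FR_X (r q g : ℕ) : ∀ (r' : ℕ) (e : Fin r' → Fin r) (_ : Function.Injective e),
    FR (R := MvPolynomial (Fin r) S) q
      (fun k => (idealOfVars (Fin r) S ^ k • (⊤ : Submodule (MvPolynomial (Fin r) S) (Fin g → MvPolynomial (Fin r) S))).toAddSubgroup)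
      r' (fun j => X (e j) ^ q)
  | 0, e, he => trivial
  | r' + 1, e, he => by
    refine ⟨?_, FR_X r q g r' (fun j => e j.succ) (fun a b h => Fin.succ_injective _ (he h))⟩
    intro k m hm m'' hmm
    have hm' := (mem_pow_smul_pi _ _ _).1 hm
    have : ∀ c, ∀ α ∈ (m c).support, ∃ j : Fin r', q ≤ α (e j.succ) := by
      intro c α hα
      by_contra hcon
      push Not at hcon
      have h1 := congrFun hmm c
      simp only [Pi.smul_apply, Finset.sum_apply, smul_eq_mul] at h1
      have h2 := congrArg (coeff (Finsupp.single (e 0) q + α)) h1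
      rw [X_pow_eq_monomial, coeff_monomial_mul, one_mul, coeff_sum, Finset.sum_eq_zero] at h2
      · exact (mem_support_iff.1 hα) h2
      · intro j _
        rw [X_pow_eq_monomial, coeff_monomial_mul', if_neg]
        rw [Finsupp.single_le_iff]
        have := hcon j
        have hne : e 0 ≠ e j.succ := fun h => (Fin.succ_ne_zero j) (he h).symm
        simp [Finsupp.single_apply, hne, this]
    have key : ∀ c, ∃ m' : Fin r' → MvPolynomial (Fin r) S,
        (∀ j, m' j ∈ idealOfVars (Fin r) S ^ (k - q)) ∧ m c = ∑ j, X (e j.succ) ^ q * m' j :=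
      fun c => split_poly (fun j => e j.succ) (m c) (hm' c) (this c)
    choose m' h1 h2 using key
    refine ⟨fun j c => m' c j, fun j => (mem_pow_smul_pi _ _ _).2 fun c => h1 c j, ?_⟩
    funext c
    rw [h2 c]
    simp [Finset.sum_apply]

lemma pigeon_pow (r q E : ℕ) (hE : r * q + 1 ≤ E) (p : MvPolynomial (Fin r) S)
    (hp : p ∈ idealOfVars (Fin r) S ^ E) :
    ∃ m : Fin r → MvPolynomial (Fin r) S, (∀ j, m j ∈ idealOfVars (Fin r) S ^ (E - q)) ∧
      p = ∑ j, X j ^ q * m j := by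
  refine split_poly id p hp ?_
  intro α hα
  rw [mem_pow_idealOfVars_iff] at hp
  have h := hp α hα
  by_contra hcon
  push Not at hcon
  have : Finsupp.degree α ≤ ∑ _i : Fin r, q := by
    rw [Finsupp.degree_eq_sum]
    exact Finset.sum_le_sum fun i _ => (hcon i).le
  simp at this
  omega

def SKprop (r b : ℕ) (N : Type u) [AddCommGroup N] [Module (MvPolynomial (Fin r) S) N] : Prop :=
  ∃ c : ℕ, ∀ q E : ℕ, 1 ≤ q → r * q + c ≤ E + b * q → ∀ y : (Fin r → Bool) → N, Supp b y →
    (∀ s, y s ∈ (idealOfVars (Fin r) S ^ E • ⊤ : Submodule (MvPolynomial (Fin r) S) N)) →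
    kd r (fun j => (X j : MvPolynomial (Fin r) S) ^ q) y = 0 →
    ∃ w : (Fin r → Bool) → N, Supp (b + 1) w ∧
    (∀ s, w s ∈ (idealOfVars (Fin r) S ^ (E - q - c) • ⊤ : Submodule (MvPolynomial (Fin r) S) N)) ∧
    kd r (fun j => (X j : MvPolynomial (Fin r) S) ^ q) w = y

lemma sk_zero (r : ℕ) (N : Type u) [AddCommGroup N] [Module (MvPolynomial (Fin r) S) N] :
    SKprop (S := S) r 0 N := by
  refine ⟨1, fun q E hq hE y hy hyE _ => ?_⟩
  have key : ∀ n ∈ (idealOfVars (Fin r) S ^ E • ⊤ : Submodule (MvPolynomial (Fin r) S) N),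
      ∃ m : Fin r → N,
      (∀ j, m j ∈ (idealOfVars (Fin r) S ^ (E - q) • ⊤ : Submodule (MvPolynomial (Fin r) S) N)) ∧
      n = ∑ j, (X j : MvPolynomial (Fin r) S) ^ q • m j := by
    intro n hn
    refine Submodule.smul_induction_on hn ?_ ?_
    · intro p hp n _
      obtain ⟨m, h1, h2⟩ := pigeon_pow r q E (by omega) p hp
      refine ⟨fun j => m j • n, fun j => Submodule.smul_mem_smul (h1 j) trivial, ?_⟩
      rw [h2, Finset.sum_smul]
      simp [mul_smul]
    · rintro a b ⟨m, h1, h2⟩ ⟨m', h1', h2'⟩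
      refine ⟨m + m', fun j => Submodule.add_mem _ (h1 j) (h1' j), ?_⟩
      rw [h2, h2']
      simp [Finset.sum_add_distrib]
  obtain ⟨m, h1, h2⟩ := key _ (hyE fun _ => false)
  obtain ⟨φ, a1, a2, a3⟩ := kd_at0_lift r (fun j => (X j : MvPolynomial (Fin r) S) ^ q)
    (idealOfVars (Fin r) S ^ (E - q) • ⊤ : Submodule (MvPolynomial (Fin r) S) N).toAddSubgroup m h1
  refine ⟨φ, a1, fun s => ?_, ?_⟩
  · exact Submodule.smul_mono_left (Ideal.pow_le_pow_right (by omega)) (a2 s)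
  · rw [a3, ← h2, ← hy.eq_at0]

lemma kd_map {r : ℕ} {T N N' : Type*} [CommRing T] [AddCommGroup N] [AddCommGroup N'] [Module T N]
    [Module T N'] (f : N →ₗ[T] N') (x : Fin r → T) (φ : (Fin r → Bool) → N) :
    kd r x (fun s => f (φ s)) = fun s => f (kd r x φ s) := by
  funext s
  exact kd_nat r x x (fun _ => f.toAddMonoidHom) (fun _ => f.toAddMonoidHom)
    (fun s i m _ => by simp) φ s

lemma kd_mem_pow {r q E : ℕ} {N : Type*} [AddCommGroup N] [Module (MvPolynomial (Fin r) S) N]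
    (φ : (Fin r → Bool) → N)
    (h : ∀ s, φ s ∈ (idealOfVars (Fin r) S ^ E • ⊤ : Submodule (MvPolynomial (Fin r) S) N)) (s) :
    kd r (fun j => (X j : MvPolynomial (Fin r) S) ^ q) φ s ∈
      (idealOfVars (Fin r) S ^ (E + q) • ⊤ : Submodule (MvPolynomial (Fin r) S) N) := by
  refine kd_mem r _ (idealOfVars (Fin r) S ^ E • ⊤ : Submodule (MvPolynomial (Fin r) S) N).toAddSubgroup
    (idealOfVars (Fin r) S ^ (E + q) • ⊤ : Submodule (MvPolynomial (Fin r) S) N).toAddSubgroup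
    ?_ φ h s
  intro i m hm
  show _ ∈ (idealOfVars (Fin r) S ^ (E + q) • ⊤ : Submodule (MvPolynomial (Fin r) S) N)
  rw [add_comm E q, pow_add, Submodule.mul_smul]
  refine Submodule.smul_mem_smul (Ideal.pow_mem_pow ?_ q) hm
  exact Ideal.subset_span ⟨i, rfl⟩

lemma sk_succ [IsNoetherianRing S] (r b : ℕ)
    (ih : ∀ (N : Type u) [AddCommGroup N] [Module (MvPolynomial (Fin r) S) N]
      [Module.Finite (MvPolynomial (Fin r) S) N], SKprop (S := S) r b N)
    (N : Type u) [AddCommGroup N] [Module (MvPolynomial (Fin r) S) N]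
    [Module.Finite (MvPolynomial (Fin r) S) N] : SKprop (S := S) r (b + 1) N := by
  obtain ⟨g, f, hf⟩ := Module.Finite.exists_fin' (MvPolynomial (Fin r) S) N
  set N' := LinearMap.ker f with hN'
  obtain ⟨k, hk⟩ := Ideal.exists_pow_inf_eq_pow_smul (idealOfVars (Fin r) S) N'
  obtain ⟨c', hc'⟩ := ih N'
  refine ⟨k + c', fun q E hq hE y hy hyE hd => ?_⟩
  rw [add_mul, one_mul] at hE
  have lift : ∀ s, ∃ z : Fin g → MvPolynomial (Fin r) S,
      z ∈ (idealOfVars (Fin r) S ^ E • ⊤ : Submodule (MvPolynomial (Fin r) S) _) ∧ f z = y s := by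
    intro s
    have : y s ∈ (idealOfVars (Fin r) S ^ E • ⊤ : Submodule (MvPolynomial (Fin r) S) _).map f := by
      rw [Submodule.map_smul'', Submodule.map_top, LinearMap.range_eq_top.2 hf]
      exact hyE s
    obtain ⟨z, h1, h2⟩ := this
    exact ⟨z, h1, h2⟩
  choose z0 hz0 hz0' using lift
  set z := proj r (b + 1) z0 with hz
  have z1 : Supp (b + 1) z := proj_supp _ _ _
  have z2 : ∀ s, z s ∈ (idealOfVars (Fin r) S ^ E • ⊤ : Submodule (MvPolynomial (Fin r) S) _) := by
    intro s; simp only [hz, proj]; split_ifs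
    · exact hz0 s
    · exact Submodule.zero_mem _
  have z3 : (fun s => f (z s)) = y := by
    funext s; simp only [hz, proj]; split_ifs with h
    · exact hz0' s
    · rw [map_zero, hy s h]
  set x : Fin r → MvPolynomial (Fin r) S := fun j => X j ^ q with hx
  have d1 : ∀ s, kd r x z s ∈ N' := by
    intro s
    rw [hN', LinearMap.mem_ker]
    have := congrFun (kd_map f x z) s
    rw [← this, z3, hd]; rfl
  have d2 : ∀ s, kd r x z s ∈ (idealOfVars (Fin r) S ^ (E + q - k) • N') := by
    intro s
    have h1 : kd r x z s ∈ (idealOfVars (Fin r) S ^ (E + q) • ⊤ : Submodule (MvPolynomial (Fin r) S) _) ⊓ N' :=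
      ⟨kd_mem_pow z z2 s, d1 s⟩
    by_cases hkq : k ≤ E + q
    · rw [hk (E + q) hkq] at h1
      exact Submodule.smul_mono le_rfl inf_le_right h1
    · rw [Nat.sub_eq_zero_of_le (by omega)]
      simpa using h1.2
  let y' : (Fin r → Bool) → N' := fun s => ⟨kd r x z s, d1 s⟩
  have y'v : (fun s => N'.subtype (y' s)) = kd r x z := rfl
  have subinj : ∀ φ ψ : (Fin r → Bool) → N', (fun s => N'.subtype (φ s)) = (fun s => N'.subtype (ψ s)) → φ = ψ := by
    intro φ ψ h; funext s; exact Subtype.ext (congrFun h s)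
  obtain ⟨w', w1, w2, w3⟩ := hc' q (E + q - k) hq (by omega) y'
    (fun s hs => Subtype.ext (z1.kd x s hs))
    (fun s => by
      have h1 := d2 s
      have h2 : (idealOfVars (Fin r) S ^ (E + q - k) • N') =
        (idealOfVars (Fin r) S ^ (E + q - k) • (⊤ : Submodule (MvPolynomial (Fin r) S) N')).map N'.subtype := by
        rw [Submodule.map_smul'', Submodule.map_top, Submodule.range_subtype]
      rw [h2] at h1
      obtain ⟨a, ha, hb⟩ := h1
      have : a = y' s := Subtype.ext hb
      rwa [← this])
    (by
      apply subinj
      rw [← kd_map N'.subtype, y'v, kd_kd]; rfl)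
  have w3' : kd r x (fun s => N'.subtype (w' s)) = kd r x z := by
    rw [kd_map, w3, y'v]
  obtain ⟨w, v1, v2, v3⟩ := free_exact q
    (fun k => (idealOfVars (Fin r) S ^ k • (⊤ : Submodule (MvPolynomial (Fin r) S) (Fin g → MvPolynomial (Fin r) S))).toAddSubgroup)
    (fun a b hab => Submodule.smul_mono_left (Ideal.pow_le_pow_right hab)) r x
    (fun i k m hm => by
      show _ ∈ (idealOfVars (Fin r) S ^ (k + q) • ⊤ : Submodule (MvPolynomial (Fin r) S) _)
      rw [add_comm k q, pow_add, Submodule.mul_smul]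
      refine Submodule.smul_mem_smul (Ideal.pow_mem_pow ?_ q) hm
      exact Ideal.subset_span ⟨i, rfl⟩)
    (FR_X r q g r id Function.injective_id) b (E - k - c') (z - fun s => N'.subtype (w' s))
    (fun s hs => by
      rw [Pi.sub_apply, z1 s hs, w1 s hs]; simp)
    (fun s => by
      refine Submodule.sub_mem (idealOfVars (Fin r) S ^ (E - k - c') • (⊤ : Submodule (MvPolynomial (Fin r) S) (Fin g → MvPolynomial (Fin r) S))) ?_ ?_
      · exact Submodule.smul_mono_left (Ideal.pow_le_pow_right (by omega)) (z2 s)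
      · have h1 := w2 s
        have h2 : N'.subtype (w' s) ∈ (idealOfVars (Fin r) S ^ (E + q - k - q - c') • (⊤ : Submodule (MvPolynomial (Fin r) S) N')).map N'.subtype := ⟨_, h1, rfl⟩
        rw [Submodule.map_smul''] at h2
        refine Submodule.smul_mono ?_ le_top h2
        exact Ideal.pow_le_pow_right (by omega))
    (by rw [kd_sub, w3', sub_self])
  refine ⟨fun s => f (w s), ?_, ?_, ?_⟩
  · intro s hs
    simp only [v1 s hs, map_zero]
  · intro s
    have h2 : f (w s) ∈ (idealOfVars (Fin r) S ^ (E - k - c' - q) • (⊤ : Submodule (MvPolynomial (Fin r) S) _)).map f := ⟨_, v2 s, rfl⟩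
    rw [Submodule.map_smul''] at h2
    refine Submodule.smul_mono ?_ le_top h2
    exact Ideal.pow_le_pow_right (by omega)
  · rw [kd_map, v3]
    funext s
    rw [Pi.sub_apply, map_sub]
    have : f (N'.subtype (w' s)) = 0 := (w' s).2
    rw [this, sub_zero]
    exact congrFun z3 s

lemma sk_all [IsNoetherianRing S] (r b : ℕ) :
    ∀ (N : Type u) [AddCommGroup N] [Module (MvPolynomial (Fin r) S) N]
      [Module.Finite (MvPolynomial (Fin r) S) N], SKprop (S := S) r b N := by
  induction b with
  | zero => intro N _ _ _; exact sk_zero r N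
  | succ b ih => intro N _ _ _; exact sk_succ r b (fun N _ _ _ => ih N) N

/-- Skoda lemma in `S` itself. -/
lemma sk_S [IsNoetherianRing S] (r b : ℕ) (f : Fin r → S) :
    ∃ c : ℕ, ∀ q E : ℕ, 1 ≤ q → r * q + c ≤ E + b * q → ∀ y : (Fin r → Bool) → S, Supp b y →
    (∀ s, y s ∈ Ideal.span (Set.range f) ^ E) →
    kd r (fun j => f j ^ q) y = 0 →
    ∃ w : (Fin r → Bool) → S, Supp (b + 1) w ∧
    (∀ s, w s ∈ Ideal.span (Set.range f) ^ (E - q - c)) ∧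
    kd r (fun j => f j ^ q) w = y := by
  let φ : MvPolynomial (Fin r) S →ₐ[S] S := aeval f
  let _ : Module (MvPolynomial (Fin r) S) S := Module.compHom S φ.toRingHom
  have hsm : ∀ (t : MvPolynomial (Fin r) S) (x : S), t • x = φ t * x := fun _ _ => rfl
  have hfin : Module.Finite (MvPolynomial (Fin r) S) S := by
    refine ⟨⟨{1}, ?_⟩⟩
    rw [eq_top_iff]
    intro x _
    rw [Finset.coe_singleton, Submodule.mem_span_singleton]
    exact ⟨C x, by rw [hsm]; simp [φ]⟩
  obtain ⟨c, hc⟩ := sk_all (S := S) r b S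
  have hpow : ∀ (E : ℕ) (x : S), x ∈ (idealOfVars (Fin r) S ^ E • ⊤ : Submodule (MvPolynomial (Fin r) S) S)
      ↔ x ∈ Ideal.span (Set.range f) ^ E := by
    intro E x
    have e1 : Ideal.span (Set.range f) ^ E = (idealOfVars (Fin r) S ^ E).map φ := by
      rw [Ideal.map_pow, idealOfVars, Ideal.map_span]
      congr 2
      rw [← Set.range_comp]
      congr 1
      funext j; simp [φ]
    rw [e1]
    have hsurj : Function.Surjective φ := fun x => ⟨C x, by simp [φ]⟩
    constructor
    · intro h
      refine Submodule.smul_induction_on h ?_ ?_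
      · intro a ha n _
        rw [hsm]
        exact Ideal.mul_mem_right _ _ (Ideal.mem_map_of_mem _ ha)
      · intro a b; exact Ideal.add_mem _
    · intro h
      rw [Ideal.mem_map_iff_of_surjective φ hsurj] at h
      obtain ⟨t, ht, rfl⟩ := h
      have : φ t = t • (1 : S) := by rw [hsm, mul_one]
      rw [this]
      exact Submodule.smul_mem_smul ht trivial
  have hkd : ∀ (q : ℕ) (y : (Fin r → Bool) → S), kd r (fun j => (X j : MvPolynomial (Fin r) S) ^ q) y =
      kd r (fun j => f j ^ q) y := by
    intro q y
    funext s
    refine (kd_nat r (fun j => f j ^ q) (fun j => (X j : MvPolynomial (Fin r) S) ^ q)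
      (fun _ => AddMonoidHom.id S) (fun _ => AddMonoidHom.id S) ?_ y s)
    intro s i m _
    simp [hsm, φ]
  refine ⟨c, fun q E hq hE y hy hyE hd => ?_⟩
  obtain ⟨w, w1, w2, w3⟩ := hc q E hq hE y hy (fun s => (hpow _ _).2 (hyE s)) (by rw [hkd, hd])
  exact ⟨w, w1, fun s => (hpow _ _).1 (w2 s), by rw [← hkd, w3]⟩

end SK
end Bz


namespace Bz

section LAM
universe u
variable {S : Type u} [CommRing S]

def RegL : Ideal S → List (S × ℕ) → Prop
  | _, [] => True
  | 𝔞, x :: l => (∀ a, x.1 * a ∈ 𝔞 → a ∈ 𝔞) ∧ RegL (𝔞 ⊔ Ideal.span {x.1}) l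

def idl : Ideal S → List (S × ℕ) → Ideal S
  | 𝔞, [] => 𝔞
  | 𝔞, x :: l => idl (𝔞 ⊔ Ideal.span {x.1}) l

def degl : List (S × ℕ) → ℕ
  | [] => 0
  | x :: l => x.2 + degl l

def coneD {D : Type u} [AddCommGroup D] [Module S D] (d : D →ₗ[S] D) (x : S) : (D × D) →ₗ[S] (D × D) :=
  LinearMap.prod (d.comp (LinearMap.fst S D D) - x • LinearMap.snd S D D) (-(d.comp (LinearMap.snd S D D)))

lemma coneD_apply {D : Type u} [AddCommGroup D] [Module S D] (d : D →ₗ[S] D) (x : S) (w y : D) :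
    coneD d x (w, y) = (d w - x • y, - d y) := rfl

lemma kd_stable {r : ℕ} (x : Fin r → S) (𝔞 : Ideal S) (φ : (Fin r → Bool) → S)
    (h : ∀ s, φ s ∈ 𝔞) (s) : kd r x φ s ∈ 𝔞 :=
  kd_mem r x 𝔞.toAddSubgroup 𝔞.toAddSubgroup (fun _ _ hm => 𝔞.mul_mem_left _ hm) φ h s

lemma lam {r : ℕ} (t : Fin r → S) : ∀ (l : List (S × ℕ)) (D : Type u) [AddCommGroup D] [Module S D]
    (d : D →ₗ[S] D) (_ : ∀ y, d (d y) = 0)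
    (P : ℕ → ℕ → D → Prop)
    (_ : ∀ c u a b, 1 ≤ c → P c u a → P c u b → P c u (a - b))
    (_ : ∀ c u, 1 ≤ c → P c u 0)
    (_ : ∀ c u a, 1 ≤ c → P c u a → ∀ x ∈ l, P c (u + x.2) (x.1 • a))
    (_ : ∀ u y, P 0 u y → d y = 0 → ∀ x ∈ l, ∃ w, P 1 (u + x.2) w ∧ d w = x.1 • y)
    (_ : ∀ c u y, 1 ≤ c → P c u y → d y = 0 → ∃ w, P (c + 1) u w ∧ d w = y)
    (𝔞 : Ideal S) (ι : D →ₗ[S] ((Fin r → Bool) → S))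
    (_ : ∀ y s, (ι (d y)) s - kd r t (ι y) s ∈ 𝔞)
    (_ : RegL 𝔞 l) (u : ℕ) (y : D) (_ : P 0 u y) (_ : d y = 0),
    ∃ v, P l.length (u + degl l) v ∧
      ((∀ s, ι v s ∈ idl 𝔞 l) → ∃ b : (Fin r → Bool) → S, ∀ s, ι y s - kd r t b s ∈ 𝔞)
  | [], D, _, _, d, hd, P, hsub, h0, hmul, hi, hii, 𝔞, ι, hι, hreg, u, y, hy, hdy =>
    ⟨y, hy, fun h => ⟨0, fun s => by rw [kd_zero]; simpa [idl] using h s⟩⟩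
  | x :: l, D, _, _, d, hd, P, hsub, h0, hmul, hi, hii, 𝔞, ι, hι, hreg, u, y, hy, hdy => by
    obtain ⟨w, hw, hdw⟩ := hi u y hy hdy x (by simp)
    have hneg : ∀ c u a, 1 ≤ c → P c u a → P c u (-a) := by
      intro c u a hc ha
      rw [← zero_sub]; exact hsub c u 0 a hc (h0 c u hc) ha
    have e1 : ∀ a : ℕ × ℕ × ℕ, a.1 + a.2.1 + a.2.2 = a.1 + a.2.2 + a.2.1 := fun a => by omega
    obtain ⟨v, hv, hv2⟩ := lam t l (D × D) (coneD d x.1)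
      (by
        rintro ⟨w, y⟩
        rw [coneD_apply, coneD_apply]
        simp [hd])
      (fun c u p => P (c + 1) (u + x.2) p.1 ∧ P c u p.2)
      (by
        rintro c u a b hc ⟨h1, h2⟩ ⟨h3, h4⟩
        exact ⟨hsub _ _ _ _ (by omega) h1 h3, hsub _ _ _ _ hc h2 h4⟩)
      (fun c u hc => ⟨h0 _ _ (by omega), h0 _ _ hc⟩)
      (by
        rintro c u a hc ⟨h1, h2⟩ x' hx'
        refine ⟨?_, hmul _ _ _ hc h2 x' (by simp [hx'])⟩
        have := hmul _ _ _ (by omega) h1 x' (by simp [hx'])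
        rw [add_right_comm]
        exact this)
      (by
        rintro u ⟨w, y⟩ ⟨h1, h2⟩ hd' x' hx'
        rw [coneD_apply, Prod.mk_eq_zero, sub_eq_zero, neg_eq_zero] at hd'
        obtain ⟨y', a1, a2⟩ := hi u y h2 hd'.2 x' (by simp [hx'])
        have a3 := hmul _ _ _ (by omega) h1 x' (by simp [hx'])
        have a4 := hmul _ _ _ (by omega) a1 x (by simp)
        simp only [zero_add] at a3 a4
        rw [add_right_comm] at a4
        obtain ⟨w', b1, b2⟩ := hii _ _ _ (by omega) (hsub _ _ _ _ (by omega) a3 a4) (by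
          rw [map_sub, map_smul, map_smul, a2, hd'.1, smul_comm, sub_self])
        refine ⟨(w', -y'), ⟨?_, hneg _ _ _ (by omega) a1⟩, ?_⟩
        · rw [add_right_comm]; exact b1
        · rw [coneD_apply, b2, map_neg, a2]
          simp)
      (by
        rintro c u ⟨w, y⟩ hc ⟨h1, h2⟩ hd'
        rw [coneD_apply, Prod.mk_eq_zero, sub_eq_zero, neg_eq_zero] at hd'
        obtain ⟨y1, a1, a2⟩ := hii c u y hc h2 hd'.2
        have a4 := hmul _ _ _ (by omega) a1 x (by simp)
        obtain ⟨w', b1, b2⟩ := hii _ _ _ (by omega) (hsub _ _ _ _ (by omega) h1 a4) (by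
          rw [map_sub, map_smul, a2, hd'.1, sub_self])
        refine ⟨(w', -y1), ⟨b1, hneg _ _ _ (by omega) a1⟩, ?_⟩
        rw [coneD_apply, b2, map_neg, a2]
        simp)
      (𝔞 ⊔ Ideal.span {x.1}) (ι.comp (LinearMap.fst S D D))
      (by
        rintro ⟨w, y⟩ s
        rw [coneD_apply]
        simp only [LinearMap.comp_apply, LinearMap.fst_apply, map_sub, map_smul, Pi.sub_apply,
          Pi.smul_apply, smul_eq_mul]
        have := hι w s
        rw [sub_right_comm]
        refine Ideal.sub_mem _ (Ideal.mem_sup_left this) (Ideal.mem_sup_right ?_)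
        exact Ideal.mul_mem_right _ _ (Ideal.mem_span_singleton_self _))
      hreg.2 u (w, y) ⟨by simpa using hw, hy⟩ (by rw [coneD_apply, hdw, hdy]; simp)
    refine ⟨v.1, ?_, fun hmem => ?_⟩
    · have := hv.1
      simp only [List.length_cons, degl]
      convert this using 1
      omega
    · obtain ⟨b, hb⟩ := hv2 hmem
      simp only [LinearMap.comp_apply, LinearMap.fst_apply] at hb
      have hb' : ∀ s, ∃ b', ι w s - kd r t b s - x.1 * b' ∈ 𝔞 := by
        intro s
        obtain ⟨p, hp, q, hq, hpq⟩ := Submodule.mem_sup.1 (hb s)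
        obtain ⟨b', rfl⟩ := Ideal.mem_span_singleton'.1 hq
        refine ⟨b', ?_⟩
        rw [← hpq]
        convert hp using 1
        ring
      choose b' hb' using hb'
      refine ⟨b', fun s => hreg.1 _ ?_⟩
      have k1 := kd_stable t 𝔞 (ι w - kd r t b - x.1 • b') (fun s => by simpa using hb' s) s
      rw [kd_sub, kd_sub, kd_kd, kd_smul] at k1
      have k2 := hι w s
      rw [hdw, map_smul] at k2
      have := 𝔞.add_mem k1 k2
      convert this using 1
      simp
      ring

end LAM
end Bz


namespace Bz
open MvPolynomial

section HI
variable {σ R : Type*} [CommRing R]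

def HI (I : Ideal (MvPolynomial σ R)) : Prop := ∀ p ∈ I, ∀ n, homogeneousComponent n p ∈ I

lemma HI_iff (I : Ideal (MvPolynomial σ R)) :
    HI I ↔ (letI : GradedAlgebra (homogeneousSubmodule σ R) := MvPolynomial.gradedAlgebra
      I.IsHomogeneous (homogeneousSubmodule σ R)) := by
  letI : GradedAlgebra (homogeneousSubmodule σ R) := MvPolynomial.gradedAlgebra
  constructor
  · intro h i p hp
    have := h p hp i
    rw [← decomposition.decompose'_apply] at this
    exact this
  · intro h p hp n
    exact homogeneousComponent_mem_of_mem h hp n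

lemma HI_span (s : Set (MvPolynomial σ R)) (h : ∀ x ∈ s, ∃ n, IsHomogeneous x n) :
    HI (Ideal.span s) := by
  letI : GradedAlgebra (homogeneousSubmodule σ R) := MvPolynomial.gradedAlgebra
  rw [HI_iff]
  refine Ideal.homogeneous_span _ _ ?_
  intro x hx
  obtain ⟨n, hn⟩ := h x hx
  exact ⟨n, hn⟩

lemma HI_mul {I J : Ideal (MvPolynomial σ R)} (hI : HI I) (hJ : HI J) : HI (I * J) := by
  letI : GradedAlgebra (homogeneousSubmodule σ R) := MvPolynomial.gradedAlgebra
  rw [HI_iff] at *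
  exact Ideal.IsHomogeneous.mul hI hJ

lemma HI_sup {I J : Ideal (MvPolynomial σ R)} (hI : HI I) (hJ : HI J) : HI (I ⊔ J) := by
  letI : GradedAlgebra (homogeneousSubmodule σ R) := MvPolynomial.gradedAlgebra
  rw [HI_iff] at *
  exact Ideal.IsHomogeneous.sup hI hJ

lemma HI_top : HI (⊤ : Ideal (MvPolynomial σ R)) := fun _ _ _ => trivial

lemma HI_pow {I : Ideal (MvPolynomial σ R)} (hI : HI I) (n : ℕ) : HI (I ^ n) := by
  induction n with
  | zero => rw [pow_zero, Ideal.one_eq_top]; exact HI_top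
  | succ n ih => rw [pow_succ]; exact HI_mul ih hI

lemma hc_mul {a p : MvPolynomial σ R} {e : ℕ} (ha : a.IsHomogeneous e) (n : ℕ) :
    homogeneousComponent n (a * p) =
      if e ≤ n then a * homogeneousComponent (n - e) p else 0 := by
  classical
  have key : ∀ m, homogeneousComponent n (a * homogeneousComponent m p) =
      if n = e + m then a * homogeneousComponent m p else 0 := by
    intro m
    rw [homogeneousComponent_of_mem (m := n) (n := e + m)]
    · exact ha.mul (homogeneousComponent_isHomogeneous m p)
  conv_lhs => rw [← sum_homogeneousComponent p, Finset.mul_sum, map_sum]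
  simp only [key]
  split_ifs with h
  · rw [Finset.sum_eq_single (n - e)]
    · rw [if_pos (by omega)]
    · intro m _ hm; rw [if_neg (by omega)]
    · intro hm
      rw [homogeneousComponent_eq_zero (n - e) p (by simp at hm; omega)]; simp
  · exact Finset.sum_eq_zero fun m _ => by rw [if_neg (by omega)]

lemma hom_deg {p : MvPolynomial σ R} {d : ℕ} (h : p.IsHomogeneous d) {α : σ →₀ ℕ}
    (hα : α ∈ p.support) : Finsupp.degree α = d := by
  have h1 := h (mem_support_iff.1 hα)
  have h2 : Finsupp.degree α = Finsupp.weight (1 : σ → ℕ) α := by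
    rw [Finsupp.degree_eq_weight_one]; rfl
  rw [h2]; exact h1

/-- homogeneous of integer degree -/
def HomZ (p : MvPolynomial σ R) (e : ℤ) : Prop := ∀ α ∈ p.support, ((Finsupp.degree α : ℕ) : ℤ) = e

noncomputable def hproj (e : ℤ) : MvPolynomial σ R →+ MvPolynomial σ R :=
  if 0 ≤ e then (homogeneousComponent e.toNat).toAddMonoidHom else 0

lemma hproj_homZ (e : ℤ) (p : MvPolynomial σ R) : HomZ (hproj e p) e := by
  intro α hα
  unfold hproj at hα
  split_ifs at hα with h
  · have : coeff α (homogeneousComponent e.toNat p) ≠ 0 := mem_support_iff.1 hα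
    rw [coeff_homogeneousComponent] at this
    have h2 : Finsupp.degree α = e.toNat := by
      by_contra hc; rw [if_neg hc] at this; exact this rfl
    omega
  · simp at hα

lemma hproj_eq {e : ℤ} {p : MvPolynomial σ R} (h : HomZ p e) : hproj e p = p := by
  classical
  by_cases hp : p = 0
  · rw [hp, map_zero]
  · obtain ⟨α, hα⟩ := support_nonempty.2 hp
    have h0 := h α hα
    unfold hproj
    rw [if_pos (by omega)]
    show homogeneousComponent e.toNat p = p
    ext β
    rw [coeff_homogeneousComponent]
    split_ifs with hb
    · rfl
    · by_contra hc
      have := h β (mem_support_iff.2 (Ne.symm hc))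
      omega

lemma hproj_mul {a p : MvPolynomial σ R} {d : ℕ} (ha : a.IsHomogeneous d) (e : ℤ) :
    hproj e (a * p) = a * hproj (e - d) p := by
  unfold hproj
  by_cases h : 0 ≤ e
  · rw [if_pos h]
    show homogeneousComponent e.toNat (a * p) = _
    rw [hc_mul ha]
    by_cases h2 : d ≤ e.toNat
    · rw [if_pos h2, if_pos (by omega)]
      show _ = a * homogeneousComponent (e - d).toNat p
      congr 3
      omega
    · rw [if_neg h2, if_neg (by omega)]; simp
  · rw [if_neg h, if_neg (by omega)]; simp

lemma hproj_mem {I : Ideal (MvPolynomial σ R)} (hI : HI I) (e : ℤ) {p : MvPolynomial σ R}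
    (hp : p ∈ I) : hproj e p ∈ I := by
  unfold hproj; split_ifs
  · exact hI p hp _
  · exact I.zero_mem

lemma HomZ.sub {p q : MvPolynomial σ R} {e : ℤ} (hp : HomZ p e) (hq : HomZ q e) : HomZ (p - q) e := by
  rw [← hproj_eq hp, ← hproj_eq hq, ← map_sub]; exact hproj_homZ _ _

lemma HomZ.zero {e : ℤ} : HomZ (0 : MvPolynomial σ R) e := by intro α hα; simp at hα

lemma HomZ.mul {a p : MvPolynomial σ R} {d : ℕ} {e : ℤ} (ha : a.IsHomogeneous d) (hp : HomZ p e) :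
    HomZ (a * p) (e + d) := by
  have : a * p = hproj (e + d) (a * p) := by
    rw [hproj_mul ha, add_sub_cancel_right, hproj_eq hp]
  rw [this]; exact hproj_homZ _ _

lemma HomZ.of {p : MvPolynomial σ R} {d : ℕ} (h : p.IsHomogeneous d) : HomZ p d := by
  intro α hα
  rw [hom_deg h hα]

end HI

section mono
variable {K : Type*} [Field K] {n : ℕ}

noncomputable def cI (K : Type*) [Field K] {n : ℕ} (σ : ℕ) (T : Set (Fin (n + 1))) :
    Ideal (MvPolynomial (Fin (n + 1)) K) :=
  Ideal.span ((fun i => (X i : MvPolynomial (Fin (n + 1)) K) ^ σ) '' T)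

lemma mem_cI {σ : ℕ} {T : Set (Fin (n + 1))} {p : MvPolynomial (Fin (n + 1)) K} :
    p ∈ cI K σ T ↔ ∀ α ∈ p.support, ∃ i ∈ T, σ ≤ α i := by
  have : cI K σ T = Ideal.span ((fun s => monomial s (1 : K)) ''
      ((fun i => Finsupp.single i σ) '' T)) := by
    unfold cI
    rw [Set.image_image]
    congr 1
    apply Set.image_congr
    intro i _
    rw [X_pow_eq_monomial]
  rw [this, mem_ideal_span_monomial_image]
  refine forall₂_congr fun α _ => ?_
  simp [Finsupp.single_le_iff]

lemma cI_reg {σ : ℕ} {T : Set (Fin (n + 1))} {i : Fin (n + 1)} (hi : i ∉ T)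
    {p : MvPolynomial (Fin (n + 1)) K} (h : X i ^ σ * p ∈ cI K σ T) : p ∈ cI K σ T := by
  rw [mem_cI] at *
  intro α hα
  obtain ⟨j, hj, h2⟩ := h (Finsupp.single i σ + α) (by
    rw [mem_support_iff, X_pow_eq_monomial, coeff_monomial_mul, one_mul]
    exact mem_support_iff.1 hα)
  refine ⟨j, hj, ?_⟩
  have : i ≠ j := fun h => hi (h ▸ hj)
  simpa [Finsupp.single_apply, this] using h2

/-- `G` homogeneous of degree `D`, monic in `X 0` -/
def MonG (G : MvPolynomial (Fin (n + 1)) K) (D : ℕ) : Prop :=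
  G.IsHomogeneous D ∧ coeff (Finsupp.single 0 D) G = 1

lemma MonG.lt {G : MvPolynomial (Fin (n + 1)) K} {D : ℕ} (h : MonG G D) {γ : Fin (n + 1) →₀ ℕ}
    (hγ : γ ∈ G.support) (hne : γ ≠ Finsupp.single 0 D) : γ 0 < D := by
  have h1 : Finsupp.degree γ = D := hom_deg h.1 hγ
  have h2 := h1
  rw [Finsupp.degree_eq_sum, Fin.sum_univ_succ] at h2
  rcases Nat.lt_or_ge (γ 0) D with h3 | h3
  · exact h3
  · exfalso
    apply hne
    have h4 : ∑ i : Fin n, γ i.succ = 0 := by omega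
    rw [Finset.sum_eq_zero_iff] at h4
    ext i
    refine Fin.cases ?_ (fun i => ?_) i
    · simp; omega
    · rw [h4 i (Finset.mem_univ _)]; simp [Finsupp.single_apply, (Fin.succ_ne_zero i).symm]

lemma G_reg {G : MvPolynomial (Fin (n + 1)) K} {D σ : ℕ} (hG : MonG G D) {T : Set (Fin (n + 1))}
    (h0 : (0 : Fin (n + 1)) ∉ T) {e : MvPolynomial (Fin (n + 1)) K} (h : G * e ∈ cI K σ T) :
    e ∈ cI K σ T := by
  classical
  by_contra hcon
  set B := e.support.filter (fun α => ¬ ∃ i ∈ T, σ ≤ α i) with hB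
  have hBne : B.Nonempty := by
    rw [mem_cI] at hcon
    push Not at hcon
    obtain ⟨α, h1, h2⟩ := hcon
    exact ⟨α, by rw [hB, Finset.mem_filter]; refine ⟨h1, ?_⟩; push Not; exact h2⟩
  obtain ⟨β, hβ, hmax⟩ := Finset.exists_max_image B (fun α => α 0) hBne
  have hβ' := Finset.mem_filter.1 hβ
  rw [mem_cI] at h
  set ν := Finsupp.single 0 D + β with hν
  have hνT : ¬ ∃ i ∈ T, σ ≤ ν i := by
    rintro ⟨i, hi, h2⟩
    apply hβ'.2
    refine ⟨i, hi, ?_⟩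
    have : (0 : Fin (n + 1)) ≠ i := fun h => h0 (h ▸ hi)
    simpa [hν, Finsupp.single_apply, this] using h2
  have hc : coeff ν (G * e) = 0 := by
    by_contra hc
    exact hνT (h ν (mem_support_iff.2 hc))
  rw [coeff_mul, Finset.sum_eq_single (Finsupp.single 0 D, β)] at hc
  · simp only [hG.2, one_mul] at hc
    exact (mem_support_iff.1 hβ'.1) hc
  · rintro ⟨γ, δ⟩ hmem hne
    rw [Finset.HasAntidiagonal.mem_antidiagonal] at hmem
    simp only at hmem ⊢
    by_contra hprod
    have hγ : γ ∈ G.support := mem_support_iff.2 (left_ne_zero_of_mul hprod)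
    have hδ : δ ∈ e.support := mem_support_iff.2 (right_ne_zero_of_mul hprod)
    have hδB : δ ∈ B := by
      rw [hB, Finset.mem_filter]
      refine ⟨hδ, ?_⟩
      rintro ⟨i, hi, h2⟩
      apply hνT
      refine ⟨i, hi, ?_⟩
      rw [← hmem]; simp; omega
    have h1 : δ 0 ≤ β 0 := hmax δ hδB
    have h2 : γ 0 + δ 0 = D + β 0 := by
      have := DFunLike.congr_fun hmem 0
      simpa [hν] using this
    by_cases hg : γ = Finsupp.single 0 D
    · apply hne
      rw [hg] at hmem
      rw [Prod.mk.injEq]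
      exact ⟨hg, add_left_cancel hmem⟩
    · have := hG.lt hγ hg
      omega
  · intro hnot
    exact absurd (Finset.HasAntidiagonal.mem_antidiagonal.2 hν.symm) hnot

lemma sup_reg {G : MvPolynomial (Fin (n + 1)) K} {σ : ℕ} {T : Set (Fin (n + 1))} {i : Fin (n + 1)}
    (hG : G = 0 ∨ ∀ e, G * e ∈ cI K σ (insert i T) → e ∈ cI K σ (insert i T)) (hi : i ∉ T)
    {a : MvPolynomial (Fin (n + 1)) K} (h : X i ^ σ * a ∈ Ideal.span {G} ⊔ cI K σ T) :
    a ∈ Ideal.span {G} ⊔ cI K σ T := by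
  rcases hG with rfl | hG
  · have e : Ideal.span {(0 : MvPolynomial (Fin (n + 1)) K)} ⊔ cI K σ T = cI K σ T := by simp
    rw [e] at h ⊢
    exact cI_reg hi h
  · obtain ⟨p, hp, c, hc, hpc⟩ := Submodule.mem_sup.1 h
    obtain ⟨e, rfl⟩ := Ideal.mem_span_singleton'.1 hp
    have hins : cI K σ (insert i T) = Ideal.span {X i ^ σ} ⊔ cI K σ T := by
      unfold cI; rw [Set.image_insert_eq, Ideal.span_insert]
    have h1 : G * e ∈ cI K σ (insert i T) := by
      have : G * e = X i ^ σ * a - c := by rw [← hpc]; ring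
      rw [this, hins]
      exact Ideal.sub_mem _ (Ideal.mem_sup_left (Ideal.mul_mem_right _ _ (Ideal.mem_span_singleton_self _)))
        (Ideal.mem_sup_right hc)
    have h2 := hG e h1
    rw [hins] at h2
    obtain ⟨p', hp', c', hc', hpc'⟩ := Submodule.mem_sup.1 h2
    obtain ⟨e', rfl⟩ := Ideal.mem_span_singleton'.1 hp'
    have h3 : X i ^ σ * (a - G * e') ∈ cI K σ T := by
      have : X i ^ σ * (a - G * e') = c + G * c' := by
        rw [mul_sub, ← hpc, ← hpc']; ring
      rw [this]
      exact Ideal.add_mem _ hc (Ideal.mul_mem_left _ _ hc')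
    have h4 := cI_reg hi h3
    have : a = G * e' + (a - G * e') := by ring
    rw [this]
    exact Ideal.add_mem _ (Ideal.mem_sup_left (Ideal.mul_mem_right _ _ (Ideal.mem_span_singleton_self _)))
      (Ideal.mem_sup_right h4)

lemma reg_list {G : MvPolynomial (Fin (n + 1)) K} {σ δ : ℕ} (x : Fin (n + 1) → MvPolynomial (Fin (n + 1)) K)
    (hx : ∀ i, x i - X i ^ σ ∈ Ideal.span {G}) :
    ∀ (L : List (Fin (n + 1))) (_ : L.Nodup) (T : Set (Fin (n + 1))) (_ : ∀ i ∈ L, i ∉ T)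
    (_ : G = 0 ∨ ((0 : Fin (n + 1)) ∉ L ∧ (0 : Fin (n + 1)) ∉ T ∧ ∃ D, MonG G D)),
    RegL (Ideal.span {G} ⊔ cI K σ T) (L.map fun i => (x i, δ)) ∧
    idl (Ideal.span {G} ⊔ cI K σ T) (L.map fun i => (x i, δ)) =
      Ideal.span {G} ⊔ cI K σ (T ∪ {i | i ∈ L})
  | [], _, T, _, _ => ⟨trivial, by simp [idl]⟩
  | i :: L, hnd, T, hLT, hG => by
    have hstep : Ideal.span {G} ⊔ cI K σ T ⊔ Ideal.span {x i} = Ideal.span {G} ⊔ cI K σ (insert i T) := by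
      have hins : cI K σ (insert i T) = Ideal.span {X i ^ σ} ⊔ cI K σ T := by
        unfold cI; rw [Set.image_insert_eq, Ideal.span_insert]
      rw [hins, sup_assoc, sup_comm (Ideal.span {X i ^ σ}), ← sup_assoc, ← sup_assoc]
      have hmem : x i - X i ^ σ ∈ Ideal.span {G} ⊔ cI K σ T := Ideal.mem_sup_left (hx i)
      apply le_antisymm
      · refine sup_le le_sup_left ?_
        rw [Ideal.span_singleton_le_iff_mem]
        have : x i = (x i - X i ^ σ) + X i ^ σ := by ring
        rw [this]
        exact Ideal.add_mem _ (Ideal.mem_sup_left hmem)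
          (Ideal.mem_sup_right (Ideal.mem_span_singleton_self _))
      · refine sup_le le_sup_left ?_
        rw [Ideal.span_singleton_le_iff_mem]
        have : X i ^ σ = x i - (x i - X i ^ σ) := by ring
        rw [this]
        exact Ideal.sub_mem _ (Ideal.mem_sup_right (Ideal.mem_span_singleton_self _))
          (Ideal.mem_sup_left hmem)
    obtain ⟨h1, h2⟩ := reg_list x hx L (List.nodup_cons.1 hnd).2 (insert i T)
      (by
        intro j hj hjT
        rcases hjT with rfl | hjT
        · exact (List.nodup_cons.1 hnd).1 hj
        · exact hLT j (by simp [hj]) hjT)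
      (by
        rcases hG with h | ⟨h1, h2, h3⟩
        · exact Or.inl h
        · refine Or.inr ⟨fun h => h1 (by simp [h]), ?_, h3⟩
          rintro (h | h)
          · exact h1 (by simp [h])
          · exact h2 h)
    simp only [List.map_cons, RegL, idl]
    rw [hstep]
    refine ⟨⟨?_, h1⟩, ?_⟩
    · intro a ha
      refine sup_reg (i := i) (σ := σ) ?_ (hLT i (by simp)) ?_
      · rcases hG with h | ⟨h1, h2, D, h3⟩
        · exact Or.inl h
        · refine Or.inr fun e he => G_reg h3 ?_ he
          rintro (h | h)
          · exact h1 (by simp [h])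
          · exact h2 h
      · have : X i ^ σ * a = x i * a - (x i - X i ^ σ) * a := by ring
        rw [this]
        exact Ideal.sub_mem _ ha (Ideal.mem_sup_left (Ideal.mul_mem_right _ _ (hx i)))
    · rw [h2]
      congr 2
      ext j; simp; tauto

lemma deg_crit_aux {G : MvPolynomial (Fin (n + 1)) K} {D σ : ℕ} (hσ : 1 ≤ σ) (hG : MonG G D)
    (T : Set (Fin (n + 1))) (hT : ∀ i : Fin n, i.succ ∈ T) (α : Fin (n + 1) →₀ ℕ) (hdeg : D + n * (σ - 1) ≤ Finsupp.degree α)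
    (ih : ∀ β : Fin (n + 1) →₀ ℕ, β 0 < α 0 → D + n * (σ - 1) ≤ Finsupp.degree β →
      monomial β (1 : K) ∈ Ideal.span {G} ⊔ cI K σ T) :
      monomial α (1 : K) ∈ Ideal.span {G} ⊔ cI K σ T := by
  classical
  by_cases hs : ∃ i : Fin n, σ ≤ α i.succ
  · obtain ⟨i, hi⟩ := hs
    refine Ideal.mem_sup_right (mem_cI.2 ?_)
    intro β hβ
    have := support_monomial_subset hβ
    rw [Finset.mem_singleton] at this
    subst this
    exact ⟨i.succ, hT i, hi⟩
  · push Not at hs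
    have h1 : ∑ i : Fin n, α i.succ ≤ n * (σ - 1) := by
      calc _ ≤ ∑ _i : Fin n, (σ - 1) := Finset.sum_le_sum fun i _ => by have := hs i; omega
        _ = _ := by simp
    have h2 := hdeg
    rw [Finsupp.degree_eq_sum, Fin.sum_univ_succ] at h2
    have h3 : D ≤ α 0 := by omega
    have hle : Finsupp.single 0 D ≤ α := by rw [Finsupp.single_le_iff]; exact h3
    set α' := α - Finsupp.single 0 D with hα'
    have hα : α' + Finsupp.single 0 D = α := tsub_add_cancel_of_le hle
    have e1 : monomial α (1 : K) = monomial α' 1 * G -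
        ∑ γ ∈ G.support.erase (Finsupp.single 0 D), C (coeff γ G) * monomial (α' + γ) (1 : K) := by
      conv_rhs => enter [1, 2]; rw [G.as_sum]
      have hmem : Finsupp.single 0 D ∈ G.support := by
        rw [mem_support_iff, hG.2]; exact one_ne_zero
      rw [← Finset.add_sum_erase _ _ hmem, mul_add, Finset.mul_sum, monomial_mul, hG.2, one_mul, hα]
      simp only [monomial_mul, one_mul, C_mul_monomial, mul_one]
      ring
    rw [e1]
    refine Ideal.sub_mem _ (Ideal.mem_sup_left (Ideal.mul_mem_left _ _ (Ideal.mem_span_singleton_self _))) ?_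
    refine Ideal.sum_mem _ fun γ hγ => Ideal.mul_mem_left _ _ (ih _ ?_ ?_)
    · have := hG.lt (Finset.mem_of_mem_erase hγ) (Finset.ne_of_mem_erase hγ)
      have h5 := DFunLike.congr_fun hα 0
      simp at h5 ⊢
      omega
    · have h5 : Finsupp.degree γ = D := hom_deg hG.1 (Finset.mem_of_mem_erase hγ)
      have h6 := congrArg Finsupp.degree hα
      rw [map_add, Finsupp.degree_single] at h6
      rw [map_add]
      omega

/-- degree criterion -/
lemma deg_crit {G : MvPolynomial (Fin (n + 1)) K} {D σ : ℕ} (hσ : 1 ≤ σ) (hG : MonG G D)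
    (T : Set (Fin (n + 1))) (hT : ∀ i : Fin n, i.succ ∈ T) :
    ∀ (N : ℕ) (α : Fin (n + 1) →₀ ℕ), α 0 ≤ N → D + n * (σ - 1) ≤ Finsupp.degree α →
      monomial α (1 : K) ∈ Ideal.span {G} ⊔ cI K σ T := by
  classical
  intro N
  induction N with
  | zero =>
    intro α h0 hdeg
    exact deg_crit_aux hσ hG T hT α hdeg (fun β hβ _ => absurd hβ (by omega))
  | succ N ih =>
    intro α h0 hdeg
    exact deg_crit_aux hσ hG T hT α hdeg (fun β hβ hd => ih β (by omega) hd)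

end mono

section cart
variable {K : Type*} [Field K] {n : ℕ}

open Classical in
noncomputable def cop (K : Type*) [Field K] (n q : ℕ) :
    MvPolynomial (Fin n) K →ₗ[K] MvPolynomial (Fin n) K :=
  (basisMonomials (Fin n) K).constr K fun β =>
    if ∀ i, β i % q = q - 1 then monomial (Finsupp.equivFunOnFinite.symm fun i => β i / q) 1 else 0

open Classical in
lemma cop_monomial (q : ℕ) (β : Fin n →₀ ℕ) (a : K) : cop K n q (monomial β a) =
    if ∀ i, β i % q = q - 1 then monomial (Finsupp.equivFunOnFinite.symm fun i => β i / q) a else 0 := by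
  have h1 : monomial β a = a • basisMonomials (Fin n) K β := by
    rw [coe_basisMonomials, smul_monomial, smul_eq_mul, mul_one]
  rw [h1, map_smul, cop, Module.Basis.constr_basis]
  split_ifs
  · rw [smul_monomial, smul_eq_mul, mul_one]
  · simp

lemma cop_expand (q : ℕ) (hq : 1 ≤ q) (a b : MvPolynomial (Fin n) K) :
    cop K n q (expand q a * b) = a * cop K n q b := by
  induction a using MvPolynomial.induction_on' with
  | add p r hp hr => rw [map_add, add_mul, map_add, hp, hr, add_mul]
  | monomial α x =>
    induction b using MvPolynomial.induction_on' with
    | add p r hp hr => rw [mul_add, map_add, hp, hr, map_add, mul_add]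
    | monomial β y =>
      rw [expand_monomial, monomial_mul, cop_monomial, cop_monomial]
      have e : ∀ i, (q • α + β) i % q = β i % q := fun i => by simp
      simp only [e]
      split_ifs
      · rw [monomial_mul]
        refine congrArg (fun t => monomial t (x * y)) ?_
        ext i
        simp only [Finsupp.coe_add, Finsupp.coe_smul, Pi.add_apply, Pi.smul_apply, smul_eq_mul,
          Finsupp.equivFunOnFinite_symm_apply_apply]
        show (q * α i + β i) / q = α i + β i / q
        rw [Nat.mul_add_div (by omega)]
      · simp

lemma pow_eq_expand [Fintype K] (s : ℕ) (a : MvPolynomial (Fin n) K) :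
    a ^ (Fintype.card K ^ s) = expand (Fintype.card K ^ s) a := by
  obtain ⟨p, hc, e, hp, hcard⟩ := FiniteField.card' K
  haveI := Fact.mk hp
  haveI : ExpChar K p := ExpChar.prime hp
  haveI : ExpChar (MvPolynomial (Fin n) K) p := inferInstance
  have hq : Fintype.card K ^ s = p ^ ((e : ℕ) * s) := by rw [hcard, ← pow_mul]
  have key : iterateFrobenius (MvPolynomial (Fin n) K) p ((e : ℕ) * s) =
      (expand (Fintype.card K ^ s) : MvPolynomial (Fin n) K →ₐ[K] _).toRingHom := by
    apply MvPolynomial.ringHom_ext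
    · intro r
      show C r ^ p ^ ((e : ℕ) * s) = expand _ (C r)
      rw [expand_C, ← hq, ← C_pow, FiniteField.pow_card_pow]
    · intro i
      show X i ^ p ^ ((e : ℕ) * s) = expand _ (X i)
      rw [expand_X, hq]
  have := RingHom.congr_fun key a
  rw [hq] at this ⊢
  exact this

end cart

end Bz


namespace Bz
open MvPolynomial

section CH2
variable {K : Type*} [Field K] {n : ℕ}

def QP {r : ℕ} (f : Fin r → MvPolynomial (Fin (n + 1)) K) (d : Fin r → ℕ) (q : ℕ) (C : ℕ → ℕ) (b u : ℕ)
    (y : (Fin r → Bool) → MvPolynomial (Fin (n + 1)) K) : Prop :=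
  Supp b y ∧ (∀ s E, E + b * q ≤ r * q + C b → y s ∈ Ideal.span (Set.range f) ^ E) ∧
    ∀ s, HomZ (y s) ((u : ℤ) - ∑ i, if s i = true then ((q * d i : ℕ) : ℤ) else 0)

lemma sum_update {r : ℕ} (w : Fin r → ℤ) (s : Fin r → Bool) (i : Fin r) (h : s i = false) :
    ∑ j, (if Function.update s i true j = true then w j else 0) =
      (∑ j, if s j = true then w j else 0) + w i := by
  rw [← Finset.add_sum_erase _ _ (Finset.mem_univ i),
    ← Finset.add_sum_erase (a := i) Finset.univ (fun j => if s j = true then w j else 0)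
      (Finset.mem_univ i)]
  simp only [Function.update_self, h]
  have : ∑ j ∈ Finset.univ.erase i, (if Function.update s i true j = true then w j else 0)
      = ∑ j ∈ Finset.univ.erase i, (if s j = true then w j else 0) := by
    apply Finset.sum_congr rfl
    intro j hj
    rw [Function.update_of_ne (Finset.ne_of_mem_erase hj)]
  rw [this]; simp; ring

lemma QP_step {r : ℕ} (f : Fin r → MvPolynomial (Fin (n + 1)) K) (d : Fin r → ℕ)
    (hf : ∀ j, (f j).IsHomogeneous (d j)) (q : ℕ) (hq : 1 ≤ q) (cs : ℕ → ℕ)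
    (hcs : ∀ b, ∀ q E : ℕ, 1 ≤ q → r * q + cs b ≤ E + b * q →
      ∀ y : (Fin r → Bool) → MvPolynomial (Fin (n + 1)) K, Supp b y →
      (∀ s, y s ∈ Ideal.span (Set.range f) ^ E) → kd r (fun j => f j ^ q) y = 0 →
      ∃ w : (Fin r → Bool) → MvPolynomial (Fin (n + 1)) K, Supp (b + 1) w ∧
      (∀ s, w s ∈ Ideal.span (Set.range f) ^ (E - q - cs b)) ∧ kd r (fun j => f j ^ q) w = y)
    (b u : ℕ) (y) (hy : QP f d q (fun b => ∑ i ∈ Finset.Ico b (r + 1), cs i) b u y)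
    (hd : kd r (fun j => f j ^ q) y = 0) :
    ∃ w, QP f d q (fun b => ∑ i ∈ Finset.Ico b (r + 1), cs i) (b + 1) u w ∧
      kd r (fun j => f j ^ q) w = y := by
  obtain ⟨h1, h2, h3⟩ := hy
  rcases Nat.lt_or_ge r b with hb | hb
  · refine ⟨0, ⟨fun _ _ => rfl, fun _ _ _ => Ideal.zero_mem _, fun _ => HomZ.zero⟩, ?_⟩
    rw [kd_zero, supp_gt hb h1]
  have hC : ∑ i ∈ Finset.Ico b (r + 1), cs i = cs b + ∑ i ∈ Finset.Ico (b + 1) (r + 1), cs i :=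
    Finset.sum_eq_sum_Ico_succ_bot (by omega) _
  set C1 := ∑ i ∈ Finset.Ico (b + 1) (r + 1), cs i with hC1
  simp only [hC] at h2
  have hbq : b * q ≤ r * q := Nat.mul_le_mul_right q hb
  obtain ⟨w, w1, w2, w3⟩ := hcs b q (r * q + (cs b + C1) - b * q) hq (by omega) y h1
    (fun s => h2 s _ (by omega)) hd
  let T : (Fin r → Bool) → MvPolynomial (Fin (n + 1)) K →+ MvPolynomial (Fin (n + 1)) K :=
    fun s => hproj ((u : ℤ) - ∑ i, if s i = true then ((q * d i : ℕ) : ℤ) else 0)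
  have hHI : HI (Ideal.span (Set.range f)) := HI_span _ (by rintro _ ⟨j, rfl⟩; exact ⟨_, hf j⟩)
  refine ⟨fun s => T s (w s), ⟨?_, ?_, fun s => hproj_homZ _ _⟩, ?_⟩
  · intro s hs
    show T s (w s) = 0
    rw [w1 s hs, map_zero]
  · intro s E hE
    apply hproj_mem (HI_pow hHI E)
    refine Ideal.pow_le_pow_right ?_ (w2 s)
    rw [add_mul, one_mul] at hE
    simp only [← hC1] at hE
    omega
  · funext s
    rw [kd_nat r (fun j => f j ^ q) (fun j => f j ^ q) T T, w3]
    · exact hproj_eq (h3 s)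
    · intro s i m hs
      simp only [smul_eq_mul, T]
      rw [sum_update _ s i hs, hproj_mul (d := q * d i)]
      · congr 2; ring
      · rw [mul_comm]; exact (hf i).pow q

lemma dat_pow {S : Type*} [CommRing S] {r A : ℕ} (f : Fin r → S) (v : Fin A → S) (x : S)
    (cc : Fin A → Fin r → Fin A → S) (h : ∀ a, x * v a = ∑ j, ∑ b, f j * cc a j b * v b) (N : ℕ) (a : Fin A) :
    x ^ N * v a ∈ Ideal.span (Set.range f) ^ N := by
  induction N generalizing a with
  | zero => rw [pow_zero, pow_zero, Ideal.one_eq_top]; trivial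
  | succ N ih =>
    have : x ^ (N + 1) * v a = ∑ j, ∑ b, f j * (cc a j b * (x ^ N * v b)) := by
      rw [pow_succ, mul_assoc, h, Finset.mul_sum]
      refine Finset.sum_congr rfl fun j _ => ?_
      rw [Finset.mul_sum]
      refine Finset.sum_congr rfl fun b _ => by ring
    rw [this, pow_succ']
    exact Ideal.sum_mem _ fun j _ => Ideal.sum_mem _ fun b _ =>
      Ideal.mul_mem_mul (Ideal.subset_span ⟨j, rfl⟩) (Ideal.mul_mem_left _ _ (ih b))

lemma degl_map {S ι : Type*} (x : ι → S) (δ : ℕ) (L : List ι) :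
    degl (L.map fun i => (x i, δ)) = L.length * δ := by
  induction L with
  | nil => simp [degl]
  | cons i L ih => simp only [List.map_cons, degl, ih, List.length_cons]; ring

theorem charp [Fintype K] (n r A M c k dg : ℕ) (d : Fin r → ℕ)
    (f : Fin r → MvPolynomial (Fin (n + 1)) K) (g : MvPolynomial (Fin (n + 1)) K)
    (p u : Fin (n + 1) → MvPolynomial (Fin (n + 1)) K) (v : Fin A → MvPolynomial (Fin (n + 1)) K)
    (cc : Fin (n + 1) → Fin A → Fin r → Fin A → MvPolynomial (Fin (n + 1)) K)
    (hk : 1 ≤ k) (hf : ∀ j, (f j).IsHomogeneous (d j)) (hg : g.IsHomogeneous dg)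
    (hp : ∀ i, p i = X i ^ k + g * u i) (hph : ∀ i, (p i).IsHomogeneous k)
    (hv : ∃ a, v a = X 0 ^ (M * c))
    (hid : ∀ i a, p i * X 0 ^ M * v a = ∑ j, ∑ b, f j * cc i a j b * v b)
    (hcase : (g = 0 ∧ r ≤ n) ∨ (1 ≤ n ∧ r = n ∧ coeff (Finsupp.single 0 dg) g = 1 ∧ (∑ j, d j) + dg ≤ n * M + n)) :
    (X 0 : MvPolynomial (Fin (n + 1)) K) ^ (r * M) ∈ Ideal.span (Set.range f) ⊔ Ideal.span {g} := by
  classical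
  choose cs hcs using fun b => sk_S r b f
  set C0 := ∑ i ∈ Finset.Ico 0 (r + 1), cs i with hC0
  obtain ⟨s, hs⟩ : ∃ s : ℕ, M * (C0 + c) < Fintype.card K ^ s :=
    ⟨_, Nat.lt_pow_self (Fintype.one_lt_card)⟩
  set q := Fintype.card K ^ s with hq
  have hfrob : ∀ a : MvPolynomial (Fin (n + 1)) K, a ^ q = expand q a := fun a => pow_eq_expand s a
  have hq1 : 1 ≤ q := by omega
  set t := r + C0 + 1 with ht
  set σ := k * (q * t) with hσ
  have hσ1 : 1 ≤ σ := by
    rw [hσ]; exact Nat.one_le_iff_ne_zero.2 (by positivity)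
  set G := g ^ q with hG
  set x : Fin (n + 1) → MvPolynomial (Fin (n + 1)) K := fun i => p i ^ (q * t) with hx
  have hxG : ∀ i, x i - X i ^ σ ∈ Ideal.span {G} := by
    intro i
    have e1 : p i ^ q = (X i ^ k) ^ q + g ^ q * u i ^ q := by
      rw [hp, ← mul_pow, hfrob, hfrob, hfrob, map_add]
    have e2 : x i = (p i ^ q) ^ t := by rw [hx, ← pow_mul]
    have e3 : (X i : MvPolynomial (Fin (n + 1)) K) ^ σ = ((X i ^ k) ^ q) ^ t := by
      rw [hσ, ← pow_mul, ← pow_mul]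
    rw [e2, e3]
    have := sub_dvd_pow_sub_pow (p i ^ q) ((X i ^ k) ^ q) t
    rw [Ideal.mem_span_singleton]
    refine dvd_trans ?_ this
    rw [e1, add_sub_cancel_left]
    exact Dvd.intro _ rfl
  set α : Fin (n + 1) →₀ ℕ := Finsupp.equivFunOnFinite.symm (fun _ => q - 1) +
    Finsupp.single 0 (r * M * q) with hα
  set h : MvPolynomial (Fin (n + 1)) K := monomial α 1 with hh
  set uh := (n + 1) * (q - 1) + r * M * q with huh
  have hdeg : h.IsHomogeneous uh := by
    apply isHomogeneous_monomial
    rw [hα, map_add, Finsupp.degree_single, Finsupp.degree_eq_sum]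
    simp [huh]
  have hxh : ∀ i, x i * h ∈ Ideal.span (Set.range f) ^ (r * q + C0) := by
    intro i
    obtain ⟨a, ha⟩ := hv
    have h1 := dat_pow f v (p i * X 0 ^ M) (cc i) (hid i) (r * q + C0) a
    rw [ha, mul_pow, mul_assoc, ← pow_mul, ← pow_add] at h1
    have h2 : p i ^ (r * q + C0) ∣ x i := by
      apply pow_dvd_pow
      rw [ht]
      nlinarith
    have h3 : (X 0 : MvPolynomial (Fin (n + 1)) K) ^ (M * (r * q + C0) + M * c) ∣ h := by
      rw [X_pow_eq_monomial, hh]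
      rw [monomial_dvd_monomial]
      refine ⟨Or.inr ?_, one_dvd _⟩
      rw [Finsupp.single_le_iff, hα]
      simp
      have : M * (r * q + C0) + M * c = r * M * q + M * (C0 + c) := by ring
      omega
    obtain ⟨a', h2⟩ := h2
    obtain ⟨b', h3⟩ := h3
    rw [h2, h3]
    have : p i ^ (r * q + C0) * a' * (X 0 ^ (M * (r * q + C0) + M * c) * b') =
      (a' * b') * (p i ^ (r * q + C0) * X 0 ^ (M * (r * q + C0) + M * c)) := by ring
    rw [this]
    exact Ideal.mul_mem_left _ _ h1
  set Cf : ℕ → ℕ := fun b => ∑ i ∈ Finset.Ico b (r + 1), cs i with hCf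
  have hxhom : ∀ i, (x i).IsHomogeneous σ := fun i => (hph i).pow (q * t)
  -- the main lemma
  have key : ∀ L : List (Fin (n + 1)), L.Nodup →
      (g = 0 ∨ ((0 : Fin (n + 1)) ∉ L ∧ coeff (Finsupp.single 0 dg) g = 1)) →
      (∀ w : (Fin r → Bool) → MvPolynomial (Fin (n + 1)) K, Supp L.length w →
        (∀ s, HomZ (w s) (((uh + L.length * σ : ℕ) : ℤ) - ∑ i, if s i = true then ((q * d i : ℕ) : ℤ) else 0)) →
        1 ≤ L.length → ∀ s, w s ∈ Ideal.span {G} ⊔ cI K σ {i | i ∈ L}) → 1 ≤ L.length →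
      ∃ b : (Fin r → Bool) → MvPolynomial (Fin (n + 1)) K,
        h - kd r (fun j => f j ^ q) b (fun _ => false) ∈ Ideal.span {G} := by
    intro L hL hgL hw hLl
    have hbot : Ideal.span {G} ⊔ cI K σ ∅ = Ideal.span {G} := by simp [cI]
    have hcond : G = 0 ∨ ((0 : Fin (n + 1)) ∉ L ∧ (0 : Fin (n + 1)) ∉ (∅ : Set (Fin (n + 1))) ∧ ∃ D, MonG G D) := by
      rcases hgL with h | ⟨h1, h2⟩
      · left; rw [hG, h, zero_pow (by omega)]
      · refine Or.inr ⟨h1, by simp, q * dg, ?_, ?_⟩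
        · rw [mul_comm]; exact hg.pow q
        · rw [hG, hfrob]
          have : Finsupp.single (0 : Fin (n + 1)) (q * dg) = q • Finsupp.single 0 dg := by
            rw [Finsupp.smul_single, smul_eq_mul]
          rw [this, coeff_expand_smul _ (by omega), h2]
    obtain ⟨hreg, hidl⟩ := reg_list (σ := σ) (δ := σ) x hxG L hL ∅ (by simp) hcond
    rw [hbot] at hreg hidl
    obtain ⟨w, hw1, hw2⟩ := lam (fun j => f j ^ q) (L.map fun i => (x i, σ))
      ((Fin r → Bool) → MvPolynomial (Fin (n + 1)) K) (kdL r (fun j => f j ^ q))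
      (fun y => kd_kd r _ y)
      (fun c u y => if c = 0 then y = at0 r h ∧ u = uh else QP f d q Cf c u y)
      (by
        intro c u a b hc ha hb
        simp only [if_neg (show c ≠ 0 by omega)] at *
        obtain ⟨a1, a2, a3⟩ := ha
        obtain ⟨b1, b2, b3⟩ := hb
        refine ⟨fun s hs => ?_, fun s E hE => Ideal.sub_mem _ (a2 s E hE) (b2 s E hE),
          fun s => (a3 s).sub (b3 s)⟩
        show a s - b s = 0
        rw [a1 s hs, b1 s hs, sub_zero])
      (by
        intro c u hc
        simp only [if_neg (show c ≠ 0 by omega)]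
        exact ⟨fun _ _ => rfl, fun _ _ _ => Ideal.zero_mem _, fun _ => HomZ.zero⟩)
      (by
        intro c u a hc ha y hy
        simp only [if_neg (show c ≠ 0 by omega)] at *
        obtain ⟨i, hi, rfl⟩ := List.mem_map.1 hy
        obtain ⟨a1, a2, a3⟩ := ha
        refine ⟨fun s hs => ?_, fun s E hE => Ideal.mul_mem_left _ _ (a2 s E hE), fun s => ?_⟩
        · show x i • a s = 0
          rw [a1 s hs, smul_zero]
        · have := HomZ.mul (hxhom i) (a3 s)
          show HomZ (x i * a s) _
          convert this using 1
          push_cast; ring)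
      (by
        intro u y hy _ z hz
        obtain ⟨i, hi, rfl⟩ := List.mem_map.1 hz
        simp only [if_true] at hy
        obtain ⟨rfl, rfl⟩ := hy
        simp only [if_neg (show (1 : ℕ) ≠ 0 by omega)]
        refine QP_step f d hf q hq1 cs hcs 0 (uh + σ) _ ⟨?_, ?_, ?_⟩ ?_
        · intro s hs
          show x i • at0 r h s = 0
          rw [at0_supp r h s hs, smul_zero]
        · intro s E hE
          show x i * at0 r h s ∈ _
          unfold at0
          split_ifs
          · refine Ideal.pow_le_pow_right ?_ (hxh i)
            simp only [zero_mul, add_zero] at hE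
            exact hE
          · simp
        · intro s
          show HomZ (x i * at0 r h s) _
          unfold at0
          split_ifs with hs
          · have := HomZ.of ((hxhom i).mul hdeg)
            convert this using 1
            rw [hs]; simp; ring
          · rw [mul_zero]; exact HomZ.zero
        · have : kd r (fun j => f j ^ q) (x i • at0 r h) = x i • kd r (fun j => f j ^ q) (at0 r h) :=
            kd_smul _ _ _ _
          rw [this, Supp.kd_zero _ (at0_supp r h), smul_zero])
      (by
        intro c u y hc hy hdy
        simp only [if_neg (show c ≠ 0 by omega), if_neg (show c + 1 ≠ 0 by omega)] at *
        exact QP_step f d hf q hq1 cs hcs c u y hy hdy)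
      (Ideal.span {G}) LinearMap.id
      (by
        intro y s
        show kd r (fun j => f j ^ q) y s - kd r (fun j => f j ^ q) y s ∈ _
        rw [sub_self]; exact Ideal.zero_mem _)
      hreg uh (at0 r h) (by simp) (Supp.kd_zero _ (at0_supp r h))
    rw [List.length_map, if_neg (by omega), degl_map] at hw1
    obtain ⟨b, hb⟩ := hw2 (by
      intro s
      rw [hidl]
      have := hw w hw1.1 hw1.2.2 hLl s
      simpa using this)
    refine ⟨b, ?_⟩
    have := hb (fun _ => false)
    simpa [at0] using this
  have key2 : ∃ b : (Fin r → Bool) → MvPolynomial (Fin (n + 1)) K,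
        h - kd r (fun j => f j ^ q) b (fun _ => false) ∈ Ideal.span {G} := by
    rcases hcase with ⟨hg0, hrn⟩ | ⟨hn1, hrn, hg1, hdd⟩
    · refine key (List.finRange (n + 1)) (List.nodup_finRange _) (Or.inl hg0) ?_ (by simp)
      intro w hw _ _ s
      rw [supp_gt (by simp; omega) hw]; simp
    · subst hrn
      have hL : ((List.finRange r).map Fin.succ).length = r := by simp
      refine key ((List.finRange r).map Fin.succ) ?_ (Or.inr ⟨?_, hg1⟩) ?_ (by rw [hL]; omega)
      · exact (List.nodup_finRange r).map (Fin.succ_injective r)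
      · simp [Fin.succ_ne_zero]
      · intro w hw hwh _ s
        rw [hL] at hwh hw
        have hMG : MonG G (q * dg) := by
          refine ⟨by rw [mul_comm]; exact hg.pow q, ?_⟩
          rw [hG, hfrob]
          have : Finsupp.single (0 : Fin (r + 1)) (q * dg) = q • Finsupp.single 0 dg := by
            rw [Finsupp.smul_single, smul_eq_mul]
          rw [this, coeff_expand_smul _ (by omega), hg1]
        rw [(w s).as_sum]
        refine Ideal.sum_mem _ fun β hβ => ?_
        have h1 : monomial β (coeff β (w s)) = C (coeff β (w s)) * monomial β (1 : K) := by
          rw [C_mul_monomial, mul_one]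
        rw [h1]
        refine Ideal.mul_mem_left _ _ (deg_crit hσ1 hMG _ ?_ _ β le_rfl ?_)
        · intro i; simp
        · have h2 := hwh s β hβ
          have h3 : (∑ i, if s i = true then ((q * d i : ℕ) : ℤ) else 0) ≤ q * ∑ i, (d i : ℤ) := by
            rw [Finset.mul_sum]
            refine Finset.sum_le_sum fun i _ => ?_
            split_ifs
            · push_cast; rfl
            · positivity
          zify [hσ1]
          rw [h2, huh]
          push_cast [hq1]
          have h4 : (q : ℤ) * (∑ i, (d i : ℤ) + dg) ≤ q * (r * M + r) := by
            refine mul_le_mul_of_nonneg_left ?_ (by positivity)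
            exact_mod_cast hdd
          have h5 : (1 : ℤ) ≤ q := by exact_mod_cast hq1
          clear_value σ q
          clear * - h3 h4 h5
          set S1 := ∑ i, (d i : ℤ)
          set S2 := (∑ i, if s i = true then ((q * d i : ℕ) : ℤ) else 0) with hS2
          have h6 : (∑ i, if s i = true then (q : ℤ) * d i else 0) = S2 := by
            rw [hS2]; push_cast; rfl
          rw [h6]
          nlinarith
  obtain ⟨b, hb⟩ := key2
  obtain ⟨m, _, hm⟩ := kd_zero_sum r (fun j => f j ^ q) b
  rw [hm] at hb
  obtain ⟨e, he⟩ := Ideal.mem_span_singleton'.1 hb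
  have hfin : h = ∑ j, expand q (f j) * m j + expand q g * e := by
    simp only [← hfrob, ← smul_eq_mul (a := f _ ^ q)]
    rw [← sub_eq_iff_eq_add', ← he, hG, mul_comm]
  have hcop := congrArg (cop K (n + 1) q) hfin
  rw [map_add, map_sum, cop_expand q hq1] at hcop
  simp only [cop_expand q hq1] at hcop
  have hcoph : cop K (n + 1) q h = X 0 ^ (r * M) := by
    rw [hh, cop_monomial, if_pos, X_pow_eq_monomial]
    · refine congrArg (fun t => monomial t (1 : K)) ?_
      ext i
      show α i / q = _
      rw [hα]
      simp only [Finsupp.coe_add, Pi.add_apply, Finsupp.single_apply]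
      show (q - 1 + _) / q = _
      split_ifs
      · rw [mul_comm (r * M), Nat.add_mul_div_left _ _ (by omega), Nat.div_eq_of_lt (by omega), zero_add]
      · rw [add_zero, Nat.div_eq_of_lt (by omega)]
    · intro i
      rw [hα]
      simp only [Finsupp.coe_add, Pi.add_apply, Finsupp.single_apply]
      show (q - 1 + _) % q = _
      split_ifs
      · rw [mul_comm (r * M), Nat.add_mul_mod_self_left, Nat.mod_eq_of_lt (by omega)]
      · rw [add_zero, Nat.mod_eq_of_lt (by omega)]
  rw [hcoph] at hcop
  rw [hcop]
  refine Ideal.add_mem _ (Ideal.mem_sup_left ?_) (Ideal.mem_sup_right ?_)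
  · exact Ideal.sum_mem _ fun j _ => Ideal.mul_mem_right _ _ (Ideal.subset_span ⟨j, rfl⟩)
  · exact Ideal.mul_mem_right _ _ (Ideal.mem_span_singleton_self _)

end CH2
end Bz


namespace Bz
open MvPolynomial

section MODP

/-- the algebraic data -/
def Dat (R : Type*) [CommRing R] (n r A M c k dg : ℕ) (d : Fin r → ℕ)
    (f : Fin r → MvPolynomial (Fin (n + 1)) R) (g : MvPolynomial (Fin (n + 1)) R)
    (p u : Fin (n + 1) → MvPolynomial (Fin (n + 1)) R) (v : Fin A → MvPolynomial (Fin (n + 1)) R)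
    (cc : Fin (n + 1) → Fin A → Fin r → Fin A → MvPolynomial (Fin (n + 1)) R) : Prop :=
  1 ≤ k ∧ (∀ j, (f j).IsHomogeneous (d j)) ∧ g.IsHomogeneous dg ∧
    (∀ i, p i = X i ^ k + g * u i) ∧ (∀ i, (p i).IsHomogeneous k) ∧
    (∃ a, v a = X 0 ^ (M * c)) ∧
    (∀ i a, p i * X 0 ^ M * v a = ∑ j, ∑ b, f j * cc i a j b * v b) ∧
    ((g = 0 ∧ r ≤ n) ∨ (1 ≤ n ∧ r = n ∧ coeff (Finsupp.single 0 dg) g = 1 ∧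
      (∑ j, d j) + dg ≤ n * M + n))

lemma Dat.map {R R' : Type*} [CommRing R] [CommRing R'] (φ : R →+* R') {n r A M c k dg : ℕ} {d : Fin r → ℕ}
    {f g p u v cc} (h : Dat R n r A M c k dg d f g p u v cc) :
    Dat R' n r A M c k dg d (fun j => MvPolynomial.map φ (f j)) (MvPolynomial.map φ g)
      (fun i => MvPolynomial.map φ (p i))
      (fun i => MvPolynomial.map φ (u i)) (fun i => MvPolynomial.map φ (v i))
      (fun i a j b => MvPolynomial.map φ (cc i a j b)) := by
  obtain ⟨h1, h2, h3, h4, h5, ⟨a, h6⟩, h7, h8⟩ := h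
  refine ⟨h1, fun j => (h2 j).map φ, h3.map φ, fun i => ?_, fun i => (h5 i).map φ, ⟨a, ?_⟩, ?_, ?_⟩
  · simp [h4]
  · simp [h6]
  · intro i a
    have := congrArg (MvPolynomial.map φ) (h7 i a)
    simpa using this
  · rcases h8 with ⟨rfl, h⟩ | ⟨h0, rfl, h1, h2⟩
    · exact Or.inl ⟨by simp, h⟩
    · refine Or.inr ⟨h0, rfl, by rw [coeff_map, h1, map_one], h2⟩

lemma Dat.of_map {R R' : Type*} [CommRing R] [CommRing R'] (φ : R →+* R') (hφ : Function.Injective φ)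
    {n r A M c k dg : ℕ} {d : Fin r → ℕ} {f g p u v cc}
    (h : Dat R' n r A M c k dg d (fun j => MvPolynomial.map φ (f j)) (MvPolynomial.map φ g)
      (fun i => MvPolynomial.map φ (p i))
      (fun i => MvPolynomial.map φ (u i)) (fun i => MvPolynomial.map φ (v i))
      (fun i a j b => MvPolynomial.map φ (cc i a j b))) : Dat R n r A M c k dg d f g p u v cc := by
  have hinj := map_injective (σ := Fin (n + 1)) φ hφ
  obtain ⟨h1, h2, h3, h4, h5, ⟨a, h6⟩, h7, h8⟩ := h
  refine ⟨h1, fun j => (h2 j).of_map hφ, h3.of_map hφ, fun i => ?_,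
    fun i => (h5 i).of_map hφ, ⟨a, ?_⟩, ?_, ?_⟩
  · apply hinj; simpa using h4 i
  · apply hinj; simpa using h6
  · intro i a
    apply hinj
    have := h7 i a
    simpa using this
  · rcases h8 with ⟨h0, h⟩ | ⟨h0, rfl, h1, h2⟩
    · exact Or.inl ⟨hinj (by rw [h0]; simp), h⟩
    · refine Or.inr ⟨h0, rfl, hφ (by rw [← coeff_map, h1, map_one]), h2⟩

noncomputable def Lf {σ R : Type*} [CommRing R] (l : (σ →₀ ℕ) → R) : MvPolynomial σ R →ₗ[R] R :=
  (basisMonomials σ R).constr R l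

lemma Lf_monomial {σ R : Type*} [CommRing R] (l : (σ →₀ ℕ) → R) (α : σ →₀ ℕ) (a : R) :
    Lf l (monomial α a) = a * l α := by
  have h1 : monomial α a = a • basisMonomials σ R α := by
    rw [coe_basisMonomials, smul_monomial, smul_eq_mul, mul_one]
  rw [h1, map_smul, Lf, Module.Basis.constr_basis, smul_eq_mul]

lemma Lf_map {σ R R' : Type*} [CommRing R] [CommRing R'] (φ : R →+* R') (l : (σ →₀ ℕ) → R)
    (P : MvPolynomial σ R) : Lf (fun α => φ (l α)) (map φ P) = φ (Lf l P) := by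
  induction P using MvPolynomial.induction_on' with
  | monomial α a => rw [map_monomial, Lf_monomial, Lf_monomial, map_mul]
  | add p q hp hq => rw [map_add, map_add, hp, hq, map_add, map_add]

lemma Lf_eq {σ R : Type*} [CommRing R] (L : MvPolynomial σ R →ₗ[R] R) :
    Lf (fun α => L (monomial α 1)) = L := by
  ext α
  show Lf (fun α => L (monomial α 1)) (monomial α 1) = L (monomial α 1)
  rw [Lf_monomial, one_mul]

/-- functional kills the ideal iff kills monomial multiples of generators -/
lemma Lf_kill {σ R : Type*} [CommRing R] (L : MvPolynomial σ R →ₗ[R] R) (s : Set (MvPolynomial σ R))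
    (h : ∀ x ∈ s, ∀ β, L (x * monomial β 1) = 0) : ∀ y ∈ Ideal.span s, L y = 0 := by
  intro y hy
  induction hy using Submodule.span_induction with
  | mem x hx => simpa using h x hx 0
  | zero => simp
  | add x y _ _ hx hy => rw [map_add, hx, hy, add_zero]
  | smul a x hx hx' =>
    have : ∀ a, L (a * x) = 0 := by
      clear hx'
      induction hx using Submodule.span_induction with
      | mem x hx =>
        intro a
        induction a using MvPolynomial.induction_on' with
        | monomial α c =>
          have : monomial α c * x = c • (x * monomial α 1) := by
            rw [← mul_smul_comm, smul_monomial, smul_eq_mul, mul_one, mul_comm]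
          rw [this, map_smul, h x hx, smul_zero]
        | add p q hp hq => rw [add_mul, map_add, hp, hq, add_zero]
      | zero => simp
      | add x y _ _ hx hy => intro a; rw [mul_add, map_add, hx, hy, add_zero]
      | smul b x hx hx' => intro a; rw [smul_eq_mul, ← mul_assoc]; exact hx' _
    exact this a

lemma jac_int : IsJacobsonRing ℤ := by
  rw [isJacobsonRing_iff_prime_eq]
  intro P hP
  by_cases h : P = ⊥
  · subst h
    rw [eq_bot_iff]
    intro x hx
    rw [Ideal.mem_jacobson_bot] at hx
    have h1 := hx x
    rw [Int.isUnit_iff] at h1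
    have : x = 0 := by
      rcases h1 with h1 | h1 <;> nlinarith
    simpa using this
  · have := hP.isMaximal h
    exact Ideal.jacobson_eq_self_of_isMaximal

lemma finite_field_of_fg (K Λ : Type*) [Field K] [CommRing Λ] [Algebra ℤ Λ] [Algebra.FiniteType ℤ Λ]
    (π : Λ →+* K) (hπ : Function.Surjective π) : Finite K := by
  have := jac_int
  have hft : Algebra.FiniteType ℤ K := Algebra.FiniteType.of_surjective
    (A := Λ) { π with commutes' := fun z => by simp } hπ
  have hfin : Module.Finite ℤ K := finite_of_finite_type_of_isJacobsonRing ℤ K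
  have hIntg : Algebra.IsIntegral ℤ K := inferInstance
  apply Module.finite_of_fg_torsion
  obtain ⟨p, hp⟩ := CharP.exists K
  have hp0 : p ≠ 0 := by
    rintro rfl
    have : CharZero K := CharP.charP_to_charZero K
    have hf := isField_of_isIntegral_of_isField (R := ℤ) (S := K)
      (by simpa using (algebraMap ℤ K).injective_int) (Field.toIsField K)
    exact Int.not_isField hf
  intro x
  refine ⟨⟨p, ?_⟩, ?_⟩
  · rw [mem_nonZeroDivisors_iff_ne_zero]; exact_mod_cast hp0
  · show (p : ℤ) • x = 0
    simp

theorem over_C (n r A M c k dg : ℕ) (d : Fin r → ℕ)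
    (f g p u v cc) (h : Dat ℂ n r A M c k dg d f g p u v cc) :
    (X 0 : MvPolynomial (Fin (n + 1)) ℂ) ^ (r * M) ∈ Ideal.span (Set.range f) ⊔ Ideal.span {g} := by
  classical
  by_contra hcon
  have hsp : ∀ (R : Type) [CommRing R] (f : Fin r → MvPolynomial (Fin (n + 1)) R) (g : MvPolynomial (Fin (n + 1)) R),
    Ideal.span (Set.range f) ⊔ Ideal.span {g} = Ideal.span (Set.range f ∪ {g}) := fun R _ f g =>
      (Ideal.span_union _ _).symm
  set I := Ideal.span (Set.range f) ⊔ Ideal.span {g} with hI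
  have hHI : HI I := by
    rw [hI, hsp]
    apply HI_span
    rintro x (⟨j, rfl⟩ | rfl)
    · exact ⟨_, h.2.1 j⟩
    · exact ⟨_, h.2.2.1⟩
  obtain ⟨l0, hl0, hl1⟩ := Submodule.exists_dual_map_eq_bot_of_notMem
    (p := I.restrictScalars ℂ) (x := X 0 ^ (r * M)) hcon inferInstance
  have hl1' : ∀ x ∈ I, l0 x = 0 := by
    intro x hx
    have : l0 x ∈ Submodule.map l0 (I.restrictScalars ℂ) := ⟨x, hx, rfl⟩
    rw [hl1] at this; simpa using this
  set lc : MvPolynomial (Fin (n + 1)) ℂ →ₗ[ℂ] ℂ :=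
    (l0 (X 0 ^ (r * M)))⁻¹ • (l0.comp (homogeneousComponent (r * M))) with hlc
  have hlcI : ∀ x ∈ I, lc x = 0 := by
    intro x hx
    simp [hlc, hl1' _ (hHI x hx _)]
  have hX : (X 0 ^ (r * M) : MvPolynomial (Fin (n + 1)) ℂ).IsHomogeneous (r * M) := by
    have := (isHomogeneous_X ℂ (0 : Fin (n + 1))).pow (r * M)
    simpa using this
  have hlcX : lc (X 0 ^ (r * M)) = 1 := by
    have h1 : homogeneousComponent (r * M) (X 0 ^ (r * M) : MvPolynomial (Fin (n + 1)) ℂ) = X 0 ^ (r * M) := by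
      rw [homogeneousComponent_of_mem hX, if_pos rfl]
    simp only [hlc, LinearMap.smul_apply, LinearMap.comp_apply, h1, smul_eq_mul]
    exact inv_mul_cancel₀ hl0
  set l : (Fin (n + 1) →₀ ℕ) → ℂ := fun α => lc (monomial α 1) with hl
  have hlfin : (Set.range l).Finite := by
    refine ((Finsupp.finite_of_degree_eq (σ := Fin (n + 1)) (r * M)).image l |>.insert 0).subset ?_
    rintro _ ⟨α, rfl⟩
    by_cases hα : Finsupp.degree α = r * M
    · exact Or.inr ⟨α, hα, rfl⟩
    · left
      have h1 : homogeneousComponent (r * M) (monomial α (1 : ℂ)) = 0 := by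
        rw [homogeneousComponent_of_mem (n := Finsupp.degree α) (isHomogeneous_monomial _ rfl), if_neg (Ne.symm hα)]
      simp only [hl, hlc, LinearMap.smul_apply, LinearMap.comp_apply, h1, map_zero, smul_zero]
  set E : Set ℂ := Set.range l ∪ (⋃ j, ((f j).coeffs : Set ℂ)) ∪ (g.coeffs : Set ℂ) ∪
    (⋃ i, ((p i).coeffs : Set ℂ)) ∪ (⋃ i, ((u i).coeffs : Set ℂ)) ∪ (⋃ i, ((v i).coeffs : Set ℂ)) ∪
    (⋃ i, ⋃ a, ⋃ j, ⋃ b, ((cc i a j b).coeffs : Set ℂ)) with hE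
  have hEfin : E.Finite := by
    rw [hE]
    refine (((((hlfin.union ?_).union ?_).union ?_).union ?_).union ?_).union ?_
    · exact Set.finite_iUnion fun j => Finset.finite_toSet _
    · exact Finset.finite_toSet _
    · exact Set.finite_iUnion fun j => Finset.finite_toSet _
    · exact Set.finite_iUnion fun j => Finset.finite_toSet _
    · exact Set.finite_iUnion fun j => Finset.finite_toSet _
    · exact Set.finite_iUnion fun i => Set.finite_iUnion fun j => Set.finite_iUnion fun k =>
        Set.finite_iUnion fun k => Finset.finite_toSet _
  set Λ := Algebra.adjoin ℤ E with hΛ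
  have hEΛ : E ⊆ Λ := Algebra.subset_adjoin
  let val : Λ →+* ℂ := Λ.val.toRingHom
  have hval : Function.Injective val := Subtype.val_injective
  have lift : ∀ P : MvPolynomial (Fin (n + 1)) ℂ, (P.coeffs : Set ℂ) ⊆ E → ∃ P' : MvPolynomial (Fin (n + 1)) Λ,
      map val P' = P := by
    intro P hP
    have : P ∈ Set.range (map val : MvPolynomial (Fin (n + 1)) Λ → MvPolynomial (Fin (n + 1)) ℂ) := by
      rw [mem_range_map_iff_coeffs_subset]
      intro x hx
      exact ⟨⟨x, hEΛ (hP hx)⟩, rfl⟩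
    exact this
  have hft : Algebra.FiniteType ℤ Λ := by
    rw [hΛ, ← Subalgebra.fg_iff_finiteType]
    exact ⟨hEfin.toFinset, by simp⟩
  have hll : ∀ α, l α ∈ Λ := fun α => hEΛ (by rw [hE]; simp only [Set.mem_union]; tauto)
  choose f' hf' using fun j => lift (f j) (by
    intro x hx; rw [hE]; simp only [Set.mem_union, Set.mem_iUnion]; tauto)
  obtain ⟨g', hg'⟩ := lift g (by
    intro x hx; rw [hE]; simp only [Set.mem_union, Set.mem_iUnion]; tauto)
  choose p' hp' using fun j => lift (p j) (by
    intro x hx; rw [hE]; simp only [Set.mem_union, Set.mem_iUnion]; tauto)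
  choose u' hu' using fun j => lift (u j) (by
    intro x hx; rw [hE]; simp only [Set.mem_union, Set.mem_iUnion]; tauto)
  choose v' hv' using fun j => lift (v j) (by
    intro x hx; rw [hE]; simp only [Set.mem_union, Set.mem_iUnion]; tauto)
  choose cc' hcc' using fun i a j b => lift (cc i a j b) (by
    intro x hx; rw [hE]; simp only [Set.mem_union, Set.mem_iUnion]; right; exact ⟨_, _, _, _, hx⟩)
  obtain ⟨𝔪, h𝔪⟩ := Ideal.exists_maximal Λ
  let K := Λ ⧸ 𝔪
  letI : Field K := Ideal.Quotient.field 𝔪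
  let π : Λ →+* K := Ideal.Quotient.mk 𝔪
  have hfinK : Finite K := finite_field_of_fg K Λ π Ideal.Quotient.mk_surjective
  letI : Fintype K := Fintype.ofFinite K
  have hD : Dat Λ n r A M c k dg d f' g' p' u' v' cc' := by
    apply Dat.of_map val hval
    simpa only [hf', hg', hp', hu', hv', hcc'] using h
  have hDK := hD.map π
  obtain ⟨a1, a2, a3, a4, a5, a6, a7, a8⟩ := hDK
  have hmem := charp (K := K) n r A M c k dg d _ _ _ _ _ _ a1 a2 a3 a4 a5 a6 a7 a8
  let l' : (Fin (n + 1) →₀ ℕ) → Λ := fun α => ⟨l α, hll α⟩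
  have hLv : ∀ P : MvPolynomial (Fin (n + 1)) Λ, val (Lf l' P) = lc (map val P) := by
    intro P
    rw [← Lf_map, ← Lf_eq lc]
    rfl
  have hkill : ∀ x ∈ Ideal.span (Set.range (fun j => map π (f' j)) ∪ {map π g'}),
      Lf (fun α => π (l' α)) x = 0 := by
    apply Lf_kill
    have gen : ∀ x : MvPolynomial (Fin (n + 1)) Λ, map val x ∈ I → ∀ β,
        Lf (fun α => π (l' α)) (map π x * monomial β 1) = 0 := by
      intro x hx β
      have e1 : map π x * monomial β 1 = map π (x * monomial β 1) := by
        rw [map_mul, map_monomial, map_one π]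
      rw [e1, Lf_map]
      have : Lf l' (x * monomial β 1) = 0 := by
        apply hval
        rw [hLv, map_mul, map_zero]
        exact hlcI _ (Ideal.mul_mem_right _ _ hx)
      rw [this, map_zero]
    rintro x (⟨j, rfl⟩ | rfl)
    · apply gen
      rw [hf']
      exact Ideal.mem_sup_left (Ideal.subset_span ⟨j, rfl⟩)
    · apply gen
      rw [hg']
      exact Ideal.mem_sup_right (Ideal.mem_span_singleton_self _)
  rw [← Ideal.span_union] at hmem
  have h0 := hkill _ hmem
  have e1 : (X 0 : MvPolynomial (Fin (n + 1)) K) ^ (r * M) = map π (X 0 ^ (r * M)) := by simp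
  rw [e1, Lf_map] at h0
  have h2 : Lf l' (X 0 ^ (r * M)) = 1 := by
    apply hval
    rw [hLv]
    simp [hlcX]
  rw [h2, map_one] at h0
  exact one_ne_zero h0

end MODP
end Bz


namespace Bz
open MvPolynomial

section DENS

theorem near_ne {s : ℕ} (a : MvPolynomial (Fin s) ℂ) (ha : a ≠ 0) (y0 : Fin s → ℂ)
    (U : Set (Fin s → ℂ)) (hU : U ∈ nhds y0) : ∃ y ∈ U, eval y a ≠ 0 := by
  obtain ⟨y1, hy1⟩ : ∃ y1, eval y1 a ≠ 0 := by
    by_contra h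
    push Not at h
    exact ha (MvPolynomial.funext (by simpa using h))
  let P : Polynomial ℂ := aeval (fun i => Polynomial.C (y0 i) + Polynomial.X * Polynomial.C (y1 i - y0 i)) a
  have hP : ∀ t : ℂ, P.eval t = eval (fun i => y0 i + t * (y1 i - y0 i)) a := by
    intro t
    simp only [P]
    rw [← Polynomial.coe_evalRingHom, aeval_def, ← MvPolynomial.coe_eval₂Hom, ← RingHom.comp_apply,
      MvPolynomial.comp_eval₂Hom]
    simp only [coe_eval₂Hom, eval, Polynomial.coe_evalRingHom, Polynomial.eval_add, Polynomial.eval_C, Polynomial.eval_mul, Polynomial.eval_X]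
    congr 1
    ext; simp
  have hP0 : P ≠ 0 := by
    intro h
    have := hP 1
    rw [h] at this
    simp at this
    exact hy1 this.symm
  have hfin : {t : ℂ | P.IsRoot t}.Countable := (Polynomial.finite_setOf_isRoot hP0).countable
  have hd := Set.Countable.dense_compl ℂ hfin
  have hc : Continuous (fun t : ℂ => (fun i => y0 i + t * (y1 i - y0 i) : Fin s → ℂ)) := by fun_prop
  have hV : (fun t : ℂ => (fun i => y0 i + t * (y1 i - y0 i) : Fin s → ℂ)) ⁻¹' U ∈ nhds (0 : ℂ) := by
    apply hc.continuousAt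
    simpa using hU
  obtain ⟨t, ht1, ht2⟩ := hd.inter_nhds_nonempty hV
  refine ⟨_, ht2, ?_⟩
  rw [← hP]
  exact ht1

theorem small_root (Q : Polynomial ℂ) (hQ : Q.Monic) (hN : 1 ≤ Q.natDegree) (η : ℝ) (hη : 0 < η)
    (h : ‖Q.coeff 0‖ < η ^ Q.natDegree) : ∃ ζ, Q.IsRoot ζ ∧ ‖ζ‖ ≤ η := by
  by_contra hcon
  push Not at hcon
  have hs := IsAlgClosed.splits Q
  have h1 := hs.coeff_zero_eq_prod_roots_of_monic hQ
  have hcard : Multiset.card Q.roots = Q.natDegree := hs.natDegree_eq_card_roots.symm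
  rw [h1] at h
  have key : ∀ S : Multiset ℂ, (∀ x ∈ S, η < ‖x‖) → η ^ Multiset.card S ≤ ‖S.prod‖ := by
    intro S
    induction S using Multiset.induction with
    | empty => simp
    | cons a S ih =>
      intro hS
      rw [Multiset.card_cons, Multiset.prod_cons, norm_mul, pow_succ, mul_comm]
      have h1 := ih (fun x hx => hS x (Multiset.mem_cons_of_mem hx))
      have h2 := hS a (Multiset.mem_cons_self _ _)
      exact mul_le_mul h2.le h1 (by positivity) (norm_nonneg _)
  have := key Q.roots (fun x hx => hcon x (Polynomial.isRoot_of_mem_roots hx))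
  rw [hcard] at this
  simp at h
  linarith

variable {s : ℕ} {B : Type} [CommRing B] [IsDomain B] [Algebra ℂ B]
  [Algebra (MvPolynomial (Fin s) ℂ) B] [IsScalarTower ℂ (MvPolynomial (Fin s) ℂ) B]

theorem hom_of_max {B : Type} [CommRing B] [Algebra ℂ B] [Algebra.FiniteType ℂ B] (I : Ideal B) [hI : I.IsMaximal] :
    ∃ ψ : B →ₐ[ℂ] ℂ, RingHom.ker ψ = I := by
  letI : Field (B ⧸ I) := Ideal.Quotient.field I
  have : Module.Finite ℂ (B ⧸ I) := finite_of_finite_type_of_isJacobsonRing ℂ (B ⧸ I)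
  have hb := IsAlgClosed.algebraMap_bijective_of_isIntegral (k := ℂ) (K := B ⧸ I)
  let e : ℂ ≃ₐ[ℂ] (B ⧸ I) := AlgEquiv.ofBijective (Algebra.ofId ℂ (B ⧸ I)) hb
  refine ⟨e.symm.toAlgHom.comp (Ideal.Quotient.mkₐ ℂ I), ?_⟩
  ext x
  simp [RingHom.mem_ker, Ideal.Quotient.eq_zero_iff_mem]

theorem ext_root [Algebra.FiniteType ℂ B] [Module.IsTorsionFree (MvPolynomial (Fin s) ℂ) B]
    [Algebra.IsIntegral (MvPolynomial (Fin s) ℂ) B] (θ : B) (y : Fin s → ℂ) (ζ : ℂ)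
    (hζ : (minpoly (MvPolynomial (Fin s) ℂ) θ).eval₂ (eval y) ζ = 0) :
    ∃ ψ : B →ₐ[ℂ] ℂ, (∀ a, ψ (algebraMap _ B a) = eval y a) ∧ ψ θ = ζ := by
  have hθ : IsIntegral (MvPolynomial (Fin s) ℂ) θ := Algebra.IsIntegral.isIntegral θ
  let e := minpoly.equivAdjoin hθ
  let χ : Algebra.adjoin (MvPolynomial (Fin s) ℂ) {θ} →+* ℂ :=
    (AdjoinRoot.lift (eval y) ζ hζ).comp (e.symm : _ →+* _)
  have hχa : ∀ a, χ (algebraMap _ _ a) = eval y a := by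
    intro a
    simp [χ]
  have heθ : e (AdjoinRoot.root _) = ⟨θ, Algebra.self_mem_adjoin_singleton _ θ⟩ := by
    ext
    change ((AdjoinRoot.Minpoly.toAdjoin _ θ (AdjoinRoot.root _) : Algebra.adjoin (MvPolynomial (Fin s) ℂ) {θ}) : B) = θ
    simp
  have hχθ : χ ⟨θ, Algebra.self_mem_adjoin_singleton _ θ⟩ = ζ := by
    rw [← heθ]
    simp [χ]
  have hsurj : Function.Surjective χ := fun x => ⟨algebraMap _ _ (C x), by rw [hχa]; simp⟩
  have hmax : (RingHom.ker χ).IsMaximal := RingHom.ker_isMaximal_of_surjective χ hsurj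
  have : Algebra.IsIntegral (Algebra.adjoin (MvPolynomial (Fin s) ℂ) {θ}) B :=
    Algebra.IsIntegral.tower_top (R := MvPolynomial (Fin s) ℂ)
  obtain ⟨Q, hQ, hQc⟩ := Ideal.exists_ideal_over_maximal_of_isIntegral (S := B) (RingHom.ker χ) (by
    rw [(RingHom.injective_iff_ker_eq_bot _).1 ]
    · exact bot_le
    · exact Subtype.val_injective)
  obtain ⟨ψ, hψ⟩ := hom_of_max Q
  have key : ∀ x : Algebra.adjoin (MvPolynomial (Fin s) ℂ) {θ}, ψ x = χ x := by
    intro x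
    have h1 : x - algebraMap (MvPolynomial (Fin s) ℂ) _ (C (χ x)) ∈ RingHom.ker χ := by
      rw [RingHom.mem_ker, map_sub, hχa]; simp
    rw [← hQc, Ideal.mem_comap, ← hψ, RingHom.mem_ker, map_sub, map_sub, sub_eq_zero] at h1
    have h2 : (algebraMap (Algebra.adjoin (MvPolynomial (Fin s) ℂ) {θ}) B) (algebraMap (MvPolynomial (Fin s) ℂ) _ (C (χ x))) = algebraMap ℂ B (χ x) := by
      rw [← IsScalarTower.algebraMap_apply, IsScalarTower.algebraMap_apply ℂ (MvPolynomial (Fin s) ℂ) B]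
      rfl
    rw [h2] at h1
    simpa using h1
  refine ⟨ψ, fun a => ?_, ?_⟩
  · rw [← hχa, ← key]; rfl
  · rw [← hχθ, ← key]

theorem fiber_root (φ : B →ₐ[ℂ] ℂ) (y : Fin s → ℂ) (hφ : ∀ a : MvPolynomial (Fin s) ℂ, φ (algebraMap _ B a) = eval y a) (x : B) :
    (minpoly (MvPolynomial (Fin s) ℂ) x).eval₂ (eval y) (φ x) = 0 := by
  have h := congrArg φ (minpoly.aeval (MvPolynomial (Fin s) ℂ) x)
  rw [Polynomial.aeval_def, map_zero] at h
  change (φ : B →+* ℂ) _ = 0 at h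
  rw [Polynomial.hom_eval₂] at h
  rw [← h]
  congr 1
  ext a <;> simp [hφ]

theorem fiber_bound [Algebra.IsIntegral (MvPolynomial (Fin s) ℂ) B] (y0 : Fin s → ℂ) (x : B) :
    ∃ K : ℝ, ∀ (φ : B →ₐ[ℂ] ℂ) (y : Fin s → ℂ), (∀ a : MvPolynomial (Fin s) ℂ, φ (algebraMap _ B a) = eval y a) →
      y ∈ Metric.closedBall y0 1 → ‖φ x‖ ≤ K := by
  set p := minpoly (MvPolynomial (Fin s) ℂ) x with hp
  have hpm : p.Monic := minpoly.monic (Algebra.IsIntegral.isIntegral x)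
  have hcont : Continuous (fun y : Fin s → ℂ => ∑ i ∈ Finset.range p.natDegree, ‖eval y (p.coeff i)‖) := by
    apply continuous_finsetSum
    intro i _
    exact (MvPolynomial.continuous_eval _).norm
  obtain ⟨K, hK⟩ := (isCompact_closedBall y0 1).exists_bound_of_continuousOn hcont.continuousOn
  refine ⟨K + 1, fun φ y hφ hy => ?_⟩
  have h1 := fiber_root φ y hφ x
  rw [← hp, Polynomial.eval₂_eq_eval_map] at h1
  have hm : (p.map (eval y)).Monic := hpm.map _
  have h2 := Polynomial.IsRoot.norm_lt_cauchyBound hm.ne_zero h1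
  have h3 : (‖φ x‖₊ : ℝ) < (p.map (eval y)).cauchyBound := by exact_mod_cast h2
  have h4 : (p.map (eval y)).cauchyBound ≤ (∑ i ∈ Finset.range p.natDegree, ‖eval y (p.coeff i)‖₊) + 1 := by
    rw [Polynomial.cauchyBound, hm.leadingCoeff, hpm.natDegree_map]
    simp only [nnnorm_one, div_one]
    gcongr
    apply Finset.sup_le
    intro i hi
    rw [Polynomial.coeff_map]
    exact Finset.single_le_sum (f := fun i => ‖eval y (p.coeff i)‖₊) (fun _ _ => zero_le) hi
  have h5 : ((p.map (eval y)).cauchyBound : ℝ) ≤ (∑ i ∈ Finset.range p.natDegree, ‖eval y (p.coeff i)‖) + 1 := by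
    have : ((p.map (eval y)).cauchyBound : ℝ) ≤ ((∑ i ∈ Finset.range p.natDegree, ‖eval y (p.coeff i)‖₊) + 1 : NNReal) := by exact_mod_cast h4
    simpa using this
  have h6 := (le_abs_self _).trans (hK y hy)
  simp only [coe_nnnorm] at h3
  linarith

theorem fiber_finite [Algebra.FiniteType ℂ B] [Algebra.IsIntegral (MvPolynomial (Fin s) ℂ) B] (y : Fin s → ℂ) :
    {φ : B →ₐ[ℂ] ℂ | ∀ a : MvPolynomial (Fin s) ℂ, φ (algebraMap _ B a) = eval y a}.Finite := by
  obtain ⟨S, hS⟩ := (Algebra.FiniteType.out : (⊤ : Subalgebra ℂ B).FG)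
  have hf : (Set.pi (Set.univ : Set S) (fun x => {ζ : ℂ | ((minpoly (MvPolynomial (Fin s) ℂ) (x : B)).map (eval y)).IsRoot ζ})).Finite := by
    apply Set.Finite.pi
    intro x
    apply Polynomial.finite_setOf_isRoot
    exact ((minpoly.monic (Algebra.IsIntegral.isIntegral (x : B))).map _).ne_zero
  refine Set.Finite.of_injOn (f := fun (φ : B →ₐ[ℂ] ℂ) (x : S) => φ x) ?_ ?_ hf
  · intro φ hφ x _
    have := fiber_root φ y hφ x
    rwa [Polynomial.eval₂_eq_eval_map] at this
  · intro φ _ ψ _ h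
    apply AlgHom.ext_of_adjoin_eq_top hS
    intro x hx
    exact congrFun h ⟨x, hx⟩

theorem density0 [Algebra.FiniteType ℂ B] [Module.IsTorsionFree (MvPolynomial (Fin s) ℂ) B]
    [Algebra.IsIntegral (MvPolynomial (Fin s) ℂ) B] (w : B) (hw : w ≠ 0) (φ : B →ₐ[ℂ] ℂ)
    {ι : Type} [Finite ι] (u : ι → B) (ε : ℝ) (hε : 0 < ε) :
    ∃ ψ : B →ₐ[ℂ] ℂ, ψ w ≠ 0 ∧ ∀ i, ‖ψ (u i) - φ (u i)‖ < ε := by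
  let A' := MvPolynomial (Fin s) ℂ
  let y0 : Fin s → ℂ := fun i => φ (algebraMap A' B (X i))
  have hφ : ∀ a : A', φ (algebraMap _ B a) = eval y0 a := by
    intro a
    have : (φ : B →+* ℂ).comp (algebraMap A' B) = (eval y0 : A' →+* ℂ) := by
      apply MvPolynomial.ringHom_ext
      · intro r
        have : algebraMap A' B (C r) = algebraMap ℂ B r := by
          rw [IsScalarTower.algebraMap_apply ℂ A' B]; rfl
        simp [this]
      · intro i
        simp [y0]
    exact congrArg (fun f => f a) this
  obtain ⟨a0, ha0, ha0'⟩ : ∃ a0 : A', a0 ∈ (Ideal.span {w}).comap (algebraMap A' B) ∧ a0 ≠ 0 := by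
    apply Submodule.exists_mem_ne_zero_of_ne_bot
    exact Ideal.comap_ne_bot_of_integral_mem hw (Ideal.mem_span_singleton_self w) (Algebra.IsIntegral.isIntegral w)
  rw [Ideal.mem_comap, Ideal.mem_span_singleton] at ha0
  obtain ⟨w', hw'⟩ := ha0
  -- separating element
  obtain ⟨θ, hθ0, hθ⟩ : ∃ θ : B, φ θ = 0 ∧ ∀ ψ : B →ₐ[ℂ] ℂ, (∀ a : A', ψ (algebraMap _ B a) = eval y0 a) → ψ θ = 0 → ψ = φ := by
    have hfin := fiber_finite (B := B) y0
    classical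
    let T := hfin.toFinset.erase φ
    by_contra hcon
    push Not at hcon
    have hsub : ((RingHom.ker φ : Ideal B) : Set B) ⊆ ⋃ ψ ∈ (T : Set (B →ₐ[ℂ] ℂ)), (RingHom.ker ψ : Ideal B) := by
      intro x hx
      obtain ⟨ψ, h1, h2, h3⟩ := hcon x hx
      simp only [Set.mem_iUnion]
      exact ⟨ψ, by simp [T, h3, h1, A'] , h2⟩
    have := (Ideal.subset_union_prime (R := B) (s := T) (f := fun ψ => RingHom.ker ψ) φ φ (by
      intro i _ _ _
      exact RingHom.ker_isPrime i)).1 hsub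
    obtain ⟨ψ, hψT, hψ⟩ := this
    simp only [T, Finset.mem_erase] at hψT
    apply hψT.1
    ext x
    have h1 : x - algebraMap ℂ B (φ x) ∈ RingHom.ker φ := by simp [RingHom.mem_ker]
    have h2 := hψ h1
    rw [RingHom.mem_ker, map_sub, sub_eq_zero] at h2
    simpa using h2
  set P := minpoly A' θ with hP
  have hPm : P.Monic := minpoly.monic (Algebra.IsIntegral.isIntegral θ)
  have hPd : 1 ≤ P.natDegree := minpoly.natDegree_pos (Algebra.IsIntegral.isIntegral θ)
  have hP0 : eval y0 (P.coeff 0) = 0 := by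
    have := fiber_root φ y0 hφ θ
    rw [hθ0, Polynomial.eval₂_at_zero] at this
    exact this
  have hstep : ∀ η : ℝ, 0 < η → ∃ (ψ : B →ₐ[ℂ] ℂ) (y : Fin s → ℂ), (∀ a : A', ψ (algebraMap _ B a) = eval y a) ∧
      dist y y0 < η ∧ ψ w ≠ 0 ∧ ‖ψ θ‖ ≤ η := by
    intro η hη
    have hU1 : {y : Fin s → ℂ | ‖eval y (P.coeff 0)‖ < η ^ P.natDegree} ∈ nhds y0 := by
      apply IsOpen.mem_nhds
      · exact isOpen_lt (MvPolynomial.continuous_eval _).norm continuous_const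
      · simp only [Set.mem_setOf_eq, hP0, norm_zero]; positivity
    obtain ⟨y, ⟨hy1, hy2⟩, hy3⟩ := near_ne a0 ha0' y0 _ (Filter.inter_mem hU1 (Metric.ball_mem_nhds y0 hη))
    obtain ⟨ζ, hζ, hζη⟩ := small_root (P.map (eval y)) (hPm.map _) (by rwa [hPm.natDegree_map]) η hη (by
      rw [hPm.natDegree_map, Polynomial.coeff_map]; exact hy1)
    obtain ⟨ψ, hψ1, hψ2⟩ := ext_root θ y ζ (by rw [Polynomial.eval₂_eq_eval_map]; exact hζ)
    refine ⟨ψ, y, hψ1, hy2, ?_, by rwa [hψ2]⟩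
    intro h0
    apply hy3
    rw [← hψ1, hw', map_mul, h0, zero_mul]
  haveI : Nonempty (B →ₐ[ℂ] ℂ) := ⟨φ⟩
  choose! Ψ Y hΨ hY hW hΘ using hstep
  let et : ℕ → ℝ := fun t => 1 / ((t : ℝ) + 1)
  have het : ∀ t, 0 < et t := fun t => by simp only [et]; positivity
  have het1 : ∀ t, et t ≤ 1 := fun t => by
    simp only [et]
    rw [div_le_one (by positivity)]
    have : (0 : ℝ) ≤ t := by positivity
    linarith
  have hlim : Filter.Tendsto et Filter.atTop (nhds 0) := tendsto_one_div_add_atTop_nhds_zero_nat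
  let 𝒰 := Filter.hyperfilter ℕ
  have h𝒰 : (𝒰 : Filter ℕ) ≤ Filter.atTop := by
    rw [← Nat.cofinite_eq_atTop]; exact Filter.hyperfilter_le_cofinite
  have hconv : ∀ x : B, ∃ L : ℂ, Filter.Tendsto (fun t => Ψ (et t) x) 𝒰 (nhds L) := by
    intro x
    obtain ⟨K, hK⟩ := fiber_bound (B := B) y0 x
    have hK' : ∀ t, Ψ (et t) x ∈ Metric.closedBall (0 : ℂ) K := by
      intro t
      rw [mem_closedBall_zero_iff]
      exact hK _ _ (hΨ _ (het t)) ((hY _ (het t)).le.trans (het1 t))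
    obtain ⟨L, -, hL⟩ := (isCompact_closedBall (0 : ℂ) K).ultrafilter_le_nhds (𝒰.map (fun t => Ψ (et t) x)) (by
      rw [Filter.le_principal_iff]
      exact Filter.mem_map.2 (Filter.Eventually.of_forall hK'))
    exact ⟨L, hL⟩
  choose L hL using hconv
  let ψs : B →ₐ[ℂ] ℂ :=
    { toFun := L
      map_one' := tendsto_nhds_unique (hL 1) (by simp)
      map_zero' := tendsto_nhds_unique (hL 0) (by simp)
      map_mul' := fun x y => tendsto_nhds_unique (hL _) (by simpa using (hL x).mul (hL y))
      map_add' := fun x y => tendsto_nhds_unique (hL _) (by simpa using (hL x).add (hL y))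
      commutes' := fun r => tendsto_nhds_unique (hL _) (by simp) }
  have hYlim : Filter.Tendsto (fun t => Y (et t)) 𝒰 (nhds y0) := by
    rw [tendsto_iff_dist_tendsto_zero]
    exact squeeze_zero (fun _ => dist_nonneg) (fun t => (hY _ (het t)).le) (hlim.mono_left h𝒰)
  have hψs : ψs = φ := by
    apply hθ
    · intro a
      refine tendsto_nhds_unique (hL _) ?_
      have : (fun t => Ψ (et t) (algebraMap A' B a)) = fun t => eval (Y (et t)) a := by
        funext t; exact hΨ _ (het t) a
      rw [this]
      exact ((MvPolynomial.continuous_eval a).tendsto y0).comp hYlim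
    · refine tendsto_nhds_unique (hL _) ?_
      exact squeeze_zero_norm (fun t => hΘ _ (het t)) (hlim.mono_left h𝒰)
  have hev : ∀ᶠ t in (𝒰 : Filter ℕ), ∀ i, ‖Ψ (et t) (u i) - φ (u i)‖ < ε := by
    rw [Filter.eventually_all]
    intro i
    have h1 := hL (u i)
    have h2 : L (u i) = φ (u i) := congrArg (fun f => f (u i)) hψs
    rw [h2, Metric.tendsto_nhds] at h1
    simpa [dist_eq_norm] using h1 ε hε
  obtain ⟨t, ht⟩ := hev.exists
  exact ⟨_, hW _ (het t), ht⟩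

theorem density {B : Type} [CommRing B] [IsDomain B] [Algebra ℂ B] [Algebra.FiniteType ℂ B] (w : B) (hw : w ≠ 0)
    (φ : B →ₐ[ℂ] ℂ) {ι : Type} [Finite ι] (u : ι → B) (ε : ℝ) (hε : 0 < ε) :
    ∃ ψ : B →ₐ[ℂ] ℂ, ψ w ≠ 0 ∧ ∀ i, ‖ψ (u i) - φ (u i)‖ < ε := by
  obtain ⟨s, g, hg, hgi⟩ := exists_integral_inj_algHom_of_fg ℂ B
  letI : Algebra (MvPolynomial (Fin s) ℂ) B := g.toRingHom.toAlgebra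
  haveI : IsScalarTower ℂ (MvPolynomial (Fin s) ℂ) B := IsScalarTower.of_algebraMap_eq (fun r => (g.commutes r).symm)
  haveI : FaithfulSMul (MvPolynomial (Fin s) ℂ) B := (faithfulSMul_iff_algebraMap_injective _ _).2 hg
  haveI : Module.IsTorsionFree (MvPolynomial (Fin s) ℂ) B := inferInstance
  haveI : Algebra.IsIntegral (MvPolynomial (Fin s) ℂ) B := ⟨hgi⟩
  exact density0 (s := s) w hw φ u ε hε

theorem P1top {n : ℕ} {B : Type} [CommRing B] [IsDomain B] [Algebra ℂ B]
    [Algebra (MvPolynomial (Fin n) ℂ) B] [IsScalarTower ℂ (MvPolynomial (Fin n) ℂ) B] [Algebra.FiniteType ℂ B]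
    (hinj : Function.Injective (algebraMap (MvPolynomial (Fin n) ℂ) B))
    {ι : Type} [Fintype ι] (a : ι → MvPolynomial (Fin n) ℂ) (δ w : MvPolynomial (Fin n) ℂ) (hδ : δ ≠ 0) (hw : w ≠ 0)
    (H : ∀ R : ℝ, ∃ K : ℝ, ∀ z : Fin n → ℂ, (∀ i, ‖z i‖ ≤ R) → eval z w ≠ 0 →
      ‖eval z δ‖ ≤ K * ∑ j, ‖eval z (a j)‖)
    (e : ι → B) (he : ∀ j, e j * algebraMap _ B δ = algebraMap _ B (a j)) :
    Ideal.span (Set.range e) = ⊤ := by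
  by_contra hne
  obtain ⟨𝔪, h𝔪, hle⟩ := Ideal.exists_le_maximal _ hne
  obtain ⟨φ, hφ⟩ := hom_of_max 𝔪
  have hφe : ∀ j, φ (e j) = 0 := by
    intro j
    have : e j ∈ RingHom.ker φ := by
      rw [hφ]; exact hle (Ideal.subset_span ⟨j, rfl⟩)
    exact this
  let R : ℝ := ∑ i, ‖φ (algebraMap _ B (X i : MvPolynomial (Fin n) ℂ))‖ + 1
  obtain ⟨K, hK⟩ := H R
  let ε : ℝ := min 1 (1 / ((|K| + 1) * (Fintype.card ι + 1)))
  have hε : 0 < ε := by positivity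
  have hwδ : algebraMap (MvPolynomial (Fin n) ℂ) B (w * δ) ≠ 0 := by
    rw [Ne, map_eq_zero_iff _ hinj]
    exact mul_ne_zero hw hδ
  obtain ⟨ψ, hψ0, hψ⟩ := density (algebraMap (MvPolynomial (Fin n) ℂ) B (w * δ)) hwδ φ
    (Sum.elim (fun i : Fin n => algebraMap _ B (X i : MvPolynomial (Fin n) ℂ)) e) ε hε
  let z : Fin n → ℂ := fun i => ψ (algebraMap _ B (X i : MvPolynomial (Fin n) ℂ))
  have hz : ∀ p : MvPolynomial (Fin n) ℂ, ψ (algebraMap _ B p) = eval z p := by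
    intro p
    have : (ψ : B →+* ℂ).comp (algebraMap (MvPolynomial (Fin n) ℂ) B) = (eval z : MvPolynomial (Fin n) ℂ →+* ℂ) := by
      apply MvPolynomial.ringHom_ext
      · intro r
        have : algebraMap (MvPolynomial (Fin n) ℂ) B (C r) = algebraMap ℂ B r := by
          rw [IsScalarTower.algebraMap_apply ℂ (MvPolynomial (Fin n) ℂ) B]; rfl
        simp [this]
      · intro i
        simp [z]
    exact congrArg (fun f => f p) this
  rw [map_mul, map_mul, hz, hz] at hψ0
  have hw0 := left_ne_zero_of_mul hψ0
  have hδ0 := right_ne_zero_of_mul hψ0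
  have hzR : ∀ i, ‖z i‖ ≤ R := by
    intro i
    have h1 := hψ (Sum.inl i)
    simp only [Sum.elim_inl] at h1
    have h2 : ‖z i‖ ≤ ‖φ (algebraMap _ B (X i : MvPolynomial (Fin n) ℂ))‖ + ε := by
      calc ‖z i‖ = ‖φ (algebraMap _ B (X i : MvPolynomial (Fin n) ℂ)) + (z i - φ (algebraMap _ B (X i : MvPolynomial (Fin n) ℂ)))‖ := by congr 1; ring
        _ ≤ _ := (norm_add_le _ _).trans (by gcongr)
    have h3 : ‖φ (algebraMap _ B (X i : MvPolynomial (Fin n) ℂ))‖ ≤ ∑ i, ‖φ (algebraMap _ B (X i : MvPolynomial (Fin n) ℂ))‖ :=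
      Finset.single_le_sum (f := fun i => ‖φ (algebraMap _ B (X i : MvPolynomial (Fin n) ℂ))‖) (fun _ _ => norm_nonneg _) (Finset.mem_univ i)
    have h4 : ε ≤ 1 := min_le_left _ _
    simp only [R]
    linarith
  have hest := hK z hzR hw0
  have hej : ∀ j, ‖eval z (a j)‖ ≤ ε * ‖eval z δ‖ := by
    intro j
    rw [← hz (a j), ← he j, map_mul, hz, norm_mul]
    gcongr
    have h1 := hψ (Sum.inr j)
    simp only [Sum.elim_inr, hφe, sub_zero] at h1
    exact h1.le
  have hD : 0 < ‖eval z δ‖ := norm_pos_iff.2 hδ0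
  have h5 : ∑ j, ‖eval z (a j)‖ ≤ Fintype.card ι * (ε * ‖eval z δ‖) := by
    have := Finset.sum_le_card_nsmul Finset.univ (fun j => ‖eval z (a j)‖) _ (fun j _ => hej j)
    simpa using this
  have h6 : ‖eval z δ‖ ≤ |K| * (Fintype.card ι * (ε * ‖eval z δ‖)) := by
    refine hest.trans ?_
    have h0 : 0 ≤ ∑ j, ‖eval z (a j)‖ := Finset.sum_nonneg (fun _ _ => norm_nonneg _)
    exact mul_le_mul (le_abs_self K) h5 h0 (abs_nonneg _)
  have h7 : |K| * (Fintype.card ι * ε) < 1 := by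
    have h8 : ε ≤ 1 / ((|K| + 1) * (Fintype.card ι + 1)) := min_le_right _ _
    have hN : (0 : ℝ) ≤ Fintype.card ι := by positivity
    have hKa := abs_nonneg K
    rw [le_div_iff₀ (by positivity)] at h8
    nlinarith [mul_nonneg hKa hN, mul_nonneg hε.le hKa, mul_nonneg hε.le hN]
  nlinarith

end DENS
end Bz


namespace Bz
open MvPolynomial
open scoped Pointwise

section GEN1

theorem eval_scale {σ : Type} [Fintype σ] {p : MvPolynomial σ ℂ} {D : ℕ} (hp : p.IsHomogeneous D) (c : ℂ) (Z : σ → ℂ) :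
    eval (fun i => c * Z i) p = c ^ D * eval Z p := by
  rw [eval_eq', eval_eq', Finset.mul_sum]
  apply Finset.sum_congr rfl
  intro α hα
  have h1 := hom_deg hp hα
  rw [← h1, Finsupp.degree_eq_sum, ← Finset.prod_pow_eq_pow_sum]
  simp only [mul_pow, Finset.prod_mul_distrib]
  ring

variable {n : ℕ}

/-- dehomogenization with respect to variable `i` -/
noncomputable def deh (i : Fin (n + 1)) : MvPolynomial (Fin (n + 1)) ℂ →ₐ[ℂ] MvPolynomial (Fin n) ℂ :=
  aeval (Fin.insertNth (α := fun _ => MvPolynomial (Fin n) ℂ) i 1 X)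

theorem deh_X_self (i : Fin (n + 1)) : deh i (X i) = 1 := by simp [deh]

theorem eval_deh (i : Fin (n + 1)) (z : Fin n → ℂ) (p : MvPolynomial (Fin (n + 1)) ℂ) :
    eval z (deh i p) = eval (Fin.insertNth (α := fun _ => ℂ) i 1 z) p := by
  have : ((aeval z : MvPolynomial (Fin n) ℂ →ₐ[ℂ] ℂ).comp (deh i)) =
      (aeval (Fin.insertNth (α := fun _ => ℂ) i 1 z) : MvPolynomial (Fin (n + 1)) ℂ →ₐ[ℂ] ℂ) := by
    apply MvPolynomial.algHom_ext
    intro j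
    refine Fin.succAboveCases i ?_ ?_ j
    · simp [deh]
    · intro j; simp [deh]
  have h := congrArg (fun f => f p) this
  simpa [aeval_eq_eval] using h

theorem deh_surj (i : Fin (n + 1)) : Function.Surjective (deh i) := by
  intro p
  refine ⟨rename i.succAbove p, ?_⟩
  rw [deh, aeval_rename]
  have : (Fin.insertNth (α := fun _ => MvPolynomial (Fin n) ℂ) i 1 X) ∘ i.succAbove = X := by
    ext j; simp
  rw [this]
  simp

theorem deh_inj (i : Fin (n + 1)) {p : MvPolynomial (Fin (n + 1)) ℂ} {D : ℕ} (hp : p.IsHomogeneous D) (h : deh i p = 0) : p = 0 := by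
  have h1 : X i * p = 0 := by
    apply MvPolynomial.funext
    intro Z
    rw [map_mul, eval_X, map_zero]
    by_cases hZ : Z i = 0
    · rw [hZ, zero_mul]
    · have h2 := eval_scale hp (Z i)⁻¹ Z
      have h3 : (fun j => (Z i)⁻¹ * Z j) = Fin.insertNth (α := fun _ => ℂ) i 1 (fun j => (Z i)⁻¹ * Z (i.succAbove j)) := by
        rw [Fin.eq_insertNth_iff]
        refine ⟨inv_mul_cancel₀ hZ, ?_⟩
        ext j; simp [Fin.removeNth]
      rw [h3, ← eval_deh, h, map_zero] at h2
      have h4 : (Z i)⁻¹ ^ D ≠ 0 := pow_ne_zero _ (inv_ne_zero hZ)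
      rcases mul_eq_zero.1 h2.symm with h5 | h5
      · exact absurd h5 h4
      · rw [h5, mul_zero]
  rcases mul_eq_zero.1 h1 with h2 | h2
  · exact absurd h2 (X_ne_zero i)
  · exact h2

theorem deh_mem (i : Fin (n + 1)) {𝔠 : Ideal (MvPolynomial (Fin (n + 1)) ℂ)} (hc : HI 𝔠)
    {y : MvPolynomial (Fin (n + 1)) ℂ} {e : ℕ} (hy : y.IsHomogeneous e)
    (h : deh i y ∈ 𝔠.map (deh i)) : ∃ K, X i ^ K * y ∈ 𝔠 := by
  rw [Ideal.mem_map_iff_of_surjective _ (deh_surj i)] at h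
  obtain ⟨x, hx, hxy⟩ := h
  let D := max e x.totalDegree
  let x' := ∑ j ∈ Finset.range (x.totalDegree + 1), X i ^ (D - j) * homogeneousComponent j x
  have hx' : x' ∈ 𝔠 := Ideal.sum_mem _ (fun j _ => Ideal.mul_mem_left _ _ (hc x hx j))
  have hh : x'.IsHomogeneous D := by
    apply IsHomogeneous.sum
    intro j hj
    have h1 : j ≤ D := (Nat.lt_succ_iff.1 (Finset.mem_range.1 hj)).trans (le_max_right _ _)
    have := ((isHomogeneous_X ℂ i).pow (D - j)).mul (homogeneousComponent_isHomogeneous j x)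
    rwa [one_mul, Nat.sub_add_cancel h1] at this
  have hh2 : (X i ^ (D - e) * y).IsHomogeneous D := by
    have := ((isHomogeneous_X ℂ i).pow (D - e)).mul hy
    rwa [one_mul, Nat.sub_add_cancel (le_max_left _ _)] at this
  refine ⟨D - e, ?_⟩
  have : X i ^ (D - e) * y - x' = 0 := by
    apply deh_inj i (hh2.sub hh)
    rw [map_sub, map_mul, map_pow, deh_X_self, one_pow, one_mul, ← hxy]
    simp only [x', map_sum, map_mul, map_pow, deh_X_self, one_pow, one_mul]
    rw [← map_sum, sum_homogeneousComponent, sub_self]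
  rw [sub_eq_zero] at this
  rwa [this]

theorem adj_pow {A K : Type} [CommRing A] [Field K] [Algebra A K] {κ : Type} (a : κ → A) (δ : A)
    (hδ : algebraMap A K δ ≠ 0) (J : Ideal A) (ha : ∀ k, a k ∈ J) (hδJ : δ ∈ J) {b : K}
    (hb : b ∈ Algebra.adjoin A (Set.range (fun k => algebraMap A K (a k) / algebraMap A K δ))) :
    ∃ N, ∀ N', N ≤ N' → ∃ β ∈ J ^ N', b * algebraMap A K δ ^ N' = algebraMap A K β := by
  induction hb using Algebra.adjoin_induction with
  | mem x hx =>
    obtain ⟨k, rfl⟩ := hx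
    refine ⟨1, fun N' hN' => ?_⟩
    obtain ⟨N, rfl⟩ := Nat.exists_eq_add_of_le' hN'
    refine ⟨δ ^ N * a k, ?_, ?_⟩
    · rw [pow_succ]; exact Ideal.mul_mem_mul (Ideal.pow_mem_pow hδJ _) (ha k)
    · simp only [map_mul, map_pow]; field_simp; ring
  | algebraMap r =>
    refine ⟨0, fun N' _ => ⟨r * δ ^ N', Ideal.mul_mem_left _ _ (Ideal.pow_mem_pow hδJ _), by simp⟩⟩
  | add x y _ _ hx hy =>
    obtain ⟨N1, h1⟩ := hx
    obtain ⟨N2, h2⟩ := hy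
    refine ⟨max N1 N2, fun N' hN => ?_⟩
    obtain ⟨b1, hb1, e1⟩ := h1 N' ((le_max_left _ _).trans hN)
    obtain ⟨b2, hb2, e2⟩ := h2 N' ((le_max_right _ _).trans hN)
    exact ⟨b1 + b2, Ideal.add_mem _ hb1 hb2, by rw [add_mul, e1, e2, map_add]⟩
  | mul x y _ _ hx hy =>
    obtain ⟨N1, h1⟩ := hx
    obtain ⟨N2, h2⟩ := hy
    refine ⟨N1 + N2, fun N' hN => ?_⟩
    obtain ⟨b1, hb1, e1⟩ := h1 N1 le_rfl
    obtain ⟨b2, hb2, e2⟩ := h2 (N' - N1) (by omega)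
    have hN' : N' = N1 + (N' - N1) := by omega
    refine ⟨b1 * b2, ?_, ?_⟩
    · rw [hN', pow_add]; exact Ideal.mul_mem_mul hb1 hb2
    · rw [map_mul, ← e1, ← e2]; conv_lhs => rw [hN', pow_add]
      ring

theorem chart_pow {A K : Type} [CommRing A] [Field K] [Algebra A K] (hinj : Function.Injective (algebraMap A K))
    {κ : Type} {r : ℕ} (a : κ → A) (δ : A)
    (hδ : algebraMap A K δ ≠ 0) (J : Ideal A) (ha : ∀ k, a k ∈ J) (hδJ : δ ∈ J) (g : A) (gl : Fin r → A)
    (e : Fin r → Algebra.adjoin A (Set.range (fun k => algebraMap A K (a k) / algebraMap A K δ)))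
    (he : ∀ l, e l * algebraMap A _ δ = algebraMap A _ (gl l))
    (h : Ideal.span {algebraMap A _ g} ⊔ Ideal.span (Set.range e) = ⊤) :
    ∃ N, ∀ N', N ≤ N' → δ ^ (N' + 1) ∈ Ideal.span {g} * J ^ (N' + 1) ⊔ Ideal.span (Set.range gl) * J ^ N' := by
  have h1 := (Ideal.eq_top_iff_one _).1 h
  rw [Submodule.mem_sup] at h1
  obtain ⟨x, hx, y, hy, hxy⟩ := h1
  rw [Ideal.mem_span_singleton'] at hx
  obtain ⟨b0, rfl⟩ := hx
  rw [Ideal.mem_span_range_iff_exists_fun] at hy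
  obtain ⟨b, rfl⟩ := hy
  obtain ⟨N0, hN0⟩ := adj_pow a δ hδ J ha hδJ b0.2
  choose Nl hNl using fun l => adj_pow a δ hδ J ha hδJ (b l).2
  refine ⟨N0 + ∑ l, Nl l, fun N' hN' => ?_⟩
  obtain ⟨β0, hβ0, e0⟩ := hN0 (N' + 1) (by omega)
  choose β hβ eβ using fun l => hNl l N' (by
    have := Finset.single_le_sum (f := Nl) (fun _ _ => Nat.zero_le _) (Finset.mem_univ l)
    omega)
  have key : δ ^ (N' + 1) = g * β0 + ∑ l, gl l * β l := by
    apply hinj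
    have hK := congrArg Subtype.val hxy
    have he' : ∀ l, (e l : K) * algebraMap A K δ = algebraMap A K (gl l) := fun l => congrArg Subtype.val (he l)
    have hK' : (b0 : K) * algebraMap A K g + ∑ l, (b l : K) * (e l : K) = 1 := by
      simpa using hK
    rw [map_add, map_mul, ← e0, map_sum, map_pow]
    simp only [map_mul, ← eβ, ← he']
    calc algebraMap A K δ ^ (N' + 1) = ((b0 : K) * algebraMap A K g + ∑ l, (b l : K) * (e l : K)) * algebraMap A K δ ^ (N' + 1) := by rw [hK', one_mul]
      _ = _ := by
        rw [add_mul, Finset.sum_mul]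
        congr 1
        · ring
        · apply Finset.sum_congr rfl; intro l _; ring
  rw [key]
  refine Ideal.add_mem _ (Ideal.mem_sup_left (Ideal.mul_mem_mul (Ideal.mem_span_singleton_self g) hβ0)) ?_
  refine Ideal.sum_mem _ (fun l _ => Ideal.mem_sup_right (Ideal.mul_mem_mul (Ideal.subset_span ⟨l, rfl⟩) (hβ l)))

theorem det_trick {S : Type} [CommRing S] {s : ℕ} (w : Fin s → S) (𝔟 : Ideal S) (x g : S)
    (h : ∀ a, x * w a ∈ Ideal.span {g} * Ideal.span (Set.range w) ⊔ 𝔟) :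
    ∃ u, ∀ y ∈ Ideal.span (Set.range w), (x ^ s + g * u) * y ∈ 𝔟 := by
  have h1 : ∀ a, ∃ c : Fin s → S, x * w a - g * ∑ b, c b * w b ∈ 𝔟 := by
    intro a
    obtain ⟨y, hy, z, hz, hyz⟩ := Submodule.mem_sup.1 (h a)
    rw [Ideal.mem_span_singleton_mul] at hy
    obtain ⟨t, ht, rfl⟩ := hy
    rw [Ideal.mem_span_range_iff_exists_fun] at ht
    obtain ⟨c, rfl⟩ := ht
    exact ⟨c, by rw [← hyz]; simpa using hz⟩
  choose c hc using h1
  let Mx : Matrix (Fin s) (Fin s) S := x • (1 : Matrix (Fin s) (Fin s) S) - g • Matrix.of c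
  have hM : ∀ a, (Mx.mulVec w) a ∈ 𝔟 := by
    intro a
    convert hc a using 1
    simp only [Mx, Matrix.sub_mulVec, Matrix.smul_mulVec, Matrix.one_mulVec, Pi.sub_apply, Pi.smul_apply, smul_eq_mul]
    rfl
  have hdet : ∀ a, Mx.det * w a ∈ 𝔟 := by
    intro a
    have h2 : (Mx.adjugate.mulVec (Mx.mulVec w)) a = Mx.det * w a := by
      rw [Matrix.mulVec_mulVec, Matrix.adjugate_mul, Matrix.smul_mulVec, Matrix.one_mulVec]; rfl
    rw [← h2]
    rw [Matrix.mulVec_eq_sum, Finset.sum_apply]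
    refine Ideal.sum_mem _ (fun b _ => ?_)
    rw [Pi.smul_apply]
    exact Ideal.mul_mem_left _ _ (hM b)
  have hdx : Mx.det - x ^ s ∈ Ideal.span {g} := by
    rw [← Ideal.Quotient.eq_zero_iff_mem, map_sub, RingHom.map_det]
    have hg : Ideal.Quotient.mk (Ideal.span {g}) g = 0 := Ideal.Quotient.eq_zero_iff_mem.2 (Ideal.mem_span_singleton_self g)
    have : (Ideal.Quotient.mk (Ideal.span {g})).mapMatrix Mx = (Ideal.Quotient.mk (Ideal.span {g}) x) • (1 : Matrix (Fin s) (Fin s) _) := by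
      ext a b
      by_cases hab : a = b <;> simp [Mx, hg, Matrix.one_apply, hab]
    rw [this, Matrix.det_smul]
    simp
  obtain ⟨u, hu⟩ := Ideal.mem_span_singleton'.1 hdx
  refine ⟨u, fun y hy => ?_⟩
  rw [Ideal.mem_span_range_iff_exists_fun] at hy
  obtain ⟨t, rfl⟩ := hy
  rw [Finset.mul_sum]
  refine Ideal.sum_mem _ (fun a _ => ?_)
  have : (x ^ s + g * u) * (t a * w a) = t a * (Mx.det * w a) := by
    rw [mul_comm g u, hu]; ring
  rw [this]
  exact Ideal.mul_mem_left _ _ (hdet a)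

theorem pigeon {S : Type} [CommRing S] {κ : Type} [Fintype κ] (φ : κ → S) (N T : ℕ)
    (hT : Fintype.card κ * N < T) (𝔟 : Ideal S) (x : S) (hx : ∀ j, ∀ y ∈ Ideal.span (Set.range φ) ^ (T - (N + 1)), x * (φ j ^ (N + 1) * y) ∈ 𝔟) :
    ∀ y ∈ Ideal.span (Set.range φ) ^ T, x * y ∈ 𝔟 := by
  classical
  intro y hy
  rw [Ideal.mem_span_pow_iff_exists_isHomogeneous] at hy
  obtain ⟨p, hp, rfl⟩ := hy
  rw [eval_eq', Finset.mul_sum]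
  refine Ideal.sum_mem _ (fun α hα => ?_)
  have hdeg := hom_deg hp hα
  obtain ⟨j, hj⟩ : ∃ j, N + 1 ≤ α j := by
    by_contra hcon
    push Not at hcon
    rw [Finsupp.degree_eq_sum] at hdeg
    have := Finset.sum_le_card_nsmul Finset.univ (fun j => α j) N (fun j _ => by have := hcon j; omega)
    simp only [Finset.card_univ, smul_eq_mul] at this
    omega
  have hsplit : ∏ i, φ i ^ α i = φ j ^ (N + 1) * ∏ i, φ i ^ (α - Finsupp.single j (N + 1)) i := by
    have h0 : ∀ i, φ i ^ α i = φ i ^ (Finsupp.single j (N + 1) i) * φ i ^ (α - Finsupp.single j (N + 1)) i := by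
      intro i
      rw [← pow_add]
      congr 1
      rw [Finsupp.tsub_apply]
      by_cases h : j = i
      · subst h; simp; omega
      · simp [Finsupp.single_apply, h]
    rw [Finset.prod_congr rfl (fun i _ => h0 i), Finset.prod_mul_distrib]
    congr 1
    rw [Finset.prod_eq_single j]
    · simp
    · intro b _ hb; simp [Finsupp.single_apply, Ne.symm hb]
    · simp
  rw [hsplit]
  have hmem : ∏ i, φ i ^ (α - Finsupp.single j (N + 1)) i ∈ Ideal.span (Set.range φ) ^ (T - (N + 1)) := by
    have h1 : ∑ i, (α - Finsupp.single j (N + 1)) i = T - (N + 1) := by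
      rw [Finsupp.degree_eq_sum] at hdeg
      have h2 : ∑ i, α i = ∑ i, (α - Finsupp.single j (N + 1)) i + ∑ i, (Finsupp.single j (N + 1)) i := by
        rw [← Finset.sum_add_distrib]
        apply Finset.sum_congr rfl
        intro i _
        rw [Finsupp.tsub_apply]
        by_cases h : j = i
        · subst h; simp; omega
        · simp [Finsupp.single_apply, h]
      have h3 : ∑ i, (Finsupp.single j (N + 1)) i = N + 1 := by
        simp only [Finsupp.single_apply]
        rw [Finset.sum_ite_eq]
        simp
      omega
    rw [← h1, ← Finset.prod_pow_eq_pow_sum]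
    exact Ideal.prod_mem_prod (fun i _ => Ideal.pow_mem_pow (Ideal.subset_span (Set.mem_range_self i)) _)
  have := hx j _ (Ideal.mul_mem_left _ (coeff α p) hmem)
  convert this using 1
  ring

theorem comp_mul_mem {W 𝔟 : Ideal (MvPolynomial (Fin (n + 1)) ℂ)} (hW : HI W) (hb : HI 𝔟)
    {p : MvPolynomial (Fin (n + 1)) ℂ} (h : ∀ y ∈ W, p * y ∈ 𝔟) (k : ℕ) :
    ∀ y ∈ W, homogeneousComponent k p * y ∈ 𝔟 := by
  intro y hy
  rw [← sum_homogeneousComponent y, Finset.mul_sum]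
  refine Ideal.sum_mem _ (fun j _ => ?_)
  have h1 := hb _ (h _ (hW y hy j)) (j + k)
  rw [mul_comm p, hc_mul (homogeneousComponent_isHomogeneous j y), if_pos (by omega), Nat.add_sub_cancel_left, mul_comm] at h1
  exact h1

theorem pipe (n r M dg : ℕ) {κ : Type} [Fintype κ] (φ : κ → MvPolynomial (Fin (n + 1)) ℂ) (e : κ → ℕ)
    (hφ : ∀ j, (φ j).IsHomogeneous (e j)) (j0 : κ) (hj0 : φ j0 = X 0 ^ M)
    (gl : Fin r → MvPolynomial (Fin (n + 1)) ℂ) (d : Fin r → ℕ) (hgl : ∀ l, (gl l).IsHomogeneous (d l))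
    (hglJ : ∀ l, gl l ∈ Ideal.span (Set.range φ))
    (g : MvPolynomial (Fin (n + 1)) ℂ) (hg : g.IsHomogeneous dg)
    (hstar : ∀ i j, ∃ N, ∀ N', N ≤ N' → deh i (φ j) ^ (N' + 1) ∈
      Ideal.span {deh i g} * Ideal.span (Set.range (fun k => deh i (φ k))) ^ (N' + 1) ⊔
        Ideal.span (Set.range (fun l => deh i (gl l))) * Ideal.span (Set.range (fun k => deh i (φ k))) ^ N')
    (hlast : (g = 0 ∧ r ≤ n) ∨ (1 ≤ n ∧ r = n ∧ coeff (Finsupp.single 0 dg) g = 1 ∧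
      (∑ j, d j) + dg ≤ n * M + n)) :
    (X 0 : MvPolynomial (Fin (n + 1)) ℂ) ^ (r * M) ∈ Ideal.span (Set.range gl) ⊔ Ideal.span {g} := by
  set J := Ideal.span (Set.range φ) with hJ
  set I := Ideal.span (Set.range gl) with hI
  have hIJ : I ≤ J := Ideal.span_le.2 (by rintro _ ⟨l, rfl⟩; exact hglJ l)
  have HJ : HI J := HI_span _ (by rintro _ ⟨l, rfl⟩; exact ⟨_, hφ l⟩)
  have HII : HI I := HI_span _ (by rintro _ ⟨l, rfl⟩; exact ⟨_, hgl l⟩)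
  have HG : HI (Ideal.span {g}) := HI_span _ (by rintro _ rfl; exact ⟨_, hg⟩)
  choose N0 hN0 using hstar
  let N := ∑ i, ∑ j, N0 i j
  have hN0le : ∀ i j, N0 i j ≤ N := by
    intro i j
    refine le_trans ?_ (Finset.single_le_sum (f := fun i => ∑ j, N0 i j) (fun _ _ => Nat.zero_le _) (Finset.mem_univ i))
    exact Finset.single_le_sum (f := fun j => N0 i j) (fun _ _ => Nat.zero_le _) (Finset.mem_univ j)
  have hX : ∀ i j, ∃ K, X i ^ K * φ j ^ (N + 1) ∈ Ideal.span {g} * J ^ (N + 1) ⊔ I * J ^ N := by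
    intro i j
    apply deh_mem i (HI_sup (HI_mul HG (HI_pow HJ _)) (HI_mul HII (HI_pow HJ _))) ((hφ j).pow (N + 1))
    rw [map_pow]
    have h1 := hN0 i j N (hN0le i j)
    rw [Ideal.map_sup, Ideal.map_mul, Ideal.map_mul, Ideal.map_pow, Ideal.map_pow, hJ, hI, Ideal.map_span,
      Ideal.map_span, Ideal.map_span, ← Set.range_comp, ← Set.range_comp, Set.image_singleton]
    exact h1
  choose K0 hK0 using hX
  let K := ∑ i, ∑ j, K0 i j
  have hK0le : ∀ i j, K0 i j ≤ K := by
    intro i j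
    refine le_trans ?_ (Finset.single_le_sum (f := fun i => ∑ j, K0 i j) (fun _ _ => Nat.zero_le _) (Finset.mem_univ i))
    exact Finset.single_le_sum (f := fun j => K0 i j) (fun _ _ => Nat.zero_le _) (Finset.mem_univ j)
  have hK : ∀ i j, X i ^ K * φ j ^ (N + 1) ∈ Ideal.span {g} * J ^ (N + 1) ⊔ I * J ^ N := by
    intro i j
    have h1 : K = (K - K0 i j) + K0 i j := (Nat.sub_add_cancel (hK0le i j)).symm
    have h2 : (X i : MvPolynomial (Fin (n + 1)) ℂ) ^ K = X i ^ (K - K0 i j) * X i ^ K0 i j := by rw [← pow_add, ← h1]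
    rw [h2, mul_assoc]
    exact Ideal.mul_mem_left _ _ (hK0 i j)
  let c := Fintype.card κ * N + N
  have hcT : ∀ i, ∀ y ∈ J ^ (c + 1), X i ^ K * y ∈ Ideal.span {g} * J ^ (c + 1) ⊔ I * J ^ c := by
    intro i
    apply pigeon φ N (c + 1) (by simp only [c]; omega)
    intro j y hy
    rw [← mul_assoc]
    have h1 := Ideal.mul_mem_mul (hK i j) hy
    rw [Ideal.sup_mul, mul_assoc, mul_assoc, ← pow_add, ← pow_add] at h1
    have h2 : N + 1 + (c + 1 - (N + 1)) = c + 1 := by simp only [c]; omega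
    have h3 : N + (c + 1 - (N + 1)) = c := by simp only [c]; omega
    rw [h2, h3] at h1
    exact h1
  obtain ⟨s, w, hw⟩ := Submodule.fg_iff_exists_fin_generating_family.1 (IsNoetherian.noetherian (J ^ (c + 1)))
  have hw' : Ideal.span (Set.range w) = J ^ (c + 1) := hw
  have hu0 : ∀ i, ∃ u, ∀ y ∈ J ^ (c + 1), ((X i ^ K) ^ s + g * u) * y ∈ I * J ^ c := by
    intro i
    obtain ⟨u, hu⟩ := det_trick w (I * J ^ c) (X i ^ K) g (fun a => by
      rw [hw']
      apply hcT
      rw [← hw']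
      exact Ideal.subset_span ⟨a, rfl⟩)
    rw [hw'] at hu
    exact ⟨u, hu⟩
  choose u0 hu0 using hu0
  let k := K * s + 1
  let p : Fin (n + 1) → MvPolynomial (Fin (n + 1)) ℂ := fun i => homogeneousComponent k (X i ^ k + g * (X i * u0 i))
  let u : Fin (n + 1) → MvPolynomial (Fin (n + 1)) ℂ := fun i => if dg ≤ k then homogeneousComponent (k - dg) (X i * u0 i) else 0
  have hpu : ∀ i, p i = X i ^ k + g * u i := by
    intro i
    simp only [p, u, map_add]
    rw [hc_mul hg]
    congr 1
    · have h1 : (X i ^ k : MvPolynomial (Fin (n + 1)) ℂ).IsHomogeneous k := by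
        simpa using (isHomogeneous_X ℂ i).pow k
      rw [homogeneousComponent_of_mem h1, if_pos rfl]
    · split_ifs <;> simp
  have hpm : ∀ i, ∀ y ∈ J ^ (c + 1), p i * y ∈ I * J ^ c := by
    intro i
    apply comp_mul_mem (HI_pow HJ _) (HI_mul HII (HI_pow HJ _))
    intro y hy
    have h1 := Ideal.mul_mem_left _ (X i) (hu0 i y hy)
    convert h1 using 1
    simp only [k]
    ring
  obtain ⟨A0, v0, hv0⟩ := Submodule.fg_iff_exists_fin_generating_family.1 (IsNoetherian.noetherian (J ^ c))
  have hv0' : Ideal.span (Set.range v0) = J ^ c := hv0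
  have hτ : (X 0 ^ M : MvPolynomial (Fin (n + 1)) ℂ) ∈ J := by
    rw [← hj0]; exact Ideal.subset_span ⟨j0, rfl⟩
  let v : Fin (A0 + 1) → MvPolynomial (Fin (n + 1)) ℂ := Fin.cons (X 0 ^ (M * c)) v0
  have hv : Ideal.span (Set.range v) = J ^ c := by
    simp only [v]
    rw [Fin.range_cons, Ideal.span_insert, hv0', sup_eq_right, Ideal.span_singleton_le_iff_mem, pow_mul]
    exact Ideal.pow_mem_pow hτ _
  have hcc : ∀ i a, ∃ cc : Fin r → Fin (A0 + 1) → MvPolynomial (Fin (n + 1)) ℂ,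
      p i * X 0 ^ M * v a = ∑ j, ∑ b, gl j * cc j b * v b := by
    intro i a
    have h1 : p i * (X 0 ^ M * v a) ∈ I * J ^ c := by
      apply hpm
      rw [pow_succ']
      refine Ideal.mul_mem_mul hτ ?_
      rw [← hv]; exact Ideal.subset_span ⟨a, rfl⟩
    rw [← hv, hI, Ideal.span_mul_span'] at h1
    have h2 : Set.range gl * Set.range v = Set.range (fun x : Fin r × Fin (A0 + 1) => gl x.1 * v x.2) := by
      ext x
      simp [Set.mem_mul]
    rw [h2, Ideal.mem_span_range_iff_exists_fun] at h1
    obtain ⟨cc, hcc⟩ := h1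
    refine ⟨fun j b => cc (j, b), ?_⟩
    rw [mul_assoc, ← hcc, Fintype.sum_prod_type]
    apply Finset.sum_congr rfl; intro j _
    apply Finset.sum_congr rfl; intro b _
    ring
  choose cc hcc using hcc
  exact over_C n r (A0 + 1) M c k dg d gl g p u v cc
    ⟨by simp only [k]; omega, hgl, hg, hpu, fun i => homogeneousComponent_isHomogeneous _ _, ⟨0, by simp [v]⟩, hcc, hlast⟩

end GEN1
end Bz


namespace Bz
open MvPolynomial

section GEN2

theorem dim_le {n : ℕ} {B : Type} [CommRing B] [IsDomain B] [Algebra ℂ B] [Algebra.FiniteType ℂ B]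
    (ι : B →ₐ[ℂ] FractionRing (MvPolynomial (Fin n) ℂ)) (hι : Function.Injective ι) : ringKrullDim B ≤ n := by
  obtain ⟨s, g, hg, hgi⟩ := exists_integral_inj_algHom_of_fg ℂ B
  have hs : s ≤ n := by
    have h1 : Algebra.trdeg ℂ (MvPolynomial (Fin s) ℂ) ≤ Algebra.trdeg ℂ (FractionRing (MvPolynomial (Fin n) ℂ)) :=
      trdeg_le_of_injective (ι.comp g) (hι.comp hg)
    have h2 := trdeg_add_eq ℂ (MvPolynomial (Fin n) ℂ) (A := FractionRing (MvPolynomial (Fin n) ℂ))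
    have h3 : Algebra.trdeg (MvPolynomial (Fin n) ℂ) (FractionRing (MvPolynomial (Fin n) ℂ)) = 0 := by
      haveI : Algebra.IsAlgebraic (MvPolynomial (Fin n) ℂ) (FractionRing (MvPolynomial (Fin n) ℂ)) := IsLocalization.isAlgebraic _ (nonZeroDivisors (MvPolynomial (Fin n) ℂ))
      exact trdeg_eq_zero
    rw [h3, add_zero] at h2
    rw [← h2] at h1
    simpa using h1
  letI : Algebra (MvPolynomial (Fin s) ℂ) B := g.toRingHom.toAlgebra
  haveI : Algebra.IsIntegral (MvPolynomial (Fin s) ℂ) B := ⟨hgi⟩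
  have h1 : ringKrullDim B ≤ ringKrullDim (MvPolynomial (Fin s) ℂ) := by
    refine Order.krullDim_le_of_strictMono (fun P => ⟨P.asIdeal.comap (algebraMap _ B), inferInstance⟩) ?_
    intro P Q hPQ
    change P.asIdeal.comap (algebraMap _ B) < Q.asIdeal.comap (algebraMap _ B)
    have hlt : P.asIdeal < Q.asIdeal := hPQ
    obtain ⟨x, hxQ, hxP⟩ := Set.exists_of_ssubset (SetLike.coe_ssubset_coe.2 hlt)
    exact Ideal.comap_lt_comap_of_integral_mem_sdiff hlt.le ⟨hxQ, hxP⟩ (Algebra.IsIntegral.isIntegral x)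
  rw [MvPolynomial.ringKrullDim_of_isNoetherianRing, ringKrullDim_eq_zero_of_field, zero_add] at h1
  refine h1.trans ?_
  simp
  exact_mod_cast hs

theorem gensel (n : ℕ) {Γ : Type} [Finite Γ] (B : Γ → Type) [∀ γ, CommRing (B γ)] [∀ γ, IsDomain (B γ)]
    [∀ γ, Algebra ℂ (B γ)] [∀ γ, IsNoetherianRing (B γ)] (hdim : ∀ γ, ringKrullDim (B γ) ≤ n)
    (g : ∀ γ, B γ) (hg : ∀ γ, g γ ≠ 0) {V : Type} [AddCommGroup V] [Module ℂ V]
    (Λ : ℕ → ∀ γ, V →ₗ[ℂ] B γ) (lam : ℕ → V →ₗ[ℂ] ℂ) (hlam : ∀ l < n, lam l ≠ 0)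
    (hstep : ∀ l < n, ∀ t : ℕ → V, (∀ l' < l, lam l' (t l') ≠ 0) → ∀ γ, ∀ P : Ideal (B γ), P.IsPrime →
      (∀ l' < l, Λ l' γ (t l') ∈ P) → ∃ t', Λ l γ t' ∉ P) :
    ∃ t : ℕ → V, (∀ l < n, lam l (t l) ≠ 0) ∧
      ∀ γ, Ideal.span {g γ} ⊔ Ideal.span (Set.range (fun l : Fin n => Λ l γ (t l))) = ⊤ := by
  have main : ∀ k ≤ n, ∃ t : ℕ → V, (∀ l < k, lam l (t l) ≠ 0) ∧
      ∀ γ, ∀ P : Ideal (B γ), P.IsPrime → g γ ∈ P → (∀ l < k, Λ l γ (t l) ∈ P) → ((k + 1 : ℕ) : ℕ∞) ≤ P.height := by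
    intro k
    induction k with
    | zero =>
      intro _
      refine ⟨fun _ => 0, by simp, fun γ P hP hgP _ => ?_⟩
      have h1 : (⊥ : Ideal (B γ)) < P := by
        rw [bot_lt_iff_ne_bot]
        rintro rfl
        exact hg γ (by simpa using hgP)
      have := Ideal.height_add_one_le_of_lt_of_isPrime h1
      rw [Ideal.height_bot] at this
      simpa using this
    | succ k ih =>
      intro hk
      obtain ⟨t, ht1, ht2⟩ := ih (by omega)
      let I : ∀ γ, Ideal (B γ) := fun γ => Ideal.span {g γ} ⊔ Ideal.span ((fun l => Λ l γ (t l)) '' {l | l < k})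
      have hIm : ∀ γ (P : Ideal (B γ)), I γ ≤ P ↔ g γ ∈ P ∧ ∀ l < k, Λ l γ (t l) ∈ P := by
        intro γ P
        simp only [I, sup_le_iff, Ideal.span_singleton_le_iff_mem, Ideal.span_le, Set.image_subset_iff]
        rw [Set.singleton_subset_iff]
        exact Iff.rfl
      have hfin : ∀ γ, Finite ((I γ).minimalPrimes) := fun γ => (Ideal.finite_minimalPrimes_of_isNoetherianRing (B γ) (I γ)).to_subtype
      let W : Option (Σ γ, (I γ).minimalPrimes) → Subspace ℂ V := fun o => match o with
        | none => LinearMap.ker (lam k)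
        | some x => Submodule.comap (Λ k x.1) (Submodule.restrictScalars ℂ (x.2 : Ideal (B x.1)))
      have hW : ∀ o, W o ≠ ⊤ := by
        rintro (_ | ⟨γ, P⟩) h
        · exact hlam k (by omega) (LinearMap.ker_eq_top.1 h)
        · have hP : (P : Ideal (B γ)).IsPrime := P.2.1.1
          obtain ⟨t', ht'⟩ := hstep k (by omega) t ht1 γ P hP ((hIm γ P).1 P.2.1.2).2
          have : t' ∈ W (some ⟨γ, P⟩) := by rw [h]; trivial
          exact ht' this
      obtain ⟨v, hv⟩ : ∃ v, ∀ o, v ∉ W o := by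
        by_contra hcon
        push Not at hcon
        obtain ⟨o, ho⟩ := Subspace.exists_eq_top_of_iUnion_eq_univ (p := W) (by
          ext v; simpa using hcon v)
        exact hW o ho
      refine ⟨Function.update t k v, ?_, ?_⟩
      · intro l hl
        by_cases h : l = k
        · subst h
          rw [Function.update_self]
          exact hv none
        · rw [Function.update_of_ne h]
          exact ht1 l (by omega)
      · intro γ P hP hgP hl
        have h1 : I γ ≤ P := by
          rw [hIm]
          refine ⟨hgP, fun l hlk => ?_⟩
          have := hl l (by omega)
          rwa [Function.update_of_ne (by omega)] at this
        obtain ⟨Q, hQ, hQP⟩ := Ideal.exists_minimalPrimes_le h1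
        have hQp : Q.IsPrime := hQ.1.1
        have h2 := ht2 γ Q hQp ((hIm γ Q).1 hQ.1.2).1 ((hIm γ Q).1 hQ.1.2).2
        have h3 : Λ k γ v ∈ P := by
          have := hl k (by omega)
          rwa [Function.update_self] at this
        have h4 : Λ k γ v ∉ Q := fun h => hv (some ⟨γ, Q, hQ⟩) h
        have h5 : Q < P := lt_of_le_of_ne hQP (by rintro rfl; exact h4 h3)
        have h6 := Ideal.height_add_one_le_of_lt_of_isPrime h5
        refine le_trans ?_ h6
        push_cast at h2 ⊢
        gcongr
  obtain ⟨t, ht1, ht2⟩ := main n le_rfl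
  refine ⟨t, ht1, fun γ => ?_⟩
  by_contra hne
  obtain ⟨P, hP, hle⟩ := Ideal.exists_le_maximal _ hne
  have hPp := hP.isPrime
  have h1 := ht2 γ P hPp (hle (Ideal.mem_sup_left (Ideal.mem_span_singleton_self _)))
    (fun l hl => hle (Ideal.mem_sup_right (Ideal.subset_span ⟨⟨l, hl⟩, rfl⟩)))
  have h2 := (Ideal.height_le_ringKrullDim_of_isPrime (I := P)).trans (hdim γ)
  have h3 : ((n + 1 : ℕ) : ℕ∞) ≤ (n : ℕ∞) := by
    refine h1.trans ?_
    exact_mod_cast h2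
  have h4 : n + 1 ≤ n := by exact_mod_cast h3
  omega

variable {n : ℕ} {κ : Type}

/-- the chart algebra -/
noncomputable abbrev Bch (φ : κ → MvPolynomial (Fin (n + 1)) ℂ) (i : Fin (n + 1)) (j : κ) :
    Subalgebra (MvPolynomial (Fin n) ℂ) (FractionRing (MvPolynomial (Fin n) ℂ)) :=
  Algebra.adjoin (MvPolynomial (Fin n) ℂ) (Set.range (fun k =>
    algebraMap (MvPolynomial (Fin n) ℂ) (FractionRing (MvPolynomial (Fin n) ℂ)) (deh i (φ k)) /
      algebraMap (MvPolynomial (Fin n) ℂ) (FractionRing (MvPolynomial (Fin n) ℂ)) (deh i (φ j))))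

noncomputable def frc (φ : κ → MvPolynomial (Fin (n + 1)) ℂ) (i : Fin (n + 1)) (j k : κ) : Bch φ i j :=
  ⟨_, Algebra.subset_adjoin ⟨k, rfl⟩⟩

instance (φ : κ → MvPolynomial (Fin (n + 1)) ℂ) (i : Fin (n + 1)) (j : κ) : IsScalarTower ℂ (MvPolynomial (Fin n) ℂ) (Bch φ i j) := inferInstance

instance [Finite κ] (φ : κ → MvPolynomial (Fin (n + 1)) ℂ) (i : Fin (n + 1)) (j : κ) : Algebra.FiniteType ℂ (Bch φ i j) := by
  have h1 : Algebra.FiniteType (MvPolynomial (Fin n) ℂ) (Bch φ i j) := by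
    rw [← Subalgebra.fg_iff_finiteType]
    exact ⟨(Set.finite_range _).toFinset, by rw [Set.Finite.coe_toFinset]⟩
  exact Algebra.FiniteType.trans (S := MvPolynomial (Fin n) ℂ) inferInstance h1

instance [Finite κ] (φ : κ → MvPolynomial (Fin (n + 1)) ℂ) (i : Fin (n + 1)) (j : κ) : IsNoetherianRing (Bch φ i j) :=
  Algebra.FiniteType.isNoetherianRing ℂ _

theorem Bch_dim [Finite κ] (φ : κ → MvPolynomial (Fin (n + 1)) ℂ) (i : Fin (n + 1)) (j : κ) : ringKrullDim (Bch φ i j) ≤ n :=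
  dim_le ((Bch φ i j).val.restrictScalars ℂ) Subtype.val_injective

theorem Bch_inj (φ : κ → MvPolynomial (Fin (n + 1)) ℂ) (i : Fin (n + 1)) (j : κ) :
    Function.Injective (algebraMap (MvPolynomial (Fin n) ℂ) (Bch φ i j)) := by
  intro x y h
  exact IsFractionRing.injective (MvPolynomial (Fin n) ℂ) (FractionRing (MvPolynomial (Fin n) ℂ)) (congrArg Subtype.val h)

theorem frc_mul (φ : κ → MvPolynomial (Fin (n + 1)) ℂ) (i : Fin (n + 1)) (j k : κ) (h : deh i (φ j) ≠ 0) :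
    frc φ i j k * algebraMap _ (Bch φ i j) (deh i (φ j)) = algebraMap _ (Bch φ i j) (deh i (φ k)) := by
  apply Subtype.ext
  change _ / _ * _ = _
  have : algebraMap (MvPolynomial (Fin n) ℂ) (FractionRing (MvPolynomial (Fin n) ℂ)) (deh i (φ j)) ≠ 0 := by
    rwa [Ne, map_eq_zero_iff _ (IsFractionRing.injective _ _)]
  exact div_mul_cancel₀ _ this

theorem deh_ne (i : Fin (n + 1)) {p : MvPolynomial (Fin (n + 1)) ℂ} {D : ℕ} (hp : p.IsHomogeneous D) (h : p ≠ 0) :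
    deh i p ≠ 0 := fun h0 => h (deh_inj i hp h0)

theorem frc_self (φ : κ → MvPolynomial (Fin (n + 1)) ℂ) (i : Fin (n + 1)) (j : κ) (h : deh i (φ j) ≠ 0) :
    frc φ i j j = 1 := by
  have h1 := frc_mul φ i j j h
  have h2 : algebraMap _ (Bch φ i j) (deh i (φ j)) ≠ 0 := by
    rwa [Ne, map_eq_zero_iff _ (Bch_inj φ i j)]
  exact mul_right_cancel₀ h2 (by rw [h1, one_mul])

/-- family with the power of the hyperplane at infinity adjoined -/
noncomputable def ph {m : ℕ} (M : ℕ) (f : Fin m → MvPolynomial (Fin (n + 1)) ℂ) : Option (Fin m) → MvPolynomial (Fin (n + 1)) ℂ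
  | none => X 0 ^ M
  | some j => f j

def Hest {m : ℕ} (M : ℕ) (f : Fin m → MvPolynomial (Fin (n + 1)) ℂ) : Prop :=
  ∀ (i : Fin (n + 1)) (R : ℝ), ∃ K : ℝ, ∀ z : Fin n → ℂ, (∀ k, ‖z k‖ ≤ R) → eval z (deh i (X 0)) ≠ 0 →
    ‖eval z (deh i (X 0 ^ M))‖ ≤ K * ∑ j, ‖eval z (deh i (f j))‖

theorem ph_hom {m : ℕ} (M : ℕ) (f : Fin m → MvPolynomial (Fin (n + 1)) ℂ) (d : Fin m → ℕ)
    (hf : ∀ j, (f j).IsHomogeneous (d j)) (o : Option (Fin m)) : (ph M f o).IsHomogeneous (o.elim M d) := by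
  cases o with
  | none => simpa [ph] using (isHomogeneous_X ℂ (0 : Fin (n+1))).pow M
  | some j => exact hf j

theorem chart_top {m : ℕ} (M : ℕ) (f : Fin m → MvPolynomial (Fin (n + 1)) ℂ) (d : Fin m → ℕ)
    (hf : ∀ j, (f j).IsHomogeneous (d j)) (H : Hest M f) (i : Fin (n + 1)) (j : Option (Fin m)) (hj : ph M f j ≠ 0) :
    Ideal.span (Set.range (fun k : Fin m => frc (ph M f) i j (some k))) = ⊤ := by
  have hd := deh_ne i (ph_hom M f d hf j) hj
  cases j with
  | none =>
    exact P1top (Bch_inj (ph M f) i none) (fun k : Fin m => deh i (f k)) (deh i (X 0 ^ M)) (deh i (X 0)) hd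
      (deh_ne i (isHomogeneous_X ℂ (0 : Fin (n+1))) (X_ne_zero _)) (H i) _
      (fun k => frc_mul (ph M f) i none (some k) hd)
  | some j =>
    rw [Ideal.eq_top_iff_one, ← frc_self (ph M f) i (some j) hd]
    exact Ideal.subset_span ⟨j, rfl⟩

theorem star_of {m r : ℕ} (M : ℕ) (f : Fin m → MvPolynomial (Fin (n + 1)) ℂ) (d : Fin m → ℕ)
    (hf : ∀ j, (f j).IsHomogeneous (d j)) (g : MvPolynomial (Fin (n + 1)) ℂ) (gl : Fin r → MvPolynomial (Fin (n + 1)) ℂ)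
    (i : Fin (n + 1)) (j : Option (Fin m))
    (h : ph M f j ≠ 0 → ∃ e : Fin r → Bch (ph M f) i j, 
      (∀ l, e l * algebraMap _ (Bch (ph M f) i j) (deh i (ph M f j)) = algebraMap _ (Bch (ph M f) i j) (deh i (gl l))) ∧
      Ideal.span {algebraMap _ (Bch (ph M f) i j) (deh i g)} ⊔ Ideal.span (Set.range e) = ⊤) :
    ∃ N, ∀ N', N ≤ N' → deh i (ph M f j)^(N'+1) ∈ Ideal.span {deh i g} * Ideal.span (Set.range (fun k => deh i (ph M f k)))^(N'+1) ⊔ Ideal.span (Set.range (fun l => deh i (gl l))) * Ideal.span (Set.range (fun k => deh i (ph M f k)))^N' := by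
  by_cases hj : ph M f j = 0
  · refine ⟨0, fun N' _ => ?_⟩
    rw [hj, map_zero, zero_pow (by omega)]
    exact zero_mem _
  · obtain ⟨e, he, ht⟩ := h hj
    have hd := deh_ne i (ph_hom M f d hf j) hj
    refine chart_pow (K := FractionRing (MvPolynomial (Fin n) ℂ)) (IsFractionRing.injective _ _) (fun k => deh i (ph M f k)) (deh i (ph M f j)) ?_ (Ideal.span (Set.range (fun k => deh i (ph M f k))))
      (fun k => Ideal.subset_span ⟨k, rfl⟩) (Ideal.subset_span ⟨j, rfl⟩) (deh i g) (fun l => deh i (gl l)) e he ht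
    rwa [Ne, map_eq_zero_iff _ (IsFractionRing.injective _ _)]

theorem caseA {m : ℕ} (M : ℕ) (f : Fin m → MvPolynomial (Fin (n + 1)) ℂ) (d : Fin m → ℕ)
    (hf : ∀ j, (f j).IsHomogeneous (d j)) (H : Hest M f) (hmn : m ≤ n) :
    (X 0 : MvPolynomial (Fin (n + 1)) ℂ)^(m*M) ∈ Ideal.span (Set.range f) := by
  have := pipe n m M 0 (ph M f) (fun o => o.elim M d) (ph_hom M f d hf) none rfl f d hf
    (fun l => Ideal.subset_span ⟨some l, rfl⟩) 0 (isHomogeneous_zero _ _ _) (fun i j => star_of M f d hf 0 f i j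
      (fun hj => ⟨fun k => frc (ph M f) i j (some k), fun l => frc_mul (ph M f) i j (some l) (deh_ne i (ph_hom M f d hf j) hj), by
        rw [chart_top M f d hf H i j hj]; simp⟩)) (Or.inl ⟨rfl, hmn⟩)
  simpa using this

end GEN2
end Bz


namespace Bz
open MvPolynomial

section GEN3
variable {n m : ℕ}

/-- generic combination of the entries `v k i` with `l ≤ k` -/
noncomputable def lin {B : Type} [CommRing B] [Algebra ℂ B] (v : Fin m → Fin (n + 1) → B) (l : ℕ) :
    (Fin m → Fin (n + 1) → ℂ) →ₗ[ℂ] B where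
  toFun t := ∑ k : Fin m, ∑ i : Fin (n + 1), (if l ≤ (k : ℕ) then t k i else 0) • v k i
  map_add' s t := by
    simp only [← Finset.sum_add_distrib, ← add_smul]
    refine Finset.sum_congr rfl fun k _ => Finset.sum_congr rfl fun i _ => ?_
    split_ifs <;> simp
  map_smul' c t := by
    simp only [RingHom.id_apply, Finset.smul_sum, smul_smul]
    refine Finset.sum_congr rfl fun k _ => Finset.sum_congr rfl fun i _ => ?_
    split_ifs <;> simp

theorem lin_apply {B : Type} [CommRing B] [Algebra ℂ B] (v : Fin m → Fin (n + 1) → B) (l : ℕ) (t) :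
    lin v l t = ∑ k : Fin m, ∑ i : Fin (n + 1), (if l ≤ (k : ℕ) then t k i else 0) • v k i := rfl

noncomputable def lamm (n m : ℕ) (l : ℕ) : (Fin m → Fin (n + 1) → ℂ) →ₗ[ℂ] ℂ where
  toFun t := ∑ k : Fin m, ∑ i : Fin (n + 1), (if l = (k : ℕ) then t k i else 0)
  map_add' s t := by
    simp only [← Finset.sum_add_distrib]
    refine Finset.sum_congr rfl fun k _ => Finset.sum_congr rfl fun i _ => ?_
    split_ifs <;> simp
  map_smul' c t := by
    simp only [RingHom.id_apply, Finset.smul_sum]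
    refine Finset.sum_congr rfl fun k _ => Finset.sum_congr rfl fun i _ => ?_
    split_ifs <;> simp

theorem lamm_apply (l : Fin m) (t) : lamm n m l t = ∑ i, t l i := by
  change ∑ k : Fin m, ∑ i : Fin (n+1), (if (l : ℕ) = (k : ℕ) then t k i else 0) = _
  rw [Finset.sum_eq_single l]
  · simp
  · intro k _ hk
    refine Finset.sum_eq_zero fun i _ => if_neg fun h => hk (Fin.ext h.symm)
  · simp

theorem lamm_ne {l : ℕ} (h : l < m) : lamm n m l ≠ 0 := by
  intro h0
  have := lamm_apply (n := n) ⟨l, h⟩ (fun _ i => if i = 0 then 1 else 0)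
  simp only [h0] at this
  simp at this

theorem lin_single {B : Type} [CommRing B] [Algebra ℂ B] (v : Fin m → Fin (n + 1) → B) (l : ℕ) (k : Fin m) (hk : l ≤ (k : ℕ))
    (i : Fin (n + 1)) : lin v l (Pi.single k (Pi.single i 1)) = v k i := by
  rw [lin_apply, Finset.sum_eq_single k, Finset.sum_eq_single i]
  · simp [hk]
  · intro i' _ h
    simp [h]
  · simp
  · intro k' _ h
    refine Finset.sum_eq_zero fun i _ => ?_
    simp [Pi.single_eq_of_ne h]
  · simp

theorem tri {B : Type} [CommRing B] [Algebra ℂ B] (P : Ideal B) (x : Fin m → B) (y : Fin (n + 1) → B) (i0 : Fin (n + 1))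
    (hy : y i0 = 1) (d : Fin m → ℕ) (dd : ℕ → ℕ) (hdd : ∀ k : Fin m, dd k = d k) (l : ℕ) (t : ℕ → Fin m → Fin (n + 1) → ℂ)
    (ht : ∀ l' < l, lamm n m l' (t l') ≠ 0)
    (h1 : ∀ l' < l, lin (fun k i => y i ^ (dd l' - d k) * x k) l' (t l') ∈ P)
    (h2 : ∀ t', lin (fun k i => y i ^ (dd l - d k) * x k) l t' ∈ P) : ∀ k, x k ∈ P := by
  have key : ∀ s : ℕ, ∀ k : Fin m, m ≤ s + (k : ℕ) → x k ∈ P := by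
    intro s
    induction s with
    | zero => intro k hk; have := k.2; omega
    | succ s ih =>
      intro k hk
      by_cases hkl : l ≤ (k : ℕ)
      · have := h2 (Pi.single k (Pi.single i0 1))
        rw [lin_single _ _ _ hkl] at this
        simpa [hy] using this
      · push Not at hkl
        have a1 := h1 k hkl
        have a2 := ht k hkl
        rw [lamm_apply] at a2
        rw [lin_apply, ← Finset.add_sum_erase _ _ (Finset.mem_univ k)] at a1
        have a3 : ∑ k' ∈ Finset.univ.erase k, ∑ i, (if (k : ℕ) ≤ (k' : ℕ) then t k k' i else 0) • (y i ^ (dd k - d k') * x k') ∈ P := by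
          refine Ideal.sum_mem _ fun k' hk' => Ideal.sum_mem _ fun i _ => ?_
          have hne := (Finset.mem_erase.1 hk').1
          split_ifs with hle
          · have : x k' ∈ P := ih k' (by
              have : (k' : ℕ) ≠ k := fun h => hne (Fin.ext h)
              omega)
            rw [Algebra.smul_def]
            exact Ideal.mul_mem_left _ _ (Ideal.mul_mem_left _ _ this)
          · rw [zero_smul]; exact zero_mem _
        have a4 := (Ideal.add_mem_iff_left _ a3).1 a1
        simp only [le_refl, if_true, hdd, Nat.sub_self, pow_zero, one_mul, ← Finset.sum_smul] at a4
        have a5 := Ideal.mul_mem_left P (algebraMap ℂ B (∑ i, t k k i)⁻¹) a4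
        rwa [Algebra.smul_def, ← mul_assoc, ← map_mul, inv_mul_cancel₀ a2, map_one, one_mul] at a5
  exact fun k => key m k (by omega)

theorem lin_mul {B B' : Type} [CommRing B] [Algebra ℂ B] [CommRing B'] [Algebra ℂ B'] (ρ : B →ₐ[ℂ] B')
    (v : Fin m → Fin (n + 1) → B) (v' : Fin m → Fin (n + 1) → B') (δ : B') (h : ∀ k i, v' k i * δ = ρ (v k i)) (l t) :
    lin v' l t * δ = ρ (lin v l t) := by
  simp only [lin_apply, map_sum, map_smul, Finset.sum_mul, smul_mul_assoc, h]

theorem caseB (M : ℕ) (f : Fin m → MvPolynomial (Fin (n + 1)) ℂ) (d : Fin m → ℕ)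
    (hf : ∀ j, (f j).IsHomogeneous (d j)) (H : Hest M f) (hn : 1 ≤ n) (hmn : n < m)
    (hsort : ∀ i j, i ≤ j → d j ≤ d i) (hco : coeff (Finsupp.single 0 (d ⟨n, hmn⟩)) (f ⟨n, hmn⟩) = 1)
    (hdd : (∑ j : Fin n, d (Fin.castLE hmn.le j)) + d ⟨n, hmn⟩ ≤ n * M + n) :
    (X 0 : MvPolynomial (Fin (n + 1)) ℂ)^(n*M) ∈ Ideal.span (Set.range f) := by
  have hfn : f ⟨n, hmn⟩ ≠ 0 := by
    intro h
    simp [h] at hco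
  let dd : ℕ → ℕ := fun l => if h : l < m then d ⟨l, h⟩ else 0
  have hd2 : ∀ k : Fin m, dd k = d k := fun k => by simp [dd]
  let Γ := {x : Fin (n + 1) × Option (Fin m) // ph M f x.2 ≠ 0}
  let ρ : ∀ i j, MvPolynomial (Fin (n + 1)) ℂ →ₐ[ℂ] Bch (ph M f) i j := fun i j =>
    (IsScalarTower.toAlgHom ℂ (MvPolynomial (Fin n) ℂ) (Bch (ph M f) i j)).comp (deh i)
  let Λ : ℕ → ∀ γ : Γ, (Fin m → Fin (n + 1) → ℂ) →ₗ[ℂ] Bch (ph M f) γ.1.1 γ.1.2 := fun l γ =>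
    lin (fun k i => ρ γ.1.1 γ.1.2 (X i) ^ (dd l - d k) * frc (ph M f) γ.1.1 γ.1.2 (some k)) l
  obtain ⟨t, -, ht⟩ := gensel n (Γ := Γ) (fun γ => Bch (ph M f) γ.1.1 γ.1.2) (fun γ => Bch_dim _ _ _)
    (fun γ => ρ γ.1.1 γ.1.2 (f ⟨n, hmn⟩)) (fun γ => by
      change algebraMap _ (Bch (ph M f) γ.1.1 γ.1.2) (deh γ.1.1 (f ⟨n, hmn⟩)) ≠ 0
      rw [Ne, map_eq_zero_iff _ (Bch_inj (ph M f) γ.1.1 γ.1.2)]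
      exact deh_ne _ (hf _) hfn) Λ (lamm n m) (fun l hl => lamm_ne (by omega)) (by
      intro l hl t ht γ P hP h1
      by_contra hcon
      push Not at hcon
      have := tri P (fun k => frc (ph M f) γ.1.1 γ.1.2 (some k)) (fun i => ρ γ.1.1 γ.1.2 (X i)) γ.1.1
        (by change algebraMap _ (Bch (ph M f) γ.1.1 γ.1.2) (deh γ.1.1 (X γ.1.1)) = 1
            rw [deh_X_self, map_one]) d dd hd2 l t ht h1 hcon
      apply hP.ne_top
      rw [eq_top_iff, ← chart_top M f d hf H γ.1.1 γ.1.2 γ.2, Ideal.span_le]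
      rintro _ ⟨k, rfl⟩
      exact this k)
  let gl : Fin n → MvPolynomial (Fin (n + 1)) ℂ := fun l => lin (fun k i => X i ^ (dd l - d k) * f k) l (t l)
  have hgf : ∀ l, gl l ∈ Ideal.span (Set.range f) := fun l => by
    simp only [gl, lin_apply]
    refine Ideal.sum_mem _ fun k _ => Ideal.sum_mem _ fun i _ => ?_
    rw [Algebra.smul_def]
    exact Ideal.mul_mem_left _ _ (Ideal.mul_mem_left _ _ (Ideal.subset_span ⟨k, rfl⟩))
  have hfp : Ideal.span (Set.range f) ≤ Ideal.span (Set.range (ph M f)) := by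
    apply Ideal.span_mono
    rintro _ ⟨k, rfl⟩
    exact ⟨some k, rfl⟩
  have hgh : ∀ l : Fin n, (gl l).IsHomogeneous (d (Fin.castLE hmn.le l)) := fun l => by
    simp only [gl, lin_apply]
    refine IsHomogeneous.sum _ _ _ fun k _ => IsHomogeneous.sum _ _ _ fun i _ => ?_
    split_ifs with hle
    · have h1 := ((isHomogeneous_X ℂ i).pow (dd l - d k)).mul (hf k)
      have h2 : dd l = d (Fin.castLE hmn.le l) := hd2 (Fin.castLE hmn.le l)
      have h3 : d k ≤ d (Fin.castLE hmn.le l) := hsort _ _ hle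
      have h4 : 1 * (dd l - d k) + d k = d (Fin.castLE hmn.le l) := by omega
      rw [h4] at h1
      rw [smul_eq_C_mul]
      simpa using (isHomogeneous_C _ _).mul h1
    · rw [zero_smul]; exact isHomogeneous_zero _ _ _
  have := pipe n n M (d ⟨n, hmn⟩) (ph M f) (fun o => o.elim M d) (ph_hom M f d hf) none rfl gl (fun l => d (Fin.castLE hmn.le l)) hgh
    (fun l => hfp (hgf l)) (f ⟨n, hmn⟩) (hf _) (fun i j => star_of M f d hf _ gl i j
      (fun hj => ⟨fun l => Λ l ⟨(i, j), hj⟩ (t l), fun l => ?_, ht ⟨(i, j), hj⟩⟩)) (Or.inr ⟨hn, rfl, hco, hdd⟩)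
  · refine (sup_le ?_ ?_ : _ ≤ Ideal.span (Set.range f)) this
    · rw [Ideal.span_le]
      rintro _ ⟨l, rfl⟩
      exact hgf l
    · rw [Ideal.span_singleton_le_iff_mem]
      exact Ideal.subset_span ⟨_, rfl⟩
  · refine lin_mul (ρ i j) _ _ _ ?_ _ _
    intro k i'
    rw [mul_assoc, frc_mul (ph M f) i j (some k) (deh_ne i (ph_hom M f d hf j) hj), map_mul, map_pow]
    rfl

end GEN3
end Bz


namespace Bz
open MvPolynomial

section FINAL
variable {n m : ℕ}

theorem totalDegree_aeval_le_of {σ τ : Type} [Fintype σ] (v : σ → MvPolynomial τ ℂ) (hv : ∀ k, (v k).totalDegree ≤ 1)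
    (p : MvPolynomial σ ℂ) : (aeval v p).totalDegree ≤ p.totalDegree := by
  rw [aeval_def, eval₂_eq']
  refine totalDegree_finsetSum_le fun α hα => ?_
  refine (totalDegree_mul _ _).trans ?_
  have h1 : (algebraMap ℂ (MvPolynomial τ ℂ) (coeff α p)).totalDegree = 0 := totalDegree_C _
  rw [h1, zero_add]
  refine (totalDegree_finset_prod _ _).trans ?_
  refine le_trans (Finset.sum_le_sum (g := fun k => α k) fun k _ => ?_) ?_
  · refine (totalDegree_pow _ _).trans ?_
    have := Nat.mul_le_mul_left (α k) (hv k)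
    omega
  · have := le_totalDegree hα
    rwa [Finsupp.sum_fintype _ _ (fun _ => rfl)] at this

theorem totalDegree_deh_le (i : Fin (n + 1)) (p : MvPolynomial (Fin (n + 1)) ℂ) : (deh i p).totalDegree ≤ p.totalDegree := by
  refine totalDegree_aeval_le_of _ (fun k => ?_) p
  refine Fin.succAboveCases i ?_ (fun j => ?_) k
  · simp
  · simp

noncomputable def hmg (D : ℕ) (F : MvPolynomial (Fin n) ℂ) : MvPolynomial (Fin (n + 1)) ℂ :=
  ∑ α ∈ F.support, X 0 ^ (D - α.degree) * rename Fin.succ (monomial α (coeff α F))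

theorem hmg_hom (D : ℕ) (F : MvPolynomial (Fin n) ℂ) (h : F.totalDegree ≤ D) : (hmg D F).IsHomogeneous D := by
  refine IsHomogeneous.sum _ _ _ fun α hα => ?_
  have h1 : (rename Fin.succ (monomial α (coeff α F))).IsHomogeneous α.degree :=
    (isHomogeneous_monomial (coeff α F) rfl).rename_isHomogeneous
  have h2 := ((isHomogeneous_X ℂ (0 : Fin (n + 1))).pow (D - α.degree)).mul h1
  have h3 : α.degree ≤ D := (le_totalDegree hα).trans h
  have h4 : 1 * (D - α.degree) + α.degree = D := by omega
  rwa [h4] at h2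

theorem deh_hmg (D : ℕ) (F : MvPolynomial (Fin n) ℂ) : deh 0 (hmg D F) = F := by
  have h1 : ∀ p : MvPolynomial (Fin n) ℂ, deh 0 (rename Fin.succ p) = p := by
    intro p
    have : ((deh 0).comp (rename Fin.succ) : MvPolynomial (Fin n) ℂ →ₐ[ℂ] _) = AlgHom.id ℂ _ := by
      apply MvPolynomial.algHom_ext
      intro j
      simp [deh]
    exact DFunLike.congr_fun this p
  rw [hmg, map_sum]
  conv_rhs => rw [F.as_sum]
  refine Finset.sum_congr rfl fun α _ => ?_
  rw [map_mul, map_pow, deh_X_self, one_pow, one_mul, h1]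

theorem coeff_hom (p : MvPolynomial (Fin (n + 1)) ℂ) (D : ℕ) (hp : p.IsHomogeneous D) :
    coeff (Finsupp.single 0 D) p = eval 0 (deh 0 p) := by
  have key : ∀ α : Fin (n + 1) →₀ ℕ, α ∈ p.support → α ≠ Finsupp.single 0 D →
      ∏ i, (Fin.insertNth (α := fun _ => ℂ) 0 1 (0 : Fin n → ℂ)) i ^ α i = 0 := by
    intro α hα hne
    have hd := hom_deg hp hα
    by_contra hcon
    rw [← Ne, Finset.prod_ne_zero_iff] at hcon
    apply hne
    have hz : ∀ k : Fin n, α k.succ = 0 := by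
      intro k
      by_contra hk
      exact hcon k.succ (Finset.mem_univ _) (by simp [hk])
    have h0 : α 0 = D := by
      rw [← hd, Finsupp.degree_eq_sum, Fin.sum_univ_succ]
      simp [hz]
    ext i
    refine Fin.cases ?_ (fun k => ?_) i
    · simpa using h0
    · simp [hz]
  rw [eval_deh, eval_eq']
  rw [Finset.sum_eq_single (Finsupp.single 0 D)]
  · rw [Fin.prod_univ_succ]
    simp
  · intro α hα hne
    rw [key α hα hne, mul_zero]
  · intro h
    rw [notMem_support_iff.1 h, zero_mul]

theorem dehom (ρ : ℕ) (f : Fin m → MvPolynomial (Fin (n + 1)) ℂ) (d : Fin m → ℕ) (hf : ∀ j, (f j).IsHomogeneous (d j))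
    (h : (X 0 : MvPolynomial (Fin (n + 1)) ℂ) ^ ρ ∈ Ideal.span (Set.range f)) :
    ∃ Q : Fin m → MvPolynomial (Fin n) ℂ, (∑ j, deh 0 (f j) * Q j = 1) ∧ ∀ j, (deh 0 (f j) * Q j).totalDegree ≤ ρ := by
  obtain ⟨q, hq⟩ := Ideal.mem_span_range_iff_exists_fun.1 h
  have hX : (X 0 ^ ρ : MvPolynomial (Fin (n + 1)) ℂ).IsHomogeneous ρ := by
    simpa using (isHomogeneous_X ℂ (0 : Fin (n+1))).pow ρ
  let Q : Fin m → MvPolynomial (Fin (n + 1)) ℂ := fun j => if d j ≤ ρ then homogeneousComponent (ρ - d j) (q j) else 0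
  have hQ : ∀ j, f j * Q j = homogeneousComponent ρ (f j * q j) := by
    intro j
    rw [hc_mul (hf j)]
    simp only [Q]
    split_ifs <;> simp
  refine ⟨fun j => deh 0 (Q j), ?_, fun j => ?_⟩
  · simp only [← map_mul, ← map_sum, hQ]
    have : ∑ j, f j * q j = X 0 ^ ρ := by
      rw [← hq]
      exact Finset.sum_congr rfl fun j _ => mul_comm _ _
    rw [this, homogeneousComponent_of_mem ((mem_homogeneousSubmodule _ _).2 hX), if_pos rfl, map_pow, deh_X_self, one_pow]
  · rw [← map_mul, hQ]
    exact (totalDegree_deh_le _ _).trans (homogeneousComponent_isHomogeneous _ _).totalDegree_le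

/-- The estimate in a form without real powers. -/
def Loj (M : ℕ) (F : Fin m → MvPolynomial (Fin n) ℂ) (d : Fin m → ℕ) : Prop :=
  ∃ c : ℝ, 0 < c ∧ ∀ z : Fin n → ℂ,
    c ≤ (1 + ∑ k, ‖z k‖ ^ 2) ^ M * ∑ j, ‖eval z (F j)‖ ^ 2 / (1 + ∑ k, ‖z k‖ ^ 2) ^ (d j)

theorem hest_of (M : ℕ) (F : Fin m → MvPolynomial (Fin n) ℂ) (d : Fin m → ℕ) (hd : ∀ j, (F j).totalDegree ≤ d j)
    (h : Loj M F d) : Hest M (fun j => hmg (d j) (F j)) := by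
  obtain ⟨c, hc, h⟩ := h
  intro i R
  let R' := max R 1
  let T : ℝ := (n + 1) * R' ^ 2
  have hT : 0 ≤ T := by positivity
  refine ⟨Real.sqrt (T ^ M / c), fun z hz h0 => ?_⟩
  simp only [eval_deh, map_pow, eval_X] at h0 ⊢
  set Z : Fin (n + 1) → ℂ := Fin.insertNth (α := fun _ => ℂ) i 1 z with hZ
  have hZi : Z i = 1 := by simp [hZ]
  have hZR : ∀ k, ‖Z k‖ ≤ R' := by
    intro k
    refine Fin.succAboveCases i ?_ (fun j => ?_) k
    · rw [hZi]; simp [R']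
    · simp only [hZ, Fin.insertNth_apply_succAbove]
      exact (hz j).trans (le_max_left _ _)
  let w : Fin n → ℂ := fun k => Z k.succ / Z 0
  let N : ℝ := ∑ k, ‖Z k‖ ^ 2
  have hN1 : 1 ≤ N := by
    have := Finset.single_le_sum (f := fun k => ‖Z k‖ ^ 2) (fun k _ => by positivity) (Finset.mem_univ i)
    simpa [hZi] using this
  have hNT : N ≤ T := by
    have : N ≤ ∑ k : Fin (n + 1), R' ^ 2 := by
      refine Finset.sum_le_sum fun k _ => ?_
      have := hZR k
      gcongr
    simpa [T] using this
  have hZ0 : 0 < ‖Z 0‖ := norm_pos_iff.2 h0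
  have hw : 1 + ∑ k, ‖w k‖ ^ 2 = N / ‖Z 0‖ ^ 2 := by
    simp only [w, N, norm_div, div_pow, Fin.sum_univ_succ, ← Finset.sum_div]
    field_simp
  have hfj : ∀ j, ‖eval w (F j)‖ ^ 2 / (1 + ∑ k, ‖w k‖ ^ 2) ^ (d j) ≤ ‖eval Z (hmg (d j) (F j))‖ ^ 2 := by
    intro j
    have e1 : eval Z (hmg (d j) (F j)) = Z 0 ^ (d j) * eval w (F j) := by
      conv_rhs => rw [← deh_hmg (d j) (F j), eval_deh]
      rw [← eval_scale (hmg_hom (d j) (F j) (hd j))]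
      congr 2
      ext k
      refine Fin.cases ?_ (fun k => ?_) k
      · simp
      · simp only [Fin.insertNth_zero', Fin.cons_succ, w]
        field_simp
    rw [e1, hw, norm_mul, norm_pow, div_pow, mul_pow, div_div_eq_mul_div, ← pow_mul, ← pow_mul, mul_comm (d j) 2, mul_comm (‖Z 0‖ ^ _)]
    exact div_le_self (by positivity) (one_le_pow₀ hN1)
  have h1 := h w
  set A : ℝ := ∑ j, ‖eval Z (hmg (d j) (F j))‖ with hA
  have hA0 : 0 ≤ A := Finset.sum_nonneg fun j _ => norm_nonneg _
  have h2 : ∑ j, ‖eval w (F j)‖ ^ 2 / (1 + ∑ k, ‖w k‖ ^ 2) ^ (d j) ≤ A ^ 2 := by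
    refine (Finset.sum_le_sum fun j _ => hfj j).trans ?_
    have : A ^ 2 = ∑ j, ‖eval Z (hmg (d j) (F j))‖ * A := by rw [← Finset.sum_mul, sq]
    rw [this]
    refine Finset.sum_le_sum fun j _ => ?_
    rw [sq]
    have := Finset.single_le_sum (f := fun j => ‖eval Z (hmg (d j) (F j))‖) (fun k _ => norm_nonneg _) (Finset.mem_univ j)
    exact mul_le_mul_of_nonneg_left this (norm_nonneg _)
  rw [hw] at h1 h2
  have hN0 : 0 ≤ N := by linarith
  have h3 : c ≤ (N / ‖Z 0‖ ^ 2) ^ M * A ^ 2 := h1.trans (mul_le_mul_of_nonneg_left h2 (by positivity))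
  have h4 : c * (‖Z 0‖ ^ M) ^ 2 ≤ T ^ M * A ^ 2 := by
    have h5 : c * (‖Z 0‖ ^ M) ^ 2 ≤ N ^ M * A ^ 2 := by
      have h6 := mul_le_mul_of_nonneg_right h3 (by positivity : 0 ≤ (‖Z 0‖ ^ M) ^ 2)
      refine h6.trans (le_of_eq ?_)
      rw [div_pow]
      have : (‖Z 0‖ ^ 2) ^ M = (‖Z 0‖ ^ M) ^ 2 := by rw [← pow_mul, ← pow_mul, mul_comm]
      rw [this]
      field_simp
    refine h5.trans ?_
    gcongr
  rw [norm_pow]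
  refine (pow_le_pow_iff_left₀ (by positivity) (by positivity) two_ne_zero).1 ?_
  rw [mul_pow, Real.sq_sqrt (by positivity), div_mul_eq_mul_div, le_div_iff₀ hc]
  linarith

theorem shift_bd (z a : Fin n → ℂ) : 1 + ∑ k, ‖z k + a k‖ ^ 2 ≤ 2 * (1 + ∑ k, ‖a k‖ ^ 2) * (1 + ∑ k, ‖z k‖ ^ 2) := by
  have h1 : ∑ k, ‖z k + a k‖ ^ 2 ≤ ∑ k, (2 * ‖z k‖ ^ 2 + 2 * ‖a k‖ ^ 2) := by
    refine Finset.sum_le_sum fun k _ => ?_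
    have h2 := norm_add_le (z k) (a k)
    have h3 : ‖z k + a k‖ ^ 2 ≤ (‖z k‖ + ‖a k‖) ^ 2 := by gcongr
    nlinarith [sq_nonneg (‖z k‖ - ‖a k‖)]
  rw [Finset.sum_add_distrib, ← Finset.mul_sum, ← Finset.mul_sum] at h1
  have h4 : 0 ≤ ∑ k, ‖z k‖ ^ 2 := Finset.sum_nonneg fun k _ => by positivity
  have h5 : 0 ≤ ∑ k, ‖a k‖ ^ 2 := Finset.sum_nonneg fun k _ => by positivity
  nlinarith [mul_nonneg h4 h5]

noncomputable def tr (a : Fin n → ℂ) : MvPolynomial (Fin n) ℂ →ₐ[ℂ] MvPolynomial (Fin n) ℂ :=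
  aeval (fun k => X k + C (a k))

theorem eval_tr (a z : Fin n → ℂ) (p) : eval z (tr a p) = eval (fun k => z k + a k) p := by
  have : ((aeval z : MvPolynomial (Fin n) ℂ →ₐ[ℂ] ℂ).comp (tr a)) =
      (aeval (fun k => z k + a k) : MvPolynomial (Fin n) ℂ →ₐ[ℂ] ℂ) := by
    apply MvPolynomial.algHom_ext
    intro j
    simp [tr]
  have := DFunLike.congr_fun this p
  simpa [aeval_eq_eval] using this

theorem tr_neg (a : Fin n → ℂ) (p) : tr (-a) (tr a p) = p := by
  apply MvPolynomial.funext
  intro z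
  simp [eval_tr]

theorem tr_deg (a : Fin n → ℂ) (p) : (tr a p).totalDegree ≤ p.totalDegree := by
  refine totalDegree_aeval_le_of _ (fun k => ?_) p
  refine (totalDegree_add _ _).trans ?_
  simp

theorem term_bd (x s s' K u : ℝ) (D e : ℕ) (hu : 0 < u) (s0 : 0 < s) (s0' : 0 < s') (hK : 1 ≤ K) (b : s ≤ K * s') (he : e ≤ D) :
    x ^ 2 / s' ^ e ≤ K ^ D / u ^ 2 * (u ^ 2 * x ^ 2 / s ^ e) := by
  have hK0 : 0 < K := by linarith
  have e2 : K ^ D / u ^ 2 * (u ^ 2 * x ^ 2 / s ^ e) = K ^ D * x ^ 2 / s ^ e := by field_simp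
  have e3 : s ^ e ≤ K ^ D * s' ^ e := by
    have f1 : s ^ e ≤ (K * s') ^ e := pow_le_pow_left₀ s0.le b e
    rw [mul_pow] at f1
    exact f1.trans (mul_le_mul_of_nonneg_right (pow_le_pow_right₀ hK he) (by positivity))
  rw [e2, div_le_div_iff₀ (by positivity) (by positivity)]
  have := mul_le_mul_of_nonneg_left e3 (sq_nonneg x)
  linarith

theorem loj_tr (M : ℕ) (F : Fin m → MvPolynomial (Fin n) ℂ) (d : Fin m → ℕ) (h : Loj M F d) (a : Fin n → ℂ) (u : ℂ) (hu : u ≠ 0) :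
    Loj M (fun j => C u * tr a (F j)) d := by
  obtain ⟨c, hc, h⟩ := h
  obtain ⟨K, hKd⟩ : ∃ K : ℝ, K = 2 * (1 + ∑ k, ‖a k‖ ^ 2) := ⟨_, rfl⟩
  have hK : 1 ≤ K := by
    have h5 : 0 ≤ ∑ k, ‖a k‖ ^ 2 := Finset.sum_nonneg fun k _ => by positivity
    rw [hKd]; linarith
  have hK0 : 0 < K := by linarith
  obtain ⟨D, hD⟩ : ∃ D : ℕ, D = ∑ j, d j := ⟨_, rfl⟩
  have hu' : 0 < ‖u‖ := norm_pos_iff.2 hu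
  refine ⟨‖u‖ ^ 2 * c / (K ^ M * K ^ D), by positivity, fun z => ?_⟩
  have h1 := h (fun k => z k + a k)
  set s : ℝ := 1 + ∑ k, ‖z k‖ ^ 2 with hs
  set s' : ℝ := 1 + ∑ k, ‖z k + a k‖ ^ 2 with hs'
  have s0 : 0 < s := by
    have h5 : 0 ≤ ∑ k, ‖z k‖ ^ 2 := Finset.sum_nonneg fun k _ => by positivity
    linarith
  have s0' : 0 < s' := by
    have h5 : 0 ≤ ∑ k, ‖z k + a k‖ ^ 2 := Finset.sum_nonneg fun k _ => by positivity
    linarith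
  have b1 : s' ≤ K * s := by rw [hKd]; exact shift_bd z a
  have b2 : s ≤ K * s' := by
    have := shift_bd (fun k => z k + a k) (-a)
    rw [hKd]
    simpa using this
  have h2 : ∀ j, ‖eval (fun k => z k + a k) (F j)‖ ^ 2 / s' ^ (d j) ≤ K ^ D / ‖u‖ ^ 2 * (‖eval z (C u * tr a (F j))‖ ^ 2 / s ^ (d j)) := by
    intro j
    have e1 : ‖eval z (C u * tr a (F j))‖ ^ 2 = ‖u‖ ^ 2 * ‖eval (fun k => z k + a k) (F j)‖ ^ 2 := by
      rw [map_mul, eval_C, eval_tr, norm_mul, mul_pow]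
    rw [e1]
    refine term_bd _ s s' K _ D (d j) hu' s0 s0' hK b2 ?_
    rw [hD]
    exact Finset.single_le_sum (f := d) (fun _ _ => Nat.zero_le _) (Finset.mem_univ j)
  have h3 := Finset.sum_le_sum fun j (_ : j ∈ Finset.univ) => h2 j
  rw [← Finset.mul_sum] at h3
  set B : ℝ := ∑ j, ‖eval z (C u * tr a (F j))‖ ^ 2 / s ^ (d j) with hB
  have hB0 : 0 ≤ B := Finset.sum_nonneg fun j _ => by positivity
  have h4 : c ≤ (K * s) ^ M * (K ^ D / ‖u‖ ^ 2 * B) := by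
    refine h1.trans ?_
    gcongr
  rw [div_le_iff₀ (by positivity)]
  calc ‖u‖ ^ 2 * c ≤ ‖u‖ ^ 2 * ((K * s) ^ M * (K ^ D / ‖u‖ ^ 2 * B)) := by gcongr
    _ = s ^ M * B * (K ^ M * K ^ D) := by rw [mul_pow]; field_simp

theorem const_case (F : Fin m → MvPolynomial (Fin n) ℂ) (j : Fin m) (h0 : (F j).totalDegree = 0) (h1 : F j ≠ 0) (ρ : ℕ) :
    ∃ Q : Fin m → MvPolynomial (Fin n) ℂ, (∑ j, F j * Q j = 1) ∧ ∀ j, (F j * Q j).totalDegree ≤ ρ := by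
  rw [totalDegree_eq_zero_iff_eq_C] at h0
  set u := coeff 0 (F j)
  have hu : u ≠ 0 := by
    intro h
    rw [h, C_0] at h0
    exact h1 h0
  have hj : F j * C u⁻¹ = 1 := by
    rw [h0, ← C_mul, mul_inv_cancel₀ hu, C_1]
  refine ⟨Pi.single j (C u⁻¹), ?_, fun k => ?_⟩
  · rw [Finset.sum_eq_single j]
    · rw [Pi.single_eq_same, hj]
    · intro k _ hk
      rw [Pi.single_eq_of_ne hk, mul_zero]
    · simp
  · by_cases hk : k = j
    · subst hk
      rw [Pi.single_eq_same, hj]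
      simp
    · rw [Pi.single_eq_of_ne hk, mul_zero]
      simp

theorem conclude (M ρ : ℕ) (F : Fin m → MvPolynomial (Fin n) ℂ) (d : Fin m → ℕ) (hd : ∀ j, (F j).totalDegree ≤ d j)
    (h : (X 0 : MvPolynomial (Fin (n + 1)) ℂ) ^ ρ ∈ Ideal.span (Set.range (fun j => hmg (d j) (F j)))) :
    ∃ Q : Fin m → MvPolynomial (Fin n) ℂ, (∑ j, F j * Q j = 1) ∧ ∀ j, (F j * Q j).totalDegree ≤ ρ := by
  have := dehom ρ (fun j => hmg (d j) (F j)) d (fun j => hmg_hom _ _ (hd j)) h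
  simpa only [deh_hmg] using this

theorem mainthm (M : ℕ) (F : Fin m → MvPolynomial (Fin n) ℂ)
    (d : Fin m → ℕ) (hdeg : ∀ j, (F j).totalDegree = d j)
    (hsorted : ∀ i j : Fin m, i ≤ j → d j ≤ d i) (hL : Loj M F d)
    (hcond : ∀ h : n < m, (∑ j : Fin n, d (Fin.castLE h.le j)) + d ⟨n, h⟩ ≤ n * M + n) :
    ∃ Q : Fin m → MvPolynomial (Fin n) ℂ,
      (∑ j, F j * Q j = 1) ∧ ∀ j, (F j * Q j).totalDegree ≤ min m n * M := by
  by_cases hconst : ∃ j, d j = 0 ∧ F j ≠ 0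
  · obtain ⟨j, hj, hF⟩ := hconst
    exact const_case F j (by rw [hdeg, hj]) hF _
  push Not at hconst
  rcases le_or_gt m n with hmn | hmn
  · rw [min_eq_left hmn]
    exact conclude M _ F d (fun j => (hdeg j).le) (caseA M _ d (fun j => hmg_hom _ _ (hdeg j).le)
      (hest_of M F d (fun j => (hdeg j).le) hL) hmn)
  · rw [min_eq_right hmn.le]
    by_cases hFn : F ⟨n, hmn⟩ = 0
    · have hz : ∀ j : Fin m, n ≤ (j : ℕ) → F j = 0 := by
        intro j hj
        apply hconst
        have h1 := hsorted ⟨n, hmn⟩ j hj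
        rw [← hdeg ⟨n, hmn⟩, hFn, totalDegree_zero] at h1
        omega
      have hL' : Loj M (fun j : Fin n => F (Fin.castLE hmn.le j)) (fun j => d (Fin.castLE hmn.le j)) := by
        obtain ⟨c, hc, h⟩ := hL
        refine ⟨c, hc, fun z => (h z).trans (le_of_eq ?_)⟩
        congr 1
        symm
        refine Finset.sum_of_injOn (Fin.castLE hmn.le) (Fin.castLE_injective hmn.le).injOn (by simp) ?_ (fun _ _ => rfl)
        intro j _ hj
        have : F j = 0 := hz j (by
          by_contra hlt
          push Not at hlt
          exact hj ⟨⟨j, hlt⟩, by simp, rfl⟩)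
        simp [this]
      refine conclude M _ F d (fun j => (hdeg j).le) ?_
      refine Ideal.span_mono ?_ (caseA M _ (fun j : Fin n => d (Fin.castLE hmn.le j)) (fun j => hmg_hom _ _ (hdeg _).le)
        (hest_of M (fun j : Fin n => F (Fin.castLE hmn.le j)) _ (fun j => (hdeg _).le) hL') le_rfl)
      rintro _ ⟨j, rfl⟩
      exact ⟨Fin.castLE hmn.le j, rfl⟩
    · have hn : 1 ≤ n := by
        by_contra hn
        have hn0 : n = 0 := by omega
        subst hn0
        refine hFn (hconst _ ?_)
        rw [← hdeg, totalDegree_eq_zero_iff_eq_C]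
        exact eq_C_of_isEmpty _
      obtain ⟨a, ha⟩ : ∃ a, eval a (F ⟨n, hmn⟩) ≠ 0 := by
        by_contra hcon
        push Not at hcon
        exact hFn (MvPolynomial.funext fun z => by rw [hcon z, map_zero])
      set u := (eval a (F ⟨n, hmn⟩))⁻¹ with hu
      have hu0 : u ≠ 0 := inv_ne_zero ha
      let F' : Fin m → MvPolynomial (Fin n) ℂ := fun j => C u * tr a (F j)
      have hd' : ∀ j, (F' j).totalDegree ≤ d j := by
        intro j
        refine (totalDegree_mul _ _).trans ?_
        rw [totalDegree_C, zero_add]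
        exact (tr_deg _ _).trans (hdeg j).le
      have hB := caseB M (fun j => hmg (d j) (F' j)) d (fun j => hmg_hom _ _ (hd' j))
        (hest_of M F' d hd' (loj_tr M F d hL a u hu0)) hn hmn hsorted (by
          rw [coeff_hom _ _ (hmg_hom _ _ (hd' _)), deh_hmg]
          simp only [F', map_mul, eval_C, eval_tr]
          simp [hu, ha]) (hcond hmn)
      obtain ⟨Q, hQ1, hQ2⟩ := conclude M _ F' d hd' hB
      have hT : ∀ j, F j * (C u * tr (-a) (Q j)) = tr (-a) (F' j * Q j) := by
        intro j
        simp only [F', map_mul, tr_neg]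
        have : tr (-a) (C u) = C u := (tr (-a)).commutes u
        rw [this]
        ring
      refine ⟨fun j => C u * tr (-a) (Q j), ?_, fun j => ?_⟩
      · simp only [hT, ← map_sum, hQ1, map_one]
      · rw [hT]
        exact (tr_deg _ _).trans (hQ2 j)

end FINAL
end Bz

open MvPolynomial

theorem bezout_from_lojasiewicz (n m M : ℕ) (F : Fin m → MvPolynomial (Fin n) ℂ)
    (d : Fin m → ℕ) (hdeg : ∀ j, (F j).totalDegree = d j)
    (hsorted : ∀ i j : Fin m, i ≤ j → d j ≤ d i)
    (c : ℝ) (hc : 0 < c)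
    (hloja : ∀ z : Fin n → ℂ,
      ∑ j, ‖eval z (F j)‖ ^ 2 / (1 + ∑ k, ‖z k‖ ^ 2) ^ (d j) ≥
        c * (1 + ∑ k, ‖z k‖ ^ 2) ^ (-(M : ℝ)))
    (hcond : m ≤ n ∨
      (M * min m n : ℤ) ≥ (∑ j ∈ Finset.univ.filter fun j : Fin m => (j : ℕ) < n + 1, (d j : ℤ)) - n) :
    ∃ Q : Fin m → MvPolynomial (Fin n) ℂ,
      (∑ j, F j * Q j = 1) ∧
      ∀ j, (F j * Q j).totalDegree ≤ min m n * M := by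
  refine Bz.mainthm M F d hdeg hsorted ⟨c, hc, fun z => ?_⟩ ?_
  · have h := hloja z
    have s0 : 0 < 1 + ∑ k, ‖z k‖ ^ 2 := by
      have h5 : 0 ≤ ∑ k, ‖z k‖ ^ 2 := Finset.sum_nonneg fun k _ => by positivity
      linarith
    rw [Real.rpow_neg s0.le, Real.rpow_natCast, ge_iff_le, ← div_eq_mul_inv, div_le_iff₀ (by positivity)] at h
    linarith
  · intro hmn
    rcases hcond with h | h
    · omega
    have e : (∑ j ∈ Finset.univ.filter fun j : Fin m => (j : ℕ) < n + 1, (d j : ℤ)) =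
        (∑ j : Fin n, (d (Fin.castLE hmn.le j) : ℤ)) + (d ⟨n, hmn⟩ : ℤ) := by
      have e1 : (∑ j ∈ Finset.univ.filter fun j : Fin m => (j : ℕ) < n + 1, (d j : ℤ)) =
          ∑ j : Fin (n + 1), (d (Fin.castLE hmn j) : ℤ) := by
        symm
        refine Finset.sum_of_injOn (Fin.castLE hmn) (Fin.castLE_injective hmn).injOn ?_ ?_ (fun _ _ => rfl)
        · intro j _
          have := j.2
          simp only [Finset.coe_filter, Finset.mem_univ, true_and, Set.mem_setOf_eq, Fin.val_castLE]
          omega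
        · intro j hj hj'
          exact absurd ⟨⟨j, (Finset.mem_filter.1 hj).2⟩, by simp, rfl⟩ hj'
      rw [e1, Fin.sum_univ_castSucc]
      rfl
    rw [e] at h
    have hm : min (m : ℤ) (n : ℤ) = n := min_eq_right (by exact_mod_cast hmn.le)
    have h' : ((∑ j : Fin n, d (Fin.castLE hmn.le j)) + d ⟨n, hmn⟩ : ℤ) ≤ ((n * M + n : ℕ) : ℤ) := by
      push_cast at h ⊢
      rw [hm] at h
      linarith
    exact_mod_cast h'
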